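/- arXiv:2210.07868 — 3 statements merged into one kernel-verified Lean document; each statement's English description precedes it below -/
import Mathlib

section
/- (Almost dead ends in H₃(ℝ).) Let L ⊂ ℝ² be a centrally symmetric convex polygon with 0 in its interior. There exist constants C, M, D₀ > 0, depending only on L, such that for every D ≥ D₀ and every real n ≥ C·D⁴, the element g = (0,0,n) ∈ H₃(ℝ) satisfies: for all h = (x,y,z) ∈ H₃(ℝ) with ‖h‖_CC ≤ D, one has ‖g·h‖_CC ≤ ‖g‖_CC − ‖(x,y)‖_L + M. -/
/-!
The isoperimetric problem for the polygonal norm is solved by a centrally symmetric polygon with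
edges parallel to vertices of `L`. Write a velocity as a nonnegative combination of the vertices,
with total weight `l u` in the direction `u`; integration by parts shows that the curve sweeps out
at most half the area `Qf F l` of the zonogon `Σ l u • [0, u]` (`area_le_Qf`). Let `μ` be the maximum
of `Qf F` on the simplex. Cutting a closed curve into two halves of equal length gives
`area ≤ μ (length / 2) ^ 2` (`isoperimetric`), whence `‖(0, 0, n)‖ ≥ 2 √(n / μ)`.

Conversely, the zonogon realizing `μ`, scaled by `s`, has perimeter at most `2 s` and area `μ s ^ 2`.
For a given displacement `v`, its boundary is traversed starting with the first edge `x` whose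
argument, modulo `π`, is at least that of `-v`; the last edge `y` before the half turn then satisfies
`-v = b x - a y` with `a, b ≥ 0`. Shortening the first edge by `b x` and the last one by `a y` turns the
loop into a path ending at `v` whose length is at most `2 s - ‖v‖`, since `‖v‖ ≤ b ‖x‖ + a ‖y‖`, while the
area drops only by a quantity `t = O(‖v‖ ^ 2)` (`reach_cut`, `reach_target`).

If `‖h‖ ≤ D` with `h = (v, z)`, then `‖v‖ = O(D)` and `z = O(D ^ 2)`, so the scale `s` that produces area
`n + z` satisfies `s ^ 2 = n / μ + O(D ^ 2)`. As `√(n / μ) ≥ D ^ 2` when `n ≥ C D ^ 4`, this gives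
`s ≤ √(n / μ) + O(1)`, which is the claim.
-/

open MeasureTheory

/-- An absolutely continuous curve `[0,1] → ℝ²`, encoded by a function together with an
(interval-integrable) derivative whose integral recovers the function on `[0,1]`. -/
structure ACCurve where
  toFun : ℝ → ℝ × ℝ
  deriv : ℝ → ℝ × ℝ
  integrable : IntervalIntegrable deriv volume 0 1
  integral_eq : ∀ t ∈ Set.Icc (0:ℝ) 1,
    toFun t = toFun 0 + ∫ s in (0:ℝ)..t, deriv s

/-- The balayage (signed) area `A(γ) = (1/2)∫₀¹ (γ₁ γ₂' − γ₂ γ₁')`. -/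
noncomputable def ACCurve.area (γ : ACCurve) : ℝ :=
  (1/2) * ∫ t in (0:ℝ)..1,
    ((γ.toFun t).1 * (γ.deriv t).2 - (γ.toFun t).2 * (γ.deriv t).1)

/-- The `L`-length `‖γ‖_L = ∫₀¹ ‖γ'(t)‖_L dt`, where `‖·‖_L` is the gauge of `L`. -/
noncomputable def ACCurve.length (L : Set (ℝ × ℝ)) (γ : ACCurve) : ℝ :=
  ∫ t in (0:ℝ)..1, gauge L (γ.deriv t)

/-- The Carnot–Carathéodory norm of `(x, y, z) ∈ H₃(ℝ)`: the infimum of `L`-lengths of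
absolutely continuous curves from `0` to `(x, y)` with balayage area `z`. -/
noncomputable def ccNorm (L : Set (ℝ × ℝ)) (g : ℝ × ℝ × ℝ) : ℝ :=
  sInf { r | ∃ γ : ACCurve, γ.toFun 0 = 0 ∧ γ.toFun 1 = (g.1, g.2.1) ∧
    γ.area = g.2.2 ∧ γ.length L = r }

/-- The group law of `H₃(ℝ)` on `ℝ³`:
`(x,y,z)·(x',y',z') = (x+x', y+y', z+z'+(xy'−yx')/2)`. -/
noncomputable def heisMul (g h : ℝ × ℝ × ℝ) : ℝ × ℝ × ℝ :=
  (g.1 + h.1, g.2.1 + h.2.1, g.2.2 + h.2.2 + (g.1 * h.2.1 - g.2.1 * h.1) / 2)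

/-! ### Area of curves and the isoperimetric inequality -/

/-- The determinant (signed area form) of two plane vectors. -/
def cr (p q : ℝ × ℝ) : ℝ := p.1 * q.2 - p.2 * q.1

/-- `cr p` as a continuous linear form. -/
noncomputable def crL (p : ℝ × ℝ) : ℝ × ℝ →L[ℝ] ℝ :=
  p.1 • ContinuousLinearMap.snd ℝ ℝ ℝ - p.2 • ContinuousLinearMap.fst ℝ ℝ ℝ

lemma crL_apply (p q : ℝ × ℝ) : crL p q = cr p q := by simp [crL, cr]

lemma abs_cr_le (p q : ℝ × ℝ) : |cr p q| ≤ 2 * ‖p‖ * ‖q‖ := by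
  have h1 := norm_fst_le p
  have h2 := norm_snd_le p
  have h3 := norm_fst_le q
  have h4 := norm_snd_le q
  simp only [Real.norm_eq_abs] at h1 h2 h3 h4
  have h5 : |p.1 * q.2| ≤ ‖p‖ * ‖q‖ := by
    rw [abs_mul]; exact mul_le_mul h1 h4 (abs_nonneg _) (norm_nonneg _)
  have h6 : |p.2 * q.1| ≤ ‖p‖ * ‖q‖ := by
    rw [abs_mul]; exact mul_le_mul h2 h3 (abs_nonneg _) (norm_nonneg _)
  unfold cr
  have := abs_sub (p.1 * q.2) (p.2 * q.1)
  linarith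

lemma ii_fst {f : ℝ → ℝ × ℝ} {a b : ℝ} (hf : IntervalIntegrable f volume a b) :
    IntervalIntegrable (fun t => (f t).1) volume a b := ⟨hf.1.fst, hf.2.fst⟩

lemma ii_snd {f : ℝ → ℝ × ℝ} {a b : ℝ} (hf : IntervalIntegrable f volume a b) :
    IntervalIntegrable (fun t => (f t).2) volume a b := ⟨hf.1.snd, hf.2.snd⟩

lemma ii_cr {F f : ℝ → ℝ × ℝ} {a b : ℝ} (hF : ContinuousOn F (Set.uIcc a b))
    (hf : IntervalIntegrable f volume a b) :
    IntervalIntegrable (fun t => cr (F t) (f t)) volume a b := by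
  unfold cr
  exact ((ii_snd hf).continuousOn_mul (continuous_fst.comp_continuousOn hF)).sub
    ((ii_fst hf).continuousOn_mul (continuous_snd.comp_continuousOn hF))

lemma cont_prim {E : Type*} [NormedAddCommGroup E] [NormedSpace ℝ E] {f : ℝ → E} {a b : ℝ}
    (hf : IntervalIntegrable f volume a b) :
    ContinuousOn (fun t => ∫ s in a..t, f s) (Set.uIcc a b) :=
  intervalIntegral.continuousOn_primitive_interval' hf Set.left_mem_uIcc

lemma ii_sum {ι : Type*} (F : Finset ι) {f : ι → ℝ → ℝ} {a b : ℝ}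
    (h : ∀ i ∈ F, IntervalIntegrable (f i) volume a b) :
    IntervalIntegrable (fun t => ∑ i ∈ F, f i t) volume a b := by
  simpa only [Finset.sum_fn] using IntervalIntegrable.sum F h

lemma ii_smul_const {c : ℝ → ℝ} {a b : ℝ} (hc : IntervalIntegrable c volume a b) (u : ℝ × ℝ) :
    IntervalIntegrable (fun t => c t • u) volume a b :=
  ⟨hc.1.smul_const u, hc.2.smul_const u⟩

/-- Integration by parts for primitives of integrable functions. -/
lemma prod_parts {c d : ℝ → ℝ} {a b : ℝ} (hc : IntervalIntegrable c volume a b)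
    (hd : IntervalIntegrable d volume a b) :
    (∫ t in a..b, (∫ s in a..t, c s) * d t) + (∫ t in a..b, (∫ s in a..t, d s) * c t)
      = (∫ t in a..b, c t) * ∫ t in a..b, d t := by
  have h := (hc.absolutelyContinuousOnInterval_intervalIntegral
    Set.left_mem_uIcc).integral_deriv_mul_eq_sub
    (hd.absolutelyContinuousOnInterval_intervalIntegral Set.left_mem_uIcc)
  simp only [intervalIntegral.integral_same, mul_zero, sub_zero] at h
  rw [← h, ← intervalIntegral.integral_add (hd.continuousOn_mul (cont_prim hc))
    (hc.continuousOn_mul (cont_prim hd))]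
  apply intervalIntegral.integral_congr_ae
  filter_upwards [hc.ae_hasDerivAt_integral, hd.ae_hasDerivAt_integral] with t h1 h2 ht
  have ht' := Set.uIoc_subset_uIcc ht
  rw [(h1 ht' a Set.left_mem_uIcc).deriv, (h2 ht' a Set.left_mem_uIcc).deriv]
  ring

lemma cr_sum_sum (F : Finset (ℝ × ℝ)) (c d : ℝ × ℝ → ℝ) :
    cr (∑ u ∈ F, c u • u) (∑ u ∈ F, d u • u) = ∑ u ∈ F, ∑ v ∈ F, cr u v * (c u * d v) := by
  simp only [cr, Prod.fst_sum, Prod.snd_sum, Prod.smul_fst, Prod.smul_snd, smul_eq_mul,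
    Finset.sum_mul_sum, ← Finset.sum_sub_distrib]
  refine Finset.sum_congr rfl fun u _ => Finset.sum_congr rfl fun v _ => ?_
  ring

/-- The area of the zonogon `Σ u ∈ F, l u • [0, u]`; its maximum over the simplex `Σ l u = 1`
governs the isoperimetric problem. -/
noncomputable def Qf (F : Finset (ℝ × ℝ)) (l : ℝ × ℝ → ℝ) : ℝ :=
  (1 / 2) * ∑ u ∈ F, ∑ v ∈ F, |cr u v| * (l u * l v)

/-- A curve whose velocity is a nonnegative combination of the directions in `F`, with total
weight `l u` on the direction `u`, sweeps out (in absolute value) at most half the area of the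
zonogon `Σ l u • [0, u]`: integration by parts leaves only the products `l u * l v`. -/
lemma area_le_Qf (F : Finset (ℝ × ℝ)) (c : ℝ × ℝ → ℝ → ℝ) {a b : ℝ} (hab : a ≤ b)
    (h0 : ∀ u t, 0 ≤ c u t) (hc : ∀ u, IntervalIntegrable (c u) volume a b) :
    |∫ t in a..b, cr (∫ s in a..t, ∑ u ∈ F, c u s • u) (∑ u ∈ F, c u t • u)|
      ≤ Qf F fun u => ∫ t in a..b, c u t := by
  set I : ℝ × ℝ → ℝ × ℝ → ℝ := fun u v => ∫ t in a..b, (∫ s in a..t, c u s) * c v t with hI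
  have hI0 : ∀ u v, 0 ≤ I u v := fun u v => by
    apply intervalIntegral.integral_nonneg hab
    intro t ht
    exact mul_nonneg (intervalIntegral.integral_nonneg ht.1 fun s _ => h0 u s) (h0 v t)
  have hII : ∀ u v, I u v + I v u = (∫ t in a..b, c u t) * ∫ t in a..b, c v t :=
    fun u v => prod_parts (hc u) (hc v)
  have key : (∫ t in a..b, cr (∫ s in a..t, ∑ u ∈ F, c u s • u) (∑ u ∈ F, c u t • u))
      = ∑ u ∈ F, ∑ v ∈ F, cr u v * I u v := by
    have e1 : (∫ t in a..b, cr (∫ s in a..t, ∑ u ∈ F, c u s • u) (∑ u ∈ F, c u t • u))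
        = ∫ t in a..b, ∑ u ∈ F, ∑ v ∈ F, cr u v * ((∫ s in a..t, c u s) * c v t) := by
      apply intervalIntegral.integral_congr
      intro t ht
      have hsub : Set.uIcc a t ⊆ Set.uIcc a b := Set.uIcc_subset_uIcc_left ht
      have : (∫ s in a..t, ∑ u ∈ F, c u s • u) = ∑ u ∈ F, (∫ s in a..t, c u s) • u := by
        rw [intervalIntegral.integral_finsetSum]
        · exact Finset.sum_congr rfl fun u _ => intervalIntegral.integral_smul_const _ _
        · exact fun u _ => ii_smul_const ((hc u).mono_set hsub) u
      simp only [this]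
      exact cr_sum_sum _ _ _
    have hprod : ∀ u v, IntervalIntegrable
        (fun t => cr u v * ((∫ s in a..t, c u s) * c v t)) volume a b := fun u v =>
      ((hc v).continuousOn_mul (cont_prim (hc u))).const_mul _
    rw [e1, intervalIntegral.integral_finsetSum fun u _ =>
      ii_sum F fun v _ => hprod u v]
    refine Finset.sum_congr rfl fun u _ => ?_
    rw [intervalIntegral.integral_finsetSum fun v _ => hprod u v]
    exact Finset.sum_congr rfl fun v _ => intervalIntegral.integral_const_mul _ _
  rw [key]
  have e2 : ∑ u ∈ F, ∑ v ∈ F, |cr u v| * I u v = ∑ u ∈ F, ∑ v ∈ F, |cr u v| * I v u := by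
    rw [Finset.sum_comm]
    refine Finset.sum_congr rfl fun u _ => Finset.sum_congr rfl fun v _ => ?_
    rw [show cr v u = - cr u v by unfold cr; ring, abs_neg]
  have e3 : Qf F (fun u => ∫ t in a..b, c u t) = ∑ u ∈ F, ∑ v ∈ F, |cr u v| * I u v := by
    unfold Qf
    simp only [← hII, mul_add, Finset.sum_add_distrib]
    rw [← e2]; ring
  rw [e3]
  refine (Finset.abs_sum_le_sum_abs _ _).trans (Finset.sum_le_sum fun u _ => ?_)
  refine (Finset.abs_sum_le_sum_abs _ _).trans (Finset.sum_le_sum fun v _ => ?_)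
  rw [abs_mul, abs_of_nonneg (hI0 u v)]

/-- The hypothesis `hsel` says that every velocity `x` is a nonnegative combination of `F` of total
weight at most `g x`. For step velocities such a choice is automatically measurable. -/
lemma area_le_simple (F : Finset (ℝ × ℝ)) (g : ℝ × ℝ → ℝ) (μ : ℝ)
    (hsel : ∀ x, ∃ c : ℝ × ℝ → ℝ, (∀ u, 0 ≤ c u) ∧ ∑ u ∈ F, c u ≤ g x ∧ ∑ u ∈ F, c u • u = x)
    (hμ : ∀ l : ℝ × ℝ → ℝ, (∀ u, 0 ≤ l u) → Qf F l ≤ μ * (∑ u ∈ F, l u) ^ 2) (hμ0 : 0 ≤ μ)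
    (f : SimpleFunc ℝ (ℝ × ℝ)) {a b : ℝ} (hab : a ≤ b) :
    |∫ t in a..b, cr (∫ s in a..t, f s) (f t)| ≤ μ * (∫ t in a..b, g (f t)) ^ 2 := by
  choose σ hσ0 hσ1 hσ2 using hsel
  have hi : ∀ k : ℝ × ℝ → ℝ, IntervalIntegrable (fun t => k (f t)) volume a b := fun k => by
    rw [intervalIntegrable_iff_integrableOn_Ioc_of_le hab]
    exact (f.map k).integrable_of_isFiniteMeasure
  have h := area_le_Qf F (fun u t => σ (f t) u) hab (fun u t => hσ0 _ _) (fun u => hi fun x => σ x u)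
  simp only [hσ2] at h
  refine h.trans ((hμ _ fun u => intervalIntegral.integral_nonneg hab fun t _ => hσ0 _ _).trans ?_)
  apply mul_le_mul_of_nonneg_left _ hμ0
  apply pow_le_pow_left₀
  · exact Finset.sum_nonneg fun u _ => intervalIntegral.integral_nonneg hab fun t _ => hσ0 _ _
  · rw [← intervalIntegral.integral_finsetSum fun u _ => hi fun x => σ x u]
    exact intervalIntegral.integral_mono_on hab (ii_sum F fun u _ => hi fun x => σ x u) (hi g)
      fun t _ => hσ1 _

lemma cr_sub_left (p p' q : ℝ × ℝ) : cr (p - p') q = cr p q - cr p' q := by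
  simp [cr]; ring
lemma cr_sub_right (p q q' : ℝ × ℝ) : cr p (q - q') = cr p q - cr p q' := by
  simp [cr]; ring
lemma cr_add_left (p p' q : ℝ × ℝ) : cr (p + p') q = cr p q + cr p' q := by
  simp [cr]; ring

lemma int_cr_const {f : ℝ → ℝ × ℝ} {a b : ℝ} (p : ℝ × ℝ)
    (hf : IntervalIntegrable f volume a b) :
    ∫ t in a..b, cr p (f t) = cr p (∫ t in a..b, f t) := by
  simp only [← crL_apply]
  exact (crL p).intervalIntegral_comp_comm hf

lemma int_cr_bound {F f : ℝ → ℝ × ℝ} {a b B : ℝ} (hab : a ≤ b)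
    (hF : ContinuousOn F (Set.uIcc a b))
    (hf : IntervalIntegrable f volume a b) (hB : ∀ t ∈ Set.Icc a b, ‖F t‖ ≤ B) :
    |∫ t in a..b, cr (F t) (f t)| ≤ 2 * B * ∫ t in a..b, ‖f t‖ := by
  rw [← intervalIntegral.integral_const_mul, ← Real.norm_eq_abs]
  refine (intervalIntegral.norm_integral_le_integral_norm hab).trans ?_
  apply intervalIntegral.integral_mono_on hab (ii_cr hF hf).norm (hf.norm.const_mul _)
  intro t ht
  refine (abs_cr_le _ _).trans ?_
  gcongr
  exact hB t ht

lemma prim_bound {f : ℝ → ℝ × ℝ} {a b : ℝ}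
    (hf : IntervalIntegrable f volume a b) {t : ℝ} (ht : t ∈ Set.Icc a b) :
    ‖∫ s in a..t, f s‖ ≤ ∫ s in a..b, ‖f s‖ := by
  refine (intervalIntegral.norm_integral_le_integral_norm ht.1).trans ?_
  exact intervalIntegral.integral_mono_interval le_rfl ht.1 ht.2
    (Filter.Eventually.of_forall fun _ => norm_nonneg _) hf.norm

/-- `L¹`-continuity of the swept area. -/
lemma area_sub_le {f g : ℝ → ℝ × ℝ} {a b : ℝ} (hab : a ≤ b)
    (hf : IntervalIntegrable f volume a b) (hg : IntervalIntegrable g volume a b) :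
    |(∫ t in a..b, cr (∫ s in a..t, f s) (f t)) - ∫ t in a..b, cr (∫ s in a..t, g s) (g t)|
      ≤ 2 * (∫ t in a..b, ‖f t - g t‖) * ((∫ t in a..b, ‖f t‖) + ∫ t in a..b, ‖g t‖) := by
  have hfg := hf.sub hg
  have e : (∫ t in a..b, cr (∫ s in a..t, f s) (f t)) - (∫ t in a..b, cr (∫ s in a..t, g s) (g t))
      = (∫ t in a..b, cr (∫ s in a..t, (f s - g s)) (f t))
        + ∫ t in a..b, cr (∫ s in a..t, g s) (f t - g t) := by
    rw [← intervalIntegral.integral_sub (ii_cr (cont_prim hf) hf) (ii_cr (cont_prim hg) hg),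
      ← intervalIntegral.integral_add (ii_cr (cont_prim hfg) hf) (ii_cr (cont_prim hg) hfg)]
    apply intervalIntegral.integral_congr
    intro t ht
    have hsub : Set.uIcc a t ⊆ Set.uIcc a b := Set.uIcc_subset_uIcc_left ht
    simp only
    rw [intervalIntegral.integral_sub (hf.mono_set hsub) (hg.mono_set hsub), cr_sub_left,
      cr_sub_right]
    ring
  rw [e]
  have b1 := int_cr_bound hab (cont_prim hfg) hf fun t ht => prim_bound hfg ht
  have b2 := int_cr_bound hab (cont_prim hg) hfg fun t ht => prim_bound hg ht
  refine (abs_add_le _ _).trans ?_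
  nlinarith [b1, b2]

/-- Area bound for open curves: twice the swept area is at most `μ` times the squared length. It
passes from step velocities to integrable ones by density in `L¹`. -/
lemma area_le (F : Finset (ℝ × ℝ)) (g : ℝ × ℝ → ℝ) (K : NNReal) (hg : LipschitzWith K g) (μ : ℝ)
    (hgi : ∀ (f : ℝ → ℝ × ℝ) (a b : ℝ), IntervalIntegrable f volume a b →
      IntervalIntegrable (fun t => g (f t)) volume a b)
    (hsel : ∀ x, ∃ c : ℝ × ℝ → ℝ, (∀ u, 0 ≤ c u) ∧ ∑ u ∈ F, c u ≤ g x ∧ ∑ u ∈ F, c u • u = x)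
    (hμ : ∀ l : ℝ × ℝ → ℝ, (∀ u, 0 ≤ l u) → Qf F l ≤ μ * (∑ u ∈ F, l u) ^ 2) (hμ0 : 0 ≤ μ)
    (f : ℝ → ℝ × ℝ) {a b : ℝ} (hab : a ≤ b) (hf : IntervalIntegrable f volume a b) :
    |∫ t in a..b, cr (∫ s in a..t, f s) (f t)| ≤ μ * (∫ t in a..b, g (f t)) ^ 2 := by
  set A := ∫ t in a..b, ‖f t‖
  set G := ∫ t in a..b, g (f t)
  -- approximation of `f` in `L¹` by a simple function
  have key : ∀ ε > 0, |∫ t in a..b, cr (∫ s in a..t, f s) (f t)|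
      ≤ μ * (G + K * ε) ^ 2 + 2 * ε * (A + (A + ε)) := by
    intro ε hε
    have hf' := (intervalIntegrable_iff_integrableOn_Ioc_of_le hab).1 hf
    obtain ⟨φ, h1, h2⟩ := (memLp_one_iff_integrable.2 hf').exists_simpleFunc_eLpNorm_sub_lt
      ENNReal.one_ne_top (ε := ENNReal.ofReal ε) (by simpa using hε)
    have hφ' := memLp_one_iff_integrable.1 h2
    have hφ : IntervalIntegrable φ volume a b :=
      (intervalIntegrable_iff_integrableOn_Ioc_of_le hab).2 hφ'
    have hd : (∫ t in a..b, ‖f t - φ t‖) < ε := by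
      rw [eLpNorm_one_eq_lintegral_enorm, ← ofReal_integral_norm_eq_lintegral_enorm
        (hf'.sub hφ')] at h1
      rw [intervalIntegral.integral_of_le hab]
      exact (ENNReal.ofReal_lt_ofReal_iff hε).1 h1
    have hd0 : 0 ≤ ∫ t in a..b, ‖f t - φ t‖ :=
      intervalIntegral.integral_nonneg hab fun _ _ => norm_nonneg _
    have hfφ := (hf.sub hφ).norm
    have hn : (∫ t in a..b, ‖φ t‖) ≤ A + ∫ t in a..b, ‖f t - φ t‖ := by
      rw [← intervalIntegral.integral_add hf.norm hfφ]
      apply intervalIntegral.integral_mono_on hab hφ.norm (hf.norm.add hfφ)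
      intro t _
      have := norm_sub_norm_le (φ t) (f t)
      rw [norm_sub_rev] at this
      linarith
    have hG : (∫ t in a..b, g (φ t)) ≤ G + K * ∫ t in a..b, ‖f t - φ t‖ := by
      rw [← intervalIntegral.integral_const_mul,
        ← intervalIntegral.integral_add (hgi _ _ _ hf) (hfφ.const_mul _)]
      apply intervalIntegral.integral_mono_on hab (hgi _ _ _ hφ)
        ((hgi _ _ _ hf).add (hfφ.const_mul _))
      intro t _
      have := hg.norm_sub_le (φ t) (f t)
      rw [norm_sub_rev (φ t), Real.norm_eq_abs] at this
      have := le_abs_self (g (φ t) - g (f t))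
      linarith
    have hs := area_le_simple F g μ hsel hμ hμ0 φ hab
    have hsub := area_sub_le hab hf hφ
    have hA : 0 ≤ A := intervalIntegral.integral_nonneg hab fun _ _ => norm_nonneg _
    have hg0 : ∀ x, 0 ≤ g x := fun x => by
      obtain ⟨c, h1, h2, -⟩ := hsel x
      exact (Finset.sum_nonneg fun u _ => h1 u).trans h2
    have hGφ0 : 0 ≤ ∫ t in a..b, g (φ t) :=
      intervalIntegral.integral_nonneg hab fun _ _ => hg0 _
    have hKε : (∫ t in a..b, g (φ t)) ≤ G + K * ε :=
      hG.trans (by gcongr)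
    have h3 : μ * (∫ t in a..b, g (φ t)) ^ 2 ≤ μ * (G + K * ε) ^ 2 := by gcongr
    have h4 : 2 * (∫ t in a..b, ‖f t - φ t‖) * (A + ∫ t in a..b, ‖φ t‖)
        ≤ 2 * ε * (A + (A + ε)) := by
      have : 0 ≤ ∫ t in a..b, ‖φ t‖ :=
        intervalIntegral.integral_nonneg hab fun _ _ => norm_nonneg _
      gcongr
      linarith
    have h5 := abs_sub_abs_le_abs_sub (∫ t in a..b, cr (∫ s in a..t, f s) (f t))
      (∫ t in a..b, cr (∫ s in a..t, φ s) (φ t))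
    linarith
  have hlim : Filter.Tendsto (fun ε : ℝ => μ * (G + K * ε) ^ 2 + 2 * ε * (A + (A + ε)))
      (nhdsWithin 0 (Set.Ioi 0)) (nhds (μ * G ^ 2)) := by
    have : Continuous fun ε : ℝ => μ * (G + K * ε) ^ 2 + 2 * ε * (A + (A + ε)) := by fun_prop
    have h := this.tendsto 0
    simp only [mul_zero, add_zero, zero_mul] at h
    exact h.mono_left nhdsWithin_le_nhds
  exact ge_of_tendsto hlim (by filter_upwards [self_mem_nhdsWithin] with ε hε using key ε hε)

/-- Isoperimetric inequality: a closed curve of length `ℓ` sweeps out area at most `μ (ℓ / 2) ^ 2`,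
as seen by cutting it into two halves of equal length and applying `area_le` to each. -/
lemma isoperimetric (F : Finset (ℝ × ℝ)) (g : ℝ × ℝ → ℝ) (K : NNReal) (hg : LipschitzWith K g)
    (μ : ℝ) (hgi : ∀ (f : ℝ → ℝ × ℝ) (a b : ℝ), IntervalIntegrable f volume a b →
      IntervalIntegrable (fun t => g (f t)) volume a b)
    (hsel : ∀ x, ∃ c : ℝ × ℝ → ℝ, (∀ u, 0 ≤ c u) ∧ ∑ u ∈ F, c u ≤ g x ∧ ∑ u ∈ F, c u • u = x)
    (hμ : ∀ l : ℝ × ℝ → ℝ, (∀ u, 0 ≤ l u) → Qf F l ≤ μ * (∑ u ∈ F, l u) ^ 2) (hμ0 : 0 ≤ μ)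
    (f : ℝ → ℝ × ℝ) (hf : IntervalIntegrable f volume 0 1) (hcl : ∫ t in (0:ℝ)..1, f t = 0) :
    (∫ t in (0:ℝ)..1, cr (∫ s in (0:ℝ)..t, f s) (f t))
      ≤ 2 * μ * ((∫ t in (0:ℝ)..1, g (f t)) / 2) ^ 2 := by
  set ℓ := ∫ t in (0:ℝ)..1, g (f t) with hℓ
  have hg0 : ∀ x, 0 ≤ g x := fun x => by
    obtain ⟨c, h1, h2, -⟩ := hsel x
    exact (Finset.sum_nonneg fun u _ => h1 u).trans h2
  have hℓ0 : 0 ≤ ℓ := intervalIntegral.integral_nonneg zero_le_one fun _ _ => hg0 _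
  have hgf := hgi f 0 1 hf
  obtain ⟨τ, hτ, hτe⟩ : ∃ τ ∈ Set.Icc (0:ℝ) 1, ∫ t in (0:ℝ)..τ, g (f t) = ℓ / 2 := by
    have hc := cont_prim hgf
    rw [Set.uIcc_of_le zero_le_one] at hc
    have := intermediate_value_Icc zero_le_one hc
    have hm : ℓ / 2 ∈ Set.Icc (∫ s in (0:ℝ)..0, g (f s)) (∫ s in (0:ℝ)..1, g (f s)) := by
      rw [intervalIntegral.integral_same]
      exact ⟨by linarith, by rw [← hℓ]; linarith⟩
    obtain ⟨τ, h1, h2⟩ := this hm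
    exact ⟨τ, h1, h2⟩
  have s1 : Set.uIcc 0 τ ⊆ Set.uIcc (0:ℝ) 1 := by
    rw [Set.uIcc_of_le hτ.1, Set.uIcc_of_le zero_le_one]; exact Set.Icc_subset_Icc_right hτ.2
  have s2 : Set.uIcc τ 1 ⊆ Set.uIcc (0:ℝ) 1 := by
    rw [Set.uIcc_of_le hτ.2, Set.uIcc_of_le zero_le_one]; exact Set.Icc_subset_Icc_left hτ.1
  have hf1 := hf.mono_set s1
  have hf2 := hf.mono_set s2
  have hcr := ii_cr (cont_prim hf) hf
  have hg2 : ∫ t in τ..1, g (f t) = ℓ / 2 := by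
    have := intervalIntegral.integral_add_adjacent_intervals (hgf.mono_set s1) (hgf.mono_set s2)
    rw [hτe, ← hℓ] at this; linarith
  have hp := intervalIntegral.integral_add_adjacent_intervals hf1 hf2
  have e2 : (∫ t in τ..1, cr (∫ s in (0:ℝ)..t, f s) (f t))
      = ∫ t in τ..1, cr (∫ s in τ..t, f s) (f t) := by
    have : (∫ t in τ..1, cr (∫ s in (0:ℝ)..t, f s) (f t))
      = ∫ t in τ..1, (cr (∫ s in (0:ℝ)..τ, f s) (f t) + cr (∫ s in τ..t, f s) (f t)) := by
      apply intervalIntegral.integral_congr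
      intro t ht
      simp only
      rw [← cr_add_left, intervalIntegral.integral_add_adjacent_intervals hf1
        (hf2.mono_set (Set.uIcc_subset_uIcc_left ht))]
    rw [this, intervalIntegral.integral_add (ii_cr continuousOn_const hf2)
      (ii_cr (cont_prim hf2) hf2), int_cr_const _ hf2]
    have : (∫ t in τ..1, f t) = - ∫ s in (0:ℝ)..τ, f s := by
      rw [hcl] at hp; exact (neg_eq_of_add_eq_zero_right hp).symm
    rw [this]
    simp [cr]; ring
  rw [← intervalIntegral.integral_add_adjacent_intervals (hcr.mono_set s1) (hcr.mono_set s2), e2]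
  have a1 := (le_abs_self _).trans (area_le F g K hg μ hgi hsel hμ hμ0 f hτ.1 hf1)
  have a2 := (le_abs_self _).trans (area_le F g K hg μ hgi hsel hμ hμ0 f hτ.2 hf2)
  rw [hτe] at a1
  rw [hg2] at a2
  linarith

/-! ### Concatenation of curves and polygonal paths -/

/-- `Reach g v z r`: some integrable velocity on `[0,1]` yields a curve from `0` to `v` sweeping
out area `z`, of `g`-length at most `r`. -/
def Reach (g : ℝ × ℝ → ℝ) (v : ℝ × ℝ) (z r : ℝ) : Prop :=
  ∃ f : ℝ → ℝ × ℝ, IntervalIntegrable f volume 0 1 ∧ (∫ t in (0:ℝ)..1, f t) = v ∧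
    (∫ t in (0:ℝ)..1, cr (∫ s in (0:ℝ)..t, f s) (f t)) = 2 * z ∧
    (∫ t in (0:ℝ)..1, g (f t)) ≤ r

lemma Reach.mono {g : ℝ × ℝ → ℝ} {v : ℝ × ℝ} {z r r' : ℝ} (h : Reach g v z r) (hr : r ≤ r') :
    Reach g v z r' := by
  obtain ⟨f, h1, h2, h3, h4⟩ := h
  exact ⟨f, h1, h2, h3, h4.trans hr⟩

lemma reach_seg (g : ℝ × ℝ → ℝ) (v : ℝ × ℝ) : Reach g v 0 (g v) := by
  refine ⟨fun _ => v, by simp, by simp, ?_, by simp⟩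
  have : ∀ t : ℝ, cr (t • v) v = 0 := fun t => by simp [cr]; ring
  simp [this]

section concat

variable {E : Type*} [NormedAddCommGroup E] [NormedSpace ℝ E]

/-- Concatenation of two velocities, each run at double speed. -/
noncomputable def cat (f₁ f₂ : ℝ → E) (t : ℝ) : E :=
  if t ≤ 1 / 2 then (2:ℝ) • f₁ (2 * t) else (2:ℝ) • f₂ (2 * t - 1)

lemma sub_left (f : ℝ → E) (t : ℝ) :
    (∫ s in (0:ℝ)..t, (2:ℝ) • f (2 * s)) = ∫ s in (0:ℝ)..(2 * t), f s := by
  rw [intervalIntegral.integral_smul]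
  simp

lemma sub_right (f : ℝ → E) (t : ℝ) :
    (∫ s in (1/2:ℝ)..t, (2:ℝ) • f (2 * s - 1)) = ∫ s in (0:ℝ)..(2 * t - 1), f s := by
  rw [intervalIntegral.integral_smul]
  simp

lemma cat_eq_left (f₁ f₂ : ℝ → E) {t : ℝ} (ht : t ≤ 1 / 2) :
    cat f₁ f₂ t = (2:ℝ) • f₁ (2 * t) := if_pos ht

lemma cat_eq_right (f₁ f₂ : ℝ → E) {t : ℝ} (ht : 1 / 2 < t) :
    cat f₁ f₂ t = (2:ℝ) • f₂ (2 * t - 1) := if_neg (not_le.2 ht)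

lemma cat_int_left {f₁ : ℝ → E} (h : IntervalIntegrable f₁ volume 0 1) (f₂ : ℝ → E) :
    IntervalIntegrable (cat f₁ f₂) volume 0 (1/2) := by
  have := ((h.comp_mul_left (c := 2)).smul (2:ℝ))
  norm_num at this
  refine IntervalIntegrable.congr ?_ this
  intro t ht
  rw [Set.uIoc_of_le (by norm_num)] at ht
  simp [cat_eq_left f₁ f₂ ht.2]

lemma cat_int_right {f₂ : ℝ → E} (h : IntervalIntegrable f₂ volume 0 1) (f₁ : ℝ → E) :
    IntervalIntegrable (cat f₁ f₂) volume (1/2) 1 := by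
  have := (((h.comp_sub_right 1).comp_mul_left (c := 2)).smul (2:ℝ))
  norm_num at this
  refine IntervalIntegrable.congr ?_ this
  intro t ht
  rw [Set.uIoc_of_le (by norm_num)] at ht
  simp [cat_eq_right f₁ f₂ ht.1]

lemma cat_prim_left (f₁ f₂ : ℝ → E) {t : ℝ} (h0 : 0 ≤ t) (ht : t ≤ 1 / 2) :
    (∫ s in (0:ℝ)..t, cat f₁ f₂ s) = ∫ s in (0:ℝ)..(2 * t), f₁ s := by
  rw [← sub_left]
  apply intervalIntegral.integral_congr
  intro s hs
  rw [Set.uIcc_of_le h0] at hs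
  exact cat_eq_left _ _ (hs.2.trans ht)

lemma cat_prim_right {f₁ f₂ : ℝ → E} (h₁ : IntervalIntegrable f₁ volume 0 1)
    (h₂ : IntervalIntegrable f₂ volume 0 1) {t : ℝ} (ht : 1 / 2 ≤ t) (h1 : t ≤ 1) :
    (∫ s in (0:ℝ)..t, cat f₁ f₂ s) = (∫ s in (0:ℝ)..1, f₁ s) + ∫ s in (0:ℝ)..(2 * t - 1), f₂ s := by
  rw [← intervalIntegral.integral_add_adjacent_intervals (cat_int_left h₁ f₂)
    ((cat_int_right h₂ f₁).mono_set (by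
      rw [Set.uIcc_of_le ht, Set.uIcc_of_le (by norm_num)]; exact Set.Icc_subset_Icc_right h1)),
    cat_prim_left f₁ f₂ (by norm_num) le_rfl, ← sub_right]
  congr 1
  · norm_num
  · apply intervalIntegral.integral_congr_uIoo
    intro s hs
    rw [Set.uIoo_of_le ht] at hs
    exact cat_eq_right _ _ hs.1

lemma cat_int {f₁ f₂ : ℝ → E} (h₁ : IntervalIntegrable f₁ volume 0 1)
    (h₂ : IntervalIntegrable f₂ volume 0 1) : IntervalIntegrable (cat f₁ f₂) volume 0 1 :=
  (cat_int_left h₁ f₂).trans (cat_int_right h₂ f₁)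

end concat

lemma cr_smul_right (p q : ℝ × ℝ) (c : ℝ) : cr p (c • q) = c * cr p q := by
  simp [cr]; ring

/-- Concatenation of curves realizes the Heisenberg group law. -/
lemma Reach.mul {g : ℝ × ℝ → ℝ}
    (hgi : ∀ (f : ℝ → ℝ × ℝ) (a b : ℝ), IntervalIntegrable f volume a b →
      IntervalIntegrable (fun t => g (f t)) volume a b)
    (hg2 : ∀ (c : ℝ) x, 0 ≤ c → g (c • x) = c * g x)
    {v₁ v₂ : ℝ × ℝ} {z₁ z₂ r₁ r₂ : ℝ}
    (h₁ : Reach g v₁ z₁ r₁) (h₂ : Reach g v₂ z₂ r₂) :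
    Reach g (v₁ + v₂) (z₁ + z₂ + cr v₁ v₂ / 2) (r₁ + r₂) := by
  obtain ⟨f₁, i₁, rfl, a₁, l₁⟩ := h₁
  obtain ⟨f₂, i₂, rfl, a₂, l₂⟩ := h₂
  have hi := cat_int i₁ i₂
  refine ⟨cat f₁ f₂, hi, ?_, ?_, ?_⟩
  · rw [cat_prim_right i₁ i₂ (by norm_num) le_rfl]; norm_num
  · have hc := ii_cr (cont_prim hi) hi
    have hs1 : Set.uIcc (0:ℝ) (1/2) ⊆ Set.uIcc 0 1 := by
      rw [Set.uIcc_of_le (by norm_num), Set.uIcc_of_le (by norm_num)]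
      exact Set.Icc_subset_Icc_right (by norm_num)
    have hs2 : Set.uIcc (1/2:ℝ) 1 ⊆ Set.uIcc 0 1 := by
      rw [Set.uIcc_of_le (by norm_num), Set.uIcc_of_le (by norm_num)]
      exact Set.Icc_subset_Icc_left (by norm_num)
    rw [← intervalIntegral.integral_add_adjacent_intervals (hc.mono_set hs1) (hc.mono_set hs2)]
    have e1 : (∫ t in (0:ℝ)..(1/2), cr (∫ s in (0:ℝ)..t, cat f₁ f₂ s) (cat f₁ f₂ t)) = 2 * z₁ := by
      rw [← a₁]
      have := sub_left (fun t => cr (∫ s in (0:ℝ)..t, f₁ s) (f₁ t)) (1/2)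
      rw [show (2:ℝ) * (1/2) = 1 by norm_num] at this
      rw [← this]
      apply intervalIntegral.integral_congr
      intro t ht
      rw [Set.uIcc_of_le (by norm_num)] at ht
      simp only
      rw [cat_prim_left _ _ ht.1 ht.2, cat_eq_left _ _ ht.2, cr_smul_right, smul_eq_mul]
    have e2 : (∫ t in (1/2:ℝ)..1, cr (∫ s in (0:ℝ)..t, cat f₁ f₂ s) (cat f₁ f₂ t))
        = cr (∫ s in (0:ℝ)..1, f₁ s) (∫ s in (0:ℝ)..1, f₂ s) + 2 * z₂ := by
      rw [← a₂, ← int_cr_const _ i₂,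
        ← intervalIntegral.integral_add (ii_cr continuousOn_const i₂) (ii_cr (cont_prim i₂) i₂)]
      have := sub_right (fun t => cr (∫ s in (0:ℝ)..1, f₁ s) (f₂ t)
        + cr (∫ s in (0:ℝ)..t, f₂ s) (f₂ t)) 1
      rw [show (2:ℝ) * 1 - 1 = 1 by norm_num] at this
      rw [← this]
      apply intervalIntegral.integral_congr_uIoo
      intro t ht
      rw [Set.uIoo_of_le (by norm_num)] at ht
      simp only
      rw [cat_prim_right i₁ i₂ ht.1.le ht.2.le, cat_eq_right _ _ ht.1, cr_smul_right,
        cr_add_left, smul_eq_mul]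
    rw [e1, e2]; ring
  · have hgf := cat_int (hgi _ _ _ i₁) (hgi _ _ _ i₂)
    have : ∀ t, g (cat f₁ f₂ t) = cat (fun t => g (f₁ t)) (fun t => g (f₂ t)) t := by
      intro t
      unfold cat
      split_ifs <;> rw [hg2 _ _ (by norm_num), smul_eq_mul]
    simp only [this]
    rw [cat_prim_right (hgi _ _ _ i₁) (hgi _ _ _ i₂) (by norm_num) le_rfl]
    norm_num
    linarith

/-- Area swept by the polygonal path with the given list of edges. -/
noncomputable def larea : List (ℝ × ℝ) → ℝ
  | [] => 0
  | p :: l => larea l + cr p l.sum / 2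

/-- Polygonal paths as iterated concatenations of segments. -/
lemma reach_list {g : ℝ × ℝ → ℝ}
    (hgi : ∀ (f : ℝ → ℝ × ℝ) (a b : ℝ), IntervalIntegrable f volume a b →
      IntervalIntegrable (fun t => g (f t)) volume a b)
    (hg2 : ∀ (c : ℝ) x, 0 ≤ c → g (c • x) = c * g x) (l : List (ℝ × ℝ)) :
    Reach g l.sum (larea l) (l.map g).sum := by
  induction l with
  | nil =>
    have h := reach_seg g 0
    have h0 : g 0 = 0 := by simpa using hg2 0 0 le_rfl
    simpa [larea, h0] using h
  | cons p l ih =>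
    have := (reach_seg g p).mul hgi hg2 ih
    simpa [larea] using this

lemma larea_append_singleton (l : List (ℝ × ℝ)) (y : ℝ × ℝ) :
    larea (l ++ [y]) = larea l + cr l.sum y / 2 := by
  induction l with
  | nil => simp [larea, cr]
  | cons p l ih => simp [larea, ih, cr]; ring

lemma larea_smul (c : ℝ) (l : List (ℝ × ℝ)) :
    larea (l.map (c • ·)) = c ^ 2 * larea l := by
  induction l with
  | nil => simp [larea]
  | cons p l ih =>
    have : (l.map (c • ·)).sum = c • l.sum := List.smul_sum.symm
    simp [larea, ih, this, cr]; ring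

/-- For edges listed by increasing argument, the swept area is expressed through the symmetric
double sum, which does not depend on the order or the signs of the edges. -/
lemma sum_abs_cr (l : List (ℝ × ℝ)) (h : l.Pairwise fun p q => 0 ≤ cr p q) :
    4 * larea l = (l.map fun p => (l.map fun q => |cr p q|).sum).sum := by
  induction l with
  | nil => simp [larea]
  | cons p l ih =>
    rw [List.pairwise_cons] at h
    have e1 : ∀ l : List (ℝ × ℝ), (∀ q ∈ l, 0 ≤ cr p q) →
        (l.map fun q => |cr p q|).sum = cr p l.sum := by
      intro l hl
      induction l with
      | nil => simp [cr]
      | cons q l ih =>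
        rw [List.map_cons, List.sum_cons, List.sum_cons, ih fun x hx => hl x (by simp [hx]),
          abs_of_nonneg (hl q (by simp))]
        simp [cr]; ring
    have e2 : ∀ q, |cr q p| = |cr p q| := fun q => by
      rw [← abs_neg]; congr 1; simp [cr]; ring
    have e3 : cr p p = 0 := by simp [cr]; ring
    simp only [List.map_cons, List.sum_cons, List.sum_map_add, ← ih h.2, e2, e3, e1 l h.1,
      larea, abs_zero]
    ring

/-! ### Sorting edges by argument and cutting a corner -/

/-- The Euclidean dot product of the plane. -/
def dt (p q : ℝ × ℝ) : ℝ := p.1 * q.1 + p.2 * q.2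

lemma dt_self_pos {e : ℝ × ℝ} (he : e ≠ 0) : 0 < dt e e := by
  unfold dt
  rcases eq_or_ne e.1 0 with h | h
  · have : e.2 ≠ 0 := fun h' => he (Prod.ext h h')
    linarith [mul_self_pos.2 this, mul_self_nonneg e.1]
  · linarith [mul_self_pos.2 h, mul_self_nonneg e.2]

/-- The half-open half-plane of nonzero vectors with argument in `[0, π)` relative to `e`. -/
def Half (e p : ℝ × ℝ) : Prop := 0 < cr e p ∨ (cr e p = 0 ∧ 0 < dt e p)

lemma Half.cr_nonneg {e p : ℝ × ℝ} (h : Half e p) : 0 ≤ cr e p := by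
  rcases h with h | h
  · exact h.le
  · exact h.1.ge

lemma half_or {e p : ℝ × ℝ} (he : e ≠ 0) (hp : p ≠ 0) : Half e p ∨ Half e (-p) := by
  have h1 := dt_self_pos he
  have h2 := dt_self_pos hp
  have h3 : dt e p ^ 2 + cr e p ^ 2 = dt e e * dt p p := by simp only [dt, cr]; ring
  have h4 : cr e (-p) = - cr e p := by simp [cr]; ring
  have h5 : dt e (-p) = - dt e p := by simp [dt]; ring
  unfold Half
  rw [h4, h5]
  rcases lt_trichotomy (cr e p) 0 with h | h | h
  · right; left; linarith
  · have : dt e p ≠ 0 := fun h' => by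
      rw [h, h'] at h3
      have := mul_pos h1 h2
      norm_num at h3
      rcases h3 with h3 | h3 <;> linarith
    rcases lt_or_gt_of_ne this with h' | h'
    · right; right; constructor <;> linarith
    · left; right; exact ⟨h, h'⟩
  · left; left; exact h

/-- A real number increasing with the argument of `p ∈ Half e`. -/
noncomputable def argKey (e p : ℝ × ℝ) : ℝ := -dt e p / (|dt e p| + cr e p)

lemma cr_nonneg_of_key {e p q : ℝ × ℝ} (he : e ≠ 0) (hp : Half e p) (hq : Half e q)
    (h : argKey e p ≤ argKey e q) : 0 ≤ cr p q := by
  have hN := dt_self_pos he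
  have hid : dt e e * cr p q = dt e p * cr e q - dt e q * cr e p := by
    simp only [dt, cr]; ring
  have hden : ∀ {p}, Half e p → 0 < |dt e p| + cr e p := by
    intro p hp
    rcases hp with h | h
    · positivity
    · rw [h.1, add_zero]; exact abs_pos.2 h.2.ne'
  unfold argKey at h
  rw [div_le_div_iff₀ (hden hp) (hden hq)] at h
  have h1 := hp.cr_nonneg
  have h2 := hq.cr_nonneg
  refine nonneg_of_mul_nonneg_right (?_ : 0 ≤ dt e e * cr p q) hN
  rw [hid]
  rcases le_total 0 (dt e p) with h3 | h3 <;> rcases le_total 0 (dt e q) with h4 | h4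
  · rw [abs_of_nonneg h3, abs_of_nonneg h4] at h; nlinarith
  · have := mul_nonneg h3 h2
    have := mul_nonneg (neg_nonneg.2 h4) h1
    linarith
  · rw [abs_of_nonpos h3, abs_of_nonneg h4] at h
    have := mul_nonneg (neg_nonneg.2 h3) h4
    nlinarith
  · rw [abs_of_nonpos h3, abs_of_nonpos h4] at h; nlinarith

/-- Up to sign, vectors can be listed by increasing argument. -/
lemma exists_sorted {e : ℝ × ℝ} (he : e ≠ 0) (l0 : List (ℝ × ℝ)) (h0 : ∀ p ∈ l0, p ≠ 0) :
    ∃ l : List (ℝ × ℝ),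
      (∀ k : ℝ × ℝ → ℝ, (∀ p, k (-p) = k p) → (l.map k).sum = (l0.map k).sum) ∧
      (∀ p ∈ l, p ∈ l0 ∨ -p ∈ l0) ∧ (∀ p ∈ l, Half e p) ∧
      l.Pairwise fun p q => 0 ≤ cr p q := by
  classical
  set φ : ℝ × ℝ → ℝ × ℝ := fun p => if Half e p then p else -p with hφ
  set r : ℝ × ℝ → ℝ × ℝ → Prop := fun p q => argKey e p ≤ argKey e q with hr
  have : Std.Total r := ⟨fun p q => le_total _ _⟩
  have : IsTrans _ r := ⟨fun p q s h1 h2 => le_trans h1 h2⟩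
  have hperm := List.perm_insertionSort r (l0.map φ)
  have hmem : ∀ p ∈ (l0.map φ).insertionSort r, ∃ q ∈ l0, φ q = p := fun p hp => by
    rw [hperm.mem_iff] at hp
    simpa using hp
  have hhalf : ∀ p ∈ (l0.map φ).insertionSort r, Half e p := by
    intro p hp
    obtain ⟨q, hq, rfl⟩ := hmem p hp
    by_cases h : Half e q
    · simp [hφ, h]
    · simpa [hφ, h] using (half_or he (h0 q hq)).resolve_left h
  refine ⟨(l0.map φ).insertionSort r, ?_, ?_, hhalf, ?_⟩
  · intro k hk
    rw [(hperm.map k).sum_eq, List.map_map]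
    congr 1
    apply List.map_congr_left
    intro p _
    by_cases h : Half e p <;> simp [hφ, h, hk]
  · intro p hp
    obtain ⟨q, hq, rfl⟩ := hmem p hp
    by_cases h : Half e q <;> simp [hφ, h, hq]
  · have := List.pairwise_insertionSort r (l0.map φ)
    exact this.imp_of_mem fun hp hq h => cr_nonneg_of_key he (hhalf _ hp) (hhalf _ hq) h

/-- If the vectors of a sorted list are not all parallel, then its first and last vectors are not
parallel. -/
lemma exists_ends {e : ℝ × ℝ} (he : e ≠ 0) (l : List (ℝ × ℝ)) (hh : ∀ p ∈ l, Half e p)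
    (hl : l.Pairwise fun p q => 0 ≤ cr p q)
    (hpos : 0 < (l.map fun p => (l.map fun q => |cr p q|).sum).sum) :
    ∃ x m y, l = x :: (m ++ [y]) ∧ 0 < cr x y := by
  have hself : ∀ x, cr x x = 0 := fun x => by simp [cr]; ring
  obtain _ | ⟨x, t⟩ := l
  · simp at hpos
  rcases List.eq_nil_or_concat t with rfl | ⟨m, y, rfl⟩
  · simp [hself] at hpos
  refine ⟨x, m, y, by simp, ?_⟩
  simp only [List.concat_eq_append] at *
  have hx : ∀ p ∈ x :: (m ++ [y]), 0 ≤ cr x p := by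
    rw [List.pairwise_cons] at hl
    intro p hp
    rcases List.mem_cons.1 hp with rfl | hp
    · exact (hself _).ge
    · exact hl.1 p hp
  have hy : ∀ p ∈ x :: (m ++ [y]), 0 ≤ cr p y := by
    rw [← List.cons_append, List.pairwise_append] at hl
    intro p hp
    rw [← List.cons_append, List.mem_append] at hp
    rcases hp with hp | hp
    · exact hl.2.2 p hp y (by simp)
    · rw [List.mem_singleton.1 hp]; exact (hself _).ge
  by_contra hne
  have hxy : cr x y = 0 := le_antisymm (not_lt.1 hne) (hx y (by simp))
  have hN := dt_self_pos he
  have hxh := hh x (by simp)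
  have hyh := hh y (by simp)
  have hxx : 0 < dt x x := by
    have h1 : dt e x ^ 2 + cr e x ^ 2 = dt e e * dt x x := by simp only [dt, cr]; ring
    refine pos_of_mul_pos_right (a := dt e e) ?_ hN.le
    rw [← h1]
    rcases hxh with h | h
    · positivity
    · have := h.2; positivity
  have hdxy : 0 < dt x y := by
    have h1 : dt e e * dt x y = dt e x * dt e y + cr e x * cr e y := by simp only [dt, cr]; ring
    have h2 : 0 = dt e x * cr e y - dt e y * cr e x := by
      rw [show (0:ℝ) = dt e e * cr x y by rw [hxy, mul_zero]]; simp only [dt, cr]; ring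
    refine pos_of_mul_pos_right (a := dt e e) ?_ hN.le
    rw [h1]
    rcases hxh with h | h <;> rcases hyh with h' | h'
    · refine pos_of_mul_pos_right (a := cr e x) ?_ h.le
      have : cr e x * (dt e x * dt e y + cr e x * cr e y)
        = (dt e x ^ 2 + cr e x ^ 2) * cr e y := by linear_combination (dt e x) * h2
      rw [this]
      positivity
    · rw [h'.1] at h2
      have := mul_pos h'.2 h
      linarith
    · rw [h.1] at h2
      have := mul_pos h.2 h'
      linarith
    · rw [h.1, h'.1]
      have := mul_pos h.2 h'.2
      linarith
  -- `cr p y` and `-cr x p` have the same sign, so `x` is parallel to every `p`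
  have hxp : ∀ p ∈ x :: (m ++ [y]), cr x p = 0 := by
    intro p hp
    refine le_antisymm ?_ (hx p hp)
    have h1 : cr p y * dt x x = - cr x p * dt x y + dt x p * cr x y := by
      simp only [dt, cr]; ring
    rw [hxy] at h1
    have := mul_nonneg (hy p hp) hxx.le
    by_contra h
    have := mul_pos (not_le.1 h) hdxy
    linarith
  have hall : ∀ p ∈ x :: (m ++ [y]), ∀ q ∈ x :: (m ++ [y]), |cr p q| = 0 := by
    intro p hp q hq
    have h1 : cr p q * dt x x = cr x q * dt x p - cr x p * dt x q := by
      simp only [dt, cr]; ring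
    rw [hxp p hp, hxp q hq] at h1
    rw [abs_eq_zero]
    have : cr p q * dt x x = 0 := by rw [h1]; ring
    exact (mul_eq_zero.1 this).resolve_right hxx.ne'
  refine hpos.ne' (List.sum_eq_zero ?_)
  intro a ha
  obtain ⟨p, hp, rfl⟩ := List.mem_map.1 ha
  refine List.sum_eq_zero ?_
  intro b hb
  obtain ⟨q, hq, rfl⟩ := List.mem_map.1 hb
  exact hall p hp q hq

lemma larea_append (l₁ l₂ : List (ℝ × ℝ)) :
    larea (l₁ ++ l₂) = larea l₁ + larea l₂ + cr l₁.sum l₂.sum / 2 := by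
  induction l₁ with
  | nil => simp [larea, cr]
  | cons p l ih => simp [larea, ih, cr]; ring

/-- The boundary of the centrally symmetric polygon with edges `± x, ± m, ± y`, scaled by `s`, with
its first edge shortened by `b` and its last edge by `a`. In the Heisenberg group this is the
product `(-b x) · (full loop) · (a y)`, which explains the area. -/
lemma reach_cut {g : ℝ × ℝ → ℝ}
    (hgi : ∀ (f : ℝ → ℝ × ℝ) (a b : ℝ), IntervalIntegrable f volume a b →
      IntervalIntegrable (fun t => g (f t)) volume a b)
    (hg2 : ∀ (c : ℝ) x, 0 ≤ c → g (c • x) = c * g x) (hgn : ∀ x, g (-x) = g x)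
    {x y : ℝ × ℝ} {m : List (ℝ × ℝ)} {μ a b s : ℝ} (hs : 0 ≤ s) (ha : a ≤ s) (hb : b ≤ s)
    (hlen : ((x :: (m ++ [y])).map g).sum ≤ 1) (har : larea (x :: (m ++ [y])) = μ / 2) :
    Reach g (a • y - b • x) (μ * s ^ 2 - a * b * cr x y / 2) (2 * s - b * g x - a * g y) := by
  have hsum : ∀ c : ℝ, (m.map (c • ·)).sum = c • m.sum := fun c => List.smul_sum.symm
  have hgneg : ∀ (c : ℝ) p, 0 ≤ c → g (-(c • p)) = c * g p := fun c p hc => by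
    rw [hgn, hg2 c p hc]
  have hgm : ∀ c : ℝ, (∀ p, g (c • p) = s * g p) →
      ((m.map (c • ·)).map g).sum = s * (m.map g).sum := fun c hc => by
    rw [List.map_map, ← List.sum_map_mul_left]
    congr 1
    exact List.map_congr_left fun p _ => hc p
  -- edges `(s - b) x, s m, s y, -s x, -s m, -(s - a) y`
  have h := reach_list hgi hg2
    (((s - b) • x :: (m.map (s • ·) ++ [s • y])) ++
      ((-s) • x :: (m.map ((-s) • ·) ++ [-((s - a) • y)])))
  have hv : (((s - b) • x :: (m.map (s • ·) ++ [s • y])) ++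
      ((-s) • x :: (m.map ((-s) • ·) ++ [-((s - a) • y)]))).sum = a • y - b • x := by
    simp only [List.sum_append, List.sum_cons, List.sum_nil, hsum]
    module
  have hz : larea (((s - b) • x :: (m.map (s • ·) ++ [s • y])) ++
      ((-s) • x :: (m.map ((-s) • ·) ++ [-((s - a) • y)]))) = μ * s ^ 2 - a * b * cr x y / 2 := by
    have hμ : μ = 2 * larea (x :: (m ++ [y])) := by linarith
    rw [hμ]
    simp only [larea_append, larea, larea_smul, List.sum_append, List.sum_cons, List.sum_nil, hsum]
    simp [cr]
    ring
  rw [hv, hz] at h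
  refine h.mono ?_
  simp only [List.map_append, List.map_cons, List.sum_append, List.sum_cons, List.map_nil,
    List.sum_nil] at hlen ⊢
  rw [hgm s fun p => hg2 s p hs, hgm (-s) fun p => by rw [neg_smul, hgneg s p hs],
    hg2 _ _ (sub_nonneg.2 hb), hg2 _ _ hs, hgneg _ _ (sub_nonneg.2 ha), neg_smul, hgneg _ _ hs]
  nlinarith

/-! ### The isoperimetric polygon -/

/-- The maximum `μ` of `Qf F` over the simplex is attained and positive; by homogeneity it bounds
`Qf F` everywhere. -/
lemma exists_opt (F : Finset (ℝ × ℝ)) (hF : F.Nonempty)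
    (hspan : ∀ x : ℝ × ℝ, ∃ c : ℝ × ℝ → ℝ, ∑ u ∈ F, c u • u = x) :
    ∃ (μ : ℝ) (ℓ : ℝ × ℝ → ℝ), 0 < μ ∧
      (∀ l : ℝ × ℝ → ℝ, (∀ u, 0 ≤ l u) → Qf F l ≤ μ * (∑ u ∈ F, l u) ^ 2) ∧
      (∀ u, 0 ≤ ℓ u) ∧ ∑ u ∈ F, ℓ u = 1 ∧ Qf F ℓ = μ := by
  classical
  set S : Set (ℝ × ℝ → ℝ) :=
    Set.pi Set.univ (fun _ => Set.Icc (0:ℝ) 1) ∩ {l | ∑ u ∈ F, l u = 1} with hS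
  have hcomp : IsCompact S := by
    apply (isCompact_univ_pi fun _ => isCompact_Icc).inter_right
    exact isClosed_eq (by fun_prop) continuous_const
  have hne : S.Nonempty := by
    obtain ⟨w, hw⟩ := hF
    refine ⟨fun u => if u = w then 1 else 0, ?_, ?_⟩
    · intro u _
      by_cases h : u = w <;> simp [h]
    · simp [hw]
  have hcont : Continuous (Qf F) := by unfold Qf; fun_prop
  obtain ⟨ℓ, hℓ, hmax⟩ := hcomp.exists_isMaxOn hne hcont.continuousOn
  have hμ : ∀ l : ℝ × ℝ → ℝ, (∀ u, 0 ≤ l u) → Qf F l ≤ Qf F ℓ * (∑ u ∈ F, l u) ^ 2 := by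
    intro l hl
    rcases (Finset.sum_nonneg fun u (_ : u ∈ F) => hl u).eq_or_lt with h | h
    · have h0 := (Finset.sum_eq_zero_iff_of_nonneg fun u _ => hl u).1 h.symm
      have : Qf F l = 0 := by
        unfold Qf
        rw [Finset.sum_eq_zero, mul_zero]
        intro u hu
        apply Finset.sum_eq_zero
        intro v _
        rw [h0 u hu]; ring
      rw [this, ← h]; simp
    · set σ := ∑ u ∈ F, l u with hσ
      set l' : ℝ × ℝ → ℝ := fun u => if u ∈ F then l u / σ else 0 with hl'
      have h1 : l' ∈ S := by
        refine ⟨fun u _ => ?_, ?_⟩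
        · by_cases hu : u ∈ F
          · simp only [hl', hu, if_true, Set.mem_Icc]
            exact ⟨div_nonneg (hl u) h.le,
              (div_le_one h).2 (Finset.single_le_sum (fun u _ => hl u) hu)⟩
          · simp [hl', hu]
        · have : ∑ u ∈ F, l' u = ∑ u ∈ F, l u / σ :=
            Finset.sum_congr rfl fun u hu => by simp [hl', hu]
          rw [Set.mem_ofPred_eq, this, ← Finset.sum_div, ← hσ, div_self h.ne']
      have h2 : Qf F l = Qf F l' * σ ^ 2 := by
        unfold Qf
        rw [mul_assoc, Finset.sum_mul]
        congr 1
        refine Finset.sum_congr rfl fun u hu => ?_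
        rw [Finset.sum_mul]
        refine Finset.sum_congr rfl fun v hv => ?_
        simp only [hl', hu, hv, if_true]
        field_simp
      rw [h2]
      exact mul_le_mul_of_nonneg_right (hmax h1) (sq_nonneg _)
  have hℓ0 : ∀ l : ℝ × ℝ → ℝ, (∀ u, 0 ≤ l u) → 0 ≤ Qf F l := fun l hl => by
    unfold Qf
    refine mul_nonneg (by norm_num) (Finset.sum_nonneg fun u _ => Finset.sum_nonneg fun v _ => ?_)
    exact mul_nonneg (abs_nonneg _) (mul_nonneg (hl u) (hl v))
  refine ⟨Qf F ℓ, ℓ, ?_, hμ, fun u => (hℓ.1 u trivial).1, hℓ.2, rfl⟩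
  -- if the maximum vanished then all vectors of `F` would be parallel
  refine lt_of_le_of_ne (hℓ0 _ fun u => (hℓ.1 u trivial).1) fun hz => ?_
  have h1 : Qf F (fun _ => 1) = 0 :=
    le_antisymm ((hμ _ fun _ => zero_le_one).trans (by rw [← hz]; simp)) (hℓ0 _ fun _ => zero_le_one)
  have h2 : ∀ u ∈ F, ∀ v ∈ F, cr u v = 0 := by
    unfold Qf at h1
    have h3 : ∑ u ∈ F, ∑ v ∈ F, |cr u v| = 0 := by simpa using h1
    intro u hu v hv
    have h4 := (Finset.sum_eq_zero_iff_of_nonneg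
      fun u _ => Finset.sum_nonneg fun v _ => abs_nonneg _).1 h3 u hu
    exact abs_eq_zero.1 ((Finset.sum_eq_zero_iff_of_nonneg fun v _ => abs_nonneg _).1 h4 v hv)
  obtain ⟨c, hc⟩ := hspan (1, 0)
  obtain ⟨d, hd⟩ := hspan (0, 1)
  have h5 := cr_sum_sum F c d
  rw [hc, hd, Finset.sum_eq_zero fun u hu => Finset.sum_eq_zero fun v hv => by
    rw [h2 u hu v hv, zero_mul]] at h5
  simp [cr] at h5

lemma exists_pos_lower (T : Finset ℝ) : ∃ δ : ℝ, 0 < δ ∧ ∀ t ∈ T, 0 < t → δ ≤ t := by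
  induction T using Finset.induction_on with
  | empty => exact ⟨1, one_pos, by simp⟩
  | insert a T _ ih =>
    obtain ⟨δ, h1, h2⟩ := ih
    by_cases ha : 0 < a
    · refine ⟨min δ a, lt_min h1 ha, fun t ht htp => ?_⟩
      rcases Finset.mem_insert.1 ht with rfl | ht
      · exact min_le_right _ _
      · exact (min_le_left _ _).trans (h2 t ht htp)
    · refine ⟨δ, h1, fun t ht htp => ?_⟩
      rcases Finset.mem_insert.1 ht with rfl | ht
      · exact absurd htp ha
      · exact h2 t ht htp

/-- For every direction `e`, half of the boundary of the isoperimetric polygon can be listed by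
increasing argument starting from `e`. The determinant of its extreme edges is bounded below by a
constant `δ` that does not depend on `e`, because up to sign all edges come from one finite list. -/
lemma exists_half_polygon (F : Finset (ℝ × ℝ)) (hF : F.Nonempty) (g : ℝ × ℝ → ℝ)
    (hg2 : ∀ (c : ℝ) x, 0 ≤ c → g (c • x) = c * g x) (hgn : ∀ x, g (-x) = g x)
    (hgF : ∀ u ∈ F, g u ≤ 1)
    (hspan : ∀ x : ℝ × ℝ, ∃ c : ℝ × ℝ → ℝ, ∑ u ∈ F, c u • u = x) :
    ∃ μ δ : ℝ, 0 < μ ∧ 0 < δ ∧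
      (∀ l : ℝ × ℝ → ℝ, (∀ u, 0 ≤ l u) → Qf F l ≤ μ * (∑ u ∈ F, l u) ^ 2) ∧
      ∀ e : ℝ × ℝ, e ≠ 0 → ∃ (x : ℝ × ℝ) (m : List (ℝ × ℝ)) (y : ℝ × ℝ),
        ((x :: (m ++ [y])).map g).sum ≤ 1 ∧ larea (x :: (m ++ [y])) = μ / 2 ∧
        δ ≤ cr x y ∧ 0 ≤ cr e x ∧ 0 ≤ cr e y := by
  classical
  obtain ⟨μ, ℓ, hμ0, hμ, hℓ0, hℓ1, hℓμ⟩ := exists_opt F hF hspan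
  -- the edges of half of the optimal zonogon; edges of length zero carry no direction and are dropped
  set l1 : List (ℝ × ℝ) := F.toList.map fun u => ℓ u • u with hl1
  set l0 : List (ℝ × ℝ) := l1.filter (· ≠ 0) with hl0
  have hfilter : ∀ k : ℝ × ℝ → ℝ, k 0 = 0 → (l0.map k).sum = (l1.map k).sum := by
    intro k hk
    rw [hl0]
    generalize l1 = l
    induction l with
    | nil => simp
    | cons p l ih =>
      by_cases hp : p = 0
      · simp [hp, hk] at ih ⊢; exact ih
      · simp [hp] at ih ⊢; exact ih
  have hsum1 : ∀ k : ℝ × ℝ → ℝ, (l1.map k).sum = ∑ u ∈ F, k (ℓ u • u) := fun k => by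
    rw [hl1, List.map_map, ← Finset.sum_map_toList]; rfl
  have hg0 : g 0 = 0 := by simpa using hg2 0 0 le_rfl
  have hlen : (l0.map g).sum ≤ 1 := by
    rw [hfilter g hg0, hsum1, ← hℓ1]
    refine Finset.sum_le_sum fun u hu => ?_
    rw [hg2 _ _ (hℓ0 u)]
    exact mul_le_of_le_one_right (hℓ0 u) (hgF u hu)
  have hcr : (l0.map fun p => (l0.map fun q => |cr p q|).sum).sum = 2 * μ := by
    have h1 : ∀ p, (l0.map fun q => |cr p q|).sum = ∑ v ∈ F, |cr p (ℓ v • v)| := fun p => by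
      rw [hfilter _ (by simp [cr]), hsum1]
    simp only [h1]
    rw [hfilter _ (by simp [cr]), hsum1, ← hℓμ]
    unfold Qf
    rw [← mul_assoc, show (2:ℝ) * (1 / 2) = 1 by norm_num, one_mul]
    refine Finset.sum_congr rfl fun u _ => Finset.sum_congr rfl fun v _ => ?_
    rw [show cr (ℓ u • u) (ℓ v • v) = (ℓ u * ℓ v) * cr u v by simp [cr]; ring, abs_mul,
      abs_of_nonneg (mul_nonneg (hℓ0 u) (hℓ0 v)), mul_comm]
  obtain ⟨δ, hδ, hδ'⟩ := exists_pos_lower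
    ((l0.toFinset ×ˢ l0.toFinset).image fun pq => |cr pq.1 pq.2|)
  refine ⟨μ, δ, hμ0, hδ, hμ, fun e he => ?_⟩
  obtain ⟨l, hsum, hmem, hhalf, hpair⟩ := exists_sorted he l0 (by simp [hl0])
  have hneg1 : ∀ p q, |cr (-p) q| = |cr p q| := fun p q => by
    rw [← abs_neg]; congr 1; simp [cr]; ring
  have hneg2 : ∀ p q, |cr p (-q)| = |cr p q| := fun p q => by
    rw [← abs_neg]; congr 1; simp [cr]; ring
  have hcr' : (l.map fun p => (l.map fun q => |cr p q|).sum).sum = 2 * μ := by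
    rw [← hcr]
    have h1 : ∀ p, (l.map fun q => |cr p q|).sum = (l0.map fun q => |cr p q|).sum :=
      fun p => hsum (fun q => |cr p q|) (hneg2 p)
    simp only [h1]
    exact hsum (fun p => (l0.map fun q => |cr p q|).sum) fun p => by simp only [hneg1]
  obtain ⟨x, m, y, rfl, hxy⟩ := exists_ends he l hhalf hpair (by rw [hcr']; positivity)
  refine ⟨x, m, y, (hsum g hgn).trans_le hlen, ?_, ?_, (hhalf x (by simp)).cr_nonneg,
    (hhalf y (by simp)).cr_nonneg⟩
  · have := sum_abs_cr _ hpair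
    linarith
  · rw [← abs_of_pos hxy]
    refine hδ' _ ?_ (abs_pos.2 hxy.ne')
    have hpm : ∀ p, (p ∈ l0 ∨ -p ∈ l0) → ∃ p' ∈ l0, p' = p ∨ p' = -p := by
      rintro p (h | h)
      · exact ⟨p, h, Or.inl rfl⟩
      · exact ⟨-p, h, Or.inr rfl⟩
    obtain ⟨x', hx', hx⟩ := hpm x (hmem x (by simp))
    obtain ⟨y', hy', hy⟩ := hpm y (hmem y (by simp))
    refine Finset.mem_image.2 ⟨(x', y'), by simp [hx', hy'], ?_⟩
    rcases hx with rfl | rfl <;> rcases hy with rfl | rfl <;> simp [hneg1, hneg2]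

/-- Cutting a corner off a large isoperimetric polygon of perimeter at most `2 * s`: `v` is reached
with length at most `2 * s - g v`, at a cost `t` in area that is quadratic in `v`. -/
lemma reach_target {g : ℝ × ℝ → ℝ}
    (hgi : ∀ (f : ℝ → ℝ × ℝ) (a b : ℝ), IntervalIntegrable f volume a b →
      IntervalIntegrable (fun t => g (f t)) volume a b)
    (hg2 : ∀ (c : ℝ) x, 0 ≤ c → g (c • x) = c * g x) (hgn : ∀ x, g (-x) = g x)
    (hga : ∀ x y, g (x + y) ≤ g x + g y) (hgp : ∀ x, 0 ≤ g x)
    {R μ δ : ℝ} (hR : 0 < R) (hgR : ∀ x, ‖x‖ ≤ R * g x) (hδ : 0 < δ)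
    (H : ∀ e : ℝ × ℝ, e ≠ 0 → ∃ (x : ℝ × ℝ) (m : List (ℝ × ℝ)) (y : ℝ × ℝ),
        ((x :: (m ++ [y])).map g).sum ≤ 1 ∧ larea (x :: (m ++ [y])) = μ / 2 ∧
        δ ≤ cr x y ∧ 0 ≤ cr e x ∧ 0 ≤ cr e y) (v : ℝ × ℝ) :
    ∃ t : ℝ, 0 ≤ t ∧ t ≤ 2 * R ^ 2 / δ * ‖v‖ ^ 2 ∧
      ∀ s, 2 * R / δ * ‖v‖ ≤ s → Reach g v (μ * s ^ 2 - t) (2 * s - g v) := by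
  classical
  -- `-v` is the starting direction, so that it lies in the cone spanned by `x` and `-y`; for `v = 0`
  -- any direction works
  obtain ⟨x, m, y, hlen, har, hxy, hex, hey⟩ := H (if v = 0 then (1, 0) else -v) (by
    split_ifs with h
    · simp
    · simpa using h)
  have hvx : 0 ≤ cr (-v) x ∧ 0 ≤ cr (-v) y := by
    split_ifs at hex hey with h
    · simp [h, cr]
    · exact ⟨hex, hey⟩
  have hm0 : 0 ≤ (m.map g).sum := List.sum_nonneg fun a ha => by
    obtain ⟨p, -, rfl⟩ := List.mem_map.1 ha
    exact hgp p
  have hlen' : g x + ((m.map g).sum + g y) ≤ 1 := by simpa using hlen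
  have hbd : ∀ p, g p ≤ 1 → cr (-v) p ≤ 2 * ‖v‖ * R := fun p hp => by
    refine (le_abs_self _).trans ((abs_cr_le _ _).trans ?_)
    rw [norm_neg]
    refine mul_le_mul_of_nonneg_left ((hgR p).trans ?_) (by positivity)
    exact mul_le_of_le_one_right hR.le hp
  have hbx := hbd x (by linarith [hgp x, hgp y])
  have hby := hbd y (by linarith [hgp x, hgp y])
  have hd : 0 < cr x y := hδ.trans_le hxy
  -- Cramer's rule for `-v = b x - a y`
  set a := cr (-v) x / cr x y with ha
  set b := cr (-v) y / cr x y with hb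
  have ha0 : 0 ≤ a := div_nonneg hvx.1 hd.le
  have hb0 : 0 ≤ b := div_nonneg hvx.2 hd.le
  have haA : a ≤ 2 * R / δ * ‖v‖ := by
    calc a ≤ (2 * ‖v‖ * R) / δ := div_le_div₀ (by positivity) hbx hδ hxy
      _ = _ := by ring
  have hbA : b ≤ 2 * R / δ * ‖v‖ := by
    calc b ≤ (2 * ‖v‖ * R) / δ := div_le_div₀ (by positivity) hby hδ hxy
      _ = _ := by ring
  have hv : a • y - b • x = v := by
    have hne := hd.ne'
    ext
    · simp only [ha, hb, Prod.fst_sub, Prod.smul_fst, smul_eq_mul]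
      field_simp
      simp [cr]; ring
    · simp only [ha, hb, Prod.snd_sub, Prod.smul_snd, smul_eq_mul]
      field_simp
      simp [cr]; ring
  have hbc : b * cr x y = cr (-v) y := div_mul_cancel₀ _ hd.ne'
  refine ⟨a * b * cr x y / 2, by positivity, ?_, fun s hs => ?_⟩
  · calc a * b * cr x y / 2 = a * cr (-v) y / 2 := by rw [mul_assoc, hbc]
      _ ≤ (2 * R / δ * ‖v‖) * (2 * ‖v‖ * R) / 2 := by
        have := mul_le_mul haA hby hvx.2 (by positivity)
        linarith
      _ = _ := by ring
  · have hs0 : 0 ≤ s := le_trans (by positivity) hs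
    have := reach_cut hgi hg2 hgn hs0 (haA.trans hs) (hbA.trans hs) hlen har
    rw [hv] at this
    refine this.mono ?_
    have h1 : g v ≤ a * g y + b * g x := by
      calc g v = g (a • y + -(b • x)) := by rw [← sub_eq_add_neg, hv]
        _ ≤ g (a • y) + g (-(b • x)) := hga _ _
        _ = _ := by rw [hgn, hg2 _ _ ha0, hg2 _ _ hb0]
    linarith

/-- Every element is represented by some curve: a loop around a `z × 1` rectangle, then a segment. -/
lemma reach_exists {g : ℝ × ℝ → ℝ}
    (hgi : ∀ (f : ℝ → ℝ × ℝ) (a b : ℝ), IntervalIntegrable f volume a b →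
      IntervalIntegrable (fun t => g (f t)) volume a b)
    (hg2 : ∀ (c : ℝ) x, 0 ≤ c → g (c • x) = c * g x) (v : ℝ × ℝ) (z : ℝ) :
    ∃ r, Reach g v z r := by
  have h := (reach_list hgi hg2 [(z, 0), (0, 1), (-z, 0), (0, -1)]).mul hgi hg2 (reach_seg g v)
  have h1 : [(z, 0), (0, 1), (-z, 0), (0, -1)].sum + v = v := by simp
  have h2 : larea [(z, 0), (0, 1), (-z, 0), (0, -1)] + 0
      + cr [(z, 0), (0, 1), (-z, 0), (0, -1)].sum v / 2 = z := by simp [larea, cr]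
  rw [h1, h2] at h
  exact ⟨_, h⟩

/-! ### The polygonal norm and the CC-norm -/

/-- The properties of the polygonal norm used in the argument: Lipschitz, measurable composition,
decomposition along the vertices, homogeneity, evenness, triangle inequality, the vertices lie in
the unit ball, and comparison with the ambient norm. -/
lemma gauge_facts (L : Set (ℝ × ℝ)) (F : Finset (ℝ × ℝ))
    (hL : L = convexHull ℝ (F : Set (ℝ × ℝ))) (hsym : L = -L) (h0 : (0 : ℝ × ℝ) ∈ interior L) :
    (∃ K, LipschitzWith K (gauge L)) ∧
    (∀ (f : ℝ → ℝ × ℝ) (a b : ℝ), IntervalIntegrable f volume a b →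
      IntervalIntegrable (fun t => gauge L (f t)) volume a b) ∧
    (∀ x, ∃ c : ℝ × ℝ → ℝ, (∀ u, 0 ≤ c u) ∧ ∑ u ∈ F, c u ≤ gauge L x ∧ ∑ u ∈ F, c u • u = x) ∧
    (∀ (c : ℝ) x, 0 ≤ c → gauge L (c • x) = c * gauge L x) ∧
    (∀ x, gauge L (-x) = gauge L x) ∧ (∀ x y, gauge L (x + y) ≤ gauge L x + gauge L y) ∧
    (∀ u ∈ F, gauge L u ≤ 1) ∧ F.Nonempty ∧ ∃ R, 0 < R ∧ ∀ x, ‖x‖ ≤ R * gauge L x := by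
  classical
  have hconv : Convex ℝ L := hL ▸ convex_convexHull ℝ _
  have hn : L ∈ nhds (0 : ℝ × ℝ) := mem_interior_iff_mem_nhds.1 h0
  have habs : Absorbent ℝ L := absorbent_nhds_zero hn
  have hclosed : IsClosed L := hL ▸ F.finite_toSet.isClosed_convexHull ℝ
  have hbdd : Bornology.IsVonNBounded ℝ L := by
    rw [NormedSpace.isVonNBounded_iff, hL, isBounded_convexHull]
    exact F.finite_toSet.isBounded
  have hLip := hconv.lipschitz_gauge hn
  have hg2 : ∀ (c : ℝ) x, 0 ≤ c → gauge L (c • x) = c * gauge L x := fun c x hc =>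
    gauge_smul_of_nonneg hc x
  have hsel : ∀ x, ∃ c : ℝ × ℝ → ℝ,
      (∀ u, 0 ≤ c u) ∧ ∑ u ∈ F, c u ≤ gauge L x ∧ ∑ u ∈ F, c u • u = x := by
    intro x
    by_cases hx : x = 0
    · exact ⟨0, fun _ => le_rfl, by simp [hx], by simp [hx]⟩
    have hp : 0 < gauge L x := (gauge_pos habs hbdd).2 hx
    have h1 : (gauge L x)⁻¹ • x ∈ L := by
      apply hclosed.closure_subset
      rw [← gauge_le_one_iff_mem_closure hconv hn, hg2 _ _ (inv_nonneg.2 hp.le),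
        inv_mul_cancel₀ hp.ne']
    rw [hL, Finset.mem_convexHull'] at h1
    rw [← hL] at h1
    obtain ⟨w, hw0, hw1, hw2⟩ := h1
    refine ⟨fun u => if u ∈ F then gauge L x * w u else 0, fun u => ?_, ?_, ?_⟩
    · by_cases hu : u ∈ F
      · simpa [hu] using mul_nonneg hp.le (hw0 u hu)
      · simp [hu]
    · rw [Finset.sum_congr rfl fun u hu => if_pos hu, ← Finset.mul_sum, hw1, mul_one]
    · have : ∀ u ∈ F, (if u ∈ F then gauge L x * w u else 0) • u = gauge L x • w u • u :=
        fun u hu => by rw [if_pos hu, mul_smul]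
      rw [Finset.sum_congr rfl this, ← Finset.smul_sum, hw2, smul_inv_smul₀ hp.ne']
  refine ⟨hLip, ?_, hsel, hg2, fun x => ?_, fun x y => gauge_add_le hconv habs x y, ?_, ?_, ?_⟩
  · obtain ⟨K, hK⟩ := hLip
    intro f a b hf
    refine (hf.norm.const_mul (K:ℝ)).mono_fun ?_ (Filter.Eventually.of_forall fun t => ?_)
    · exact hK.continuous.comp_aestronglyMeasurable hf.def'.aestronglyMeasurable
    · have := hK.dist_le_mul (f t) 0
      simpa [Real.dist_eq] using this
  · refine gauge_neg (fun x hx => ?_) x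
    rw [hsym]
    simpa using hx
  · intro u hu
    exact gauge_le_one_of_mem (hL ▸ subset_convexHull ℝ _ hu)
  · rw [Finset.nonempty_iff_ne_empty]
    rintro rfl
    simp [hL] at h0
  · refine ⟨∑ u ∈ F, ‖u‖ + 1, by positivity, fun x => ?_⟩
    obtain ⟨c, hc0, hc1, hc2⟩ := hsel x
    calc ‖x‖ = ‖∑ u ∈ F, c u • u‖ := by rw [hc2]
      _ ≤ ∑ u ∈ F, ‖c u • u‖ := norm_sum_le _ _
      _ ≤ ∑ u ∈ F, (∑ v ∈ F, ‖v‖ + 1) * c u := by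
        refine Finset.sum_le_sum fun u hu => ?_
        rw [norm_smul, Real.norm_of_nonneg (hc0 u), mul_comm]
        refine mul_le_mul_of_nonneg_right ?_ (hc0 u)
        have := Finset.single_le_sum (f := fun v : ℝ × ℝ => ‖v‖) (fun v _ => norm_nonneg v) hu
        linarith
      _ ≤ _ := by
        rw [← Finset.mul_sum]
        exact mul_le_mul_of_nonneg_left hc1 (by positivity)

/-- The definition of `ccNorm` in terms of the velocity only. -/
lemma ccNorm_eq (L : Set (ℝ × ℝ)) (v : ℝ × ℝ) (z : ℝ) :
    ccNorm L (v.1, v.2, z) = sInf {r | ∃ f : ℝ → ℝ × ℝ, IntervalIntegrable f volume 0 1 ∧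
      (∫ t in (0:ℝ)..1, f t) = v ∧
      (∫ t in (0:ℝ)..1, cr (∫ s in (0:ℝ)..t, f s) (f t)) = 2 * z ∧
      (∫ t in (0:ℝ)..1, gauge L (f t)) = r} := by
  unfold ccNorm
  congr 1
  ext r
  constructor
  · rintro ⟨γ, h0, h1, h2, h3⟩
    refine ⟨γ.deriv, γ.integrable, ?_, ?_, h3⟩
    · have := γ.integral_eq 1 (by simp)
      rw [h0, zero_add, h1] at this
      exact this.symm
    · unfold ACCurve.area at h2
      simp only at h2
      rw [← h2, ← mul_assoc, show (2:ℝ) * (1 / 2) = 1 by norm_num, one_mul]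
      apply intervalIntegral.integral_congr
      intro t ht
      rw [Set.uIcc_of_le zero_le_one] at ht
      simp only
      rw [γ.integral_eq t ht, h0, zero_add]
      rfl
  · rintro ⟨f, hf, h1, h2, h3⟩
    refine ⟨⟨fun t => ∫ s in (0:ℝ)..t, f s, f, hf, fun t _ => by simp⟩, by simp, h1, ?_, h3⟩
    unfold ACCurve.area
    simp only [cr] at h2 ⊢
    rw [h2]; ring

/-! ### Almost dead ends -/

/-- Almost dead ends in `H₃(ℝ)` for CC-metrics: there are constants `C, M, D₀ > 0`
(depending only on `L`) such that for all `D ≥ D₀` and `n ≥ C·D⁴`, the element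
`g = (0,0,n)` satisfies `‖g·h‖_CC ≤ ‖g‖_CC − ‖ĥ‖_L + M` for all `h` with `‖h‖_CC ≤ D`. -/
theorem almost_dead_ends_in_H3R (L : Set (ℝ × ℝ)) (F : Finset (ℝ × ℝ))
    (hL : L = convexHull ℝ (F : Set (ℝ × ℝ))) (hsym : L = -L)
    (h0 : (0 : ℝ × ℝ) ∈ interior L) :
    ∃ C M D₀ : ℝ, 0 < C ∧ 0 < M ∧ 0 < D₀ ∧
      ∀ D : ℝ, D₀ ≤ D → ∀ n : ℝ, C * D^4 ≤ n →
        ∀ h : ℝ × ℝ × ℝ, ccNorm L h ≤ D →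
          ccNorm L (heisMul (0, 0, n) h) ≤ ccNorm L (0, 0, n) - gauge L (h.1, h.2.1) + M := by
  obtain ⟨⟨K, hK⟩, hgi, hsel, hg2, hgn, hga, hgF, hF, R, hR, hgR⟩ := gauge_facts L F hL hsym h0
  have hgp : ∀ x, 0 ≤ gauge L x := gauge_nonneg
  obtain ⟨μ, δ, hμ0, hδ, hμ, H⟩ := exists_half_polygon F hF (gauge L) hg2 hgn hgF fun x => by
    obtain ⟨c, -, -, hc⟩ := hsel x
    exact ⟨c, hc⟩
  set A := 2 * R / δ with hA
  set B := 2 * R ^ 2 / δ with hB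
  have hA0 : 0 < A := by positivity
  have hB0 : 0 < B := by positivity
  set κ := 2 + 4 * B * R ^ 2 / μ with hκ
  have hκ0 : 0 < κ := by positivity
  refine ⟨4 * A ^ 2 * R ^ 2 * μ + 3 * μ, 2 * κ, 1, by positivity, by positivity, one_pos, ?_⟩
  rintro D hD n hn ⟨x, y, z⟩ hh
  set v : ℝ × ℝ := (x, y) with hv
  have hD0 : 0 < D := one_pos.trans_le hD
  have hD2 : 1 ≤ D ^ 2 := one_le_pow₀ hD
  have hD4 : D ^ 2 ≤ D ^ 4 := pow_le_pow_right₀ hD (by norm_num)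
  have hn0 : 0 < n := lt_of_lt_of_le (by positivity) hn
  -- a curve of length at most `2 * D` representing `h`; the infimum need not be attained
  obtain ⟨f, hf, hfv, hfz, hfl⟩ : ∃ f : ℝ → ℝ × ℝ, IntervalIntegrable f volume 0 1 ∧
      (∫ t in (0:ℝ)..1, f t) = v ∧
      (∫ t in (0:ℝ)..1, cr (∫ s in (0:ℝ)..t, f s) (f t)) = 2 * z ∧
      (∫ t in (0:ℝ)..1, gauge L (f t)) ≤ 2 * D := by
    have h1 := ccNorm_eq L v z
    have h2 : ccNorm L (v.1, v.2, z) < 2 * D := lt_of_le_of_lt hh (by linarith)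
    rw [h1] at h2
    obtain ⟨r, f, h3, h4, h5, -⟩ := reach_exists hgi hg2 v z
    obtain ⟨_, ⟨f, h3, h4, h5, rfl⟩, h6⟩ := exists_lt_of_csInf_lt (by
      exact ⟨_, f, h3, h4, h5, rfl⟩) h2
    exact ⟨f, h3, h4, h5, h6.le⟩
  have hgf0 : 0 ≤ ∫ t in (0:ℝ)..1, gauge L (f t) :=
    intervalIntegral.integral_nonneg zero_le_one fun t _ => hgp _
  have hvD : ‖v‖ ≤ 2 * R * D := by
    calc ‖v‖ = ‖∫ t in (0:ℝ)..1, f t‖ := by rw [hfv]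
      _ ≤ ∫ t in (0:ℝ)..1, ‖f t‖ := intervalIntegral.norm_integral_le_integral_norm zero_le_one
      _ ≤ ∫ t in (0:ℝ)..1, R * gauge L (f t) :=
        intervalIntegral.integral_mono_on zero_le_one hf.norm ((hgi _ _ _ hf).const_mul R)
          fun t _ => hgR _
      _ = R * ∫ t in (0:ℝ)..1, gauge L (f t) := intervalIntegral.integral_const_mul _ _
      _ ≤ R * (2 * D) := mul_le_mul_of_nonneg_left hfl hR.le
      _ = _ := by ring
  have hv2 : ‖v‖ ^ 2 ≤ 4 * R ^ 2 * D ^ 2 := by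
    calc ‖v‖ ^ 2 ≤ (2 * R * D) ^ 2 := pow_le_pow_left₀ (norm_nonneg _) hvD 2
      _ = _ := by ring
  have hz : |z| ≤ 2 * μ * D ^ 2 := by
    have h1 := area_le F (gauge L) K hK μ hgi hsel hμ hμ0.le f zero_le_one hf
    rw [hfz, abs_mul, abs_two] at h1
    have h2 : (∫ t in (0:ℝ)..1, gauge L (f t)) ^ 2 ≤ (2 * D) ^ 2 := pow_le_pow_left₀ hgf0 hfl 2
    have h3 := mul_le_mul_of_nonneg_left h2 hμ0.le
    nlinarith
  obtain ⟨hz1, hz2⟩ := abs_le.1 hz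
  obtain ⟨t, ht0, ht, hreach⟩ := reach_target hgi hg2 hgn hga hgp hR hgR hδ H v
  have htD : t ≤ 4 * B * R ^ 2 * D ^ 2 := by
    refine ht.trans ?_
    have := mul_le_mul_of_nonneg_left hv2 hB0.le
    linarith
  have hpos : 0 ≤ 4 * A ^ 2 * R ^ 2 * μ := by positivity
  have hCD : 4 * A ^ 2 * R ^ 2 * μ * D ^ 2 + 2 * μ * D ^ 2 + μ * D ^ 4 ≤ n := by
    have h1 := mul_le_mul_of_nonneg_left hD4 hpos
    have h2 := mul_le_mul_of_nonneg_left hD4 hμ0.le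
    linarith
  -- the scale at which the cut polygon sweeps out area `n + z`
  set s := Real.sqrt ((n + z + t) / μ) with hs
  set q := Real.sqrt (n / μ) with hq
  have hq2 : q ^ 2 = n / μ := Real.sq_sqrt (by positivity)
  have hq0 : 0 ≤ q := Real.sqrt_nonneg _
  have hμD2 : 0 ≤ μ * D ^ 2 := by positivity
  have hμD4 : 0 ≤ μ * D ^ 4 := by positivity
  have hAD : 0 ≤ 4 * A ^ 2 * R ^ 2 * μ * D ^ 2 := by positivity
  have hs2 : s ^ 2 = (n + z + t) / μ := Real.sq_sqrt (div_nonneg (by linarith) hμ0.le)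
  have hsA : A * ‖v‖ ≤ s := by
    apply Real.le_sqrt_of_sq_le
    rw [le_div_iff₀ hμ0, mul_pow]
    have := mul_le_mul_of_nonneg_left hv2 (mul_nonneg (sq_nonneg A) hμ0.le)
    linarith
  have hqD : D ^ 2 ≤ q := by
    apply Real.le_sqrt_of_sq_le
    rw [le_div_iff₀ hμ0]
    linarith
  have hsq : s ≤ q + κ := by
    apply Real.sqrt_le_iff.2
    refine ⟨by positivity, ?_⟩
    have h1 : (n + z + t) / μ ≤ q ^ 2 + κ * D ^ 2 := by
      rw [hq2, div_le_iff₀ hμ0]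
      have : (n / μ + κ * D ^ 2) * μ = n + 2 * μ * D ^ 2 + 4 * B * R ^ 2 * D ^ 2 := by
        rw [hκ]; field_simp; ring
      rw [this]
      linarith
    have h2 := mul_le_mul_of_nonneg_left hqD hκ0.le
    nlinarith [mul_nonneg hκ0.le hq0]
  have hupper : ccNorm L (heisMul (0, 0, n) (x, y, z)) ≤ 2 * s - gauge L v := by
    obtain ⟨f, h1, h2, h3, h4⟩ := hreach s hsA
    have e : heisMul (0, 0, n) (x, y, z) = (v.1, v.2, n + z) := by simp [heisMul, hv]
    rw [e, ccNorm_eq]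
    have h5 : (∫ t in (0:ℝ)..1, cr (∫ s in (0:ℝ)..t, f s) (f t)) = 2 * (n + z) := by
      rw [h3, hs2]; field_simp; ring
    refine le_trans (csInf_le ⟨0, ?_⟩ ⟨f, h1, h2, h5, rfl⟩) h4
    rintro _ ⟨f, -, -, -, rfl⟩
    exact intervalIntegral.integral_nonneg zero_le_one fun t _ => hgp _
  have hlower : 2 * q ≤ ccNorm L (0, 0, n) := by
    have e := ccNorm_eq L 0 n
    simp only [Prod.fst_zero, Prod.snd_zero] at e
    rw [e]
    obtain ⟨r, f, h3, h4, h5, -⟩ := reach_exists hgi hg2 0 n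
    refine le_csInf ⟨_, f, h3, h4, h5, rfl⟩ ?_
    rintro _ ⟨f, h1, h2, h3, rfl⟩
    have h4 := isoperimetric F (gauge L) K hK μ hgi hsel hμ hμ0.le f h1 h2
    rw [h3] at h4
    have h5 : q ≤ (∫ t in (0:ℝ)..1, gauge L (f t)) / 2 := by
      apply Real.sqrt_le_iff.2
      refine ⟨div_nonneg (intervalIntegral.integral_nonneg zero_le_one fun t _ => hgp _)
        (by norm_num), ?_⟩
      rw [div_le_iff₀ hμ0]
      linarith
    linarith
  show _ ≤ _ - gauge L v + _
  linarith
end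

section
/- (H₃(ℝ) has no dead ends for CC-metrics.) Let L ⊂ ℝ² be a centrally symmetric convex polygon with 0 in its interior. For every g ∈ H₃(ℝ) and every D > 0, there exists h ∈ H₃(ℝ) with ‖h‖_CC ≤ D and ‖g·h‖_CC > ‖g‖_CC. -/
/-!
The CC-norm is homogeneous: for `s > 0` the dilation `(x, y, z) ↦ (s x, s y, s² z)` multiplies
it by `s`, since scaling a curve by `s` scales its length by `s` and its area by `s²`
(`ccNorm_dilate`). So if `g ≠ 0`, whose norm is positive (`ccNorm_pos`), then dilating `g` by
`s > 1` strictly increases its norm. The element carrying `g = (x, y, z)` to its dilate is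
`h = ((s - 1) x, (s - 1) y, (s² - 1) z)`, the cross terms of the group law cancelling, and its
norm tends to `0` as `s → 1` by the bound `‖(x, y, z)‖ ≤ K (|x| + |y| + √|z|)`
(`ccNorm_le`), which is obtained from an explicit cubic curve.
If `g = 0`, any nonzero `h` of small norm works.
-/

open MeasureTheory

/-- A polynomial curve from `0` to `(x, y)`: the segment, perturbed by the loop with coordinates
`a t (1 - t)` and `b t (1 - t) (1 - 2 t)`. -/
noncomputable def polyCurve (x y a b : ℝ) : ACCurve where
  toFun t := (x * t + a * (t - t ^ 2), y * t + b * (t - 3 * t ^ 2 + 2 * t ^ 3))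
  deriv t := (x + a * (1 - 2 * t), y + b * (1 - 6 * t + 6 * t ^ 2))
  integrable := (by fun_prop : Continuous fun t : ℝ =>
    (x + a * (1 - 2 * t), y + b * (1 - 6 * t + 6 * t ^ 2))).intervalIntegrable _ _
  integral_eq := by
    intro t _
    have h := intervalIntegral.integral_eq_sub_of_hasDerivAt (a := 0) (b := t)
      (f := fun t : ℝ => (x * t + a * (t - t ^ 2), y * t + b * (t - 3 * t ^ 2 + 2 * t ^ 3)))
      (f' := fun t : ℝ => (x + a * (1 - 2 * t), y + b * (1 - 6 * t + 6 * t ^ 2)))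
      (by
        intro s _
        have i := hasDerivAt_id' s
        refine HasDerivAt.prodMk ?_ ?_
        · refine ((i.const_mul x).add ((i.sub (i.pow 2)).const_mul a)).congr_deriv ?_
          norm_num
        · refine ((i.const_mul y).add
            (((i.sub ((i.pow 2).const_mul 3)).add ((i.pow 3).const_mul 2)).const_mul
              b)).congr_deriv ?_
          norm_num
          left; ring)
      ((by fun_prop : Continuous fun t : ℝ =>
        (x + a * (1 - 2 * t), y + b * (1 - 6 * t + 6 * t ^ 2))).intervalIntegrable _ _)
    rw [h]; simp

/-- The coefficient of `x b` vanishes because the second coordinate of the loop has mean zero. -/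
lemma polyCurve_area (x y a b : ℝ) : (polyCurve x y a b).area = a * y / 6 - a * b / 30 := by
  have h := intervalIntegral.integral_eq_sub_of_hasDerivAt (a := 0) (b := 1)
    (f := fun t : ℝ => (x * b) * (t ^ 4 - t ^ 3) + (a * y) * (t ^ 3 / 3)
        + (a * b) * (t ^ 4 - t ^ 3 * (2 / 3) - t ^ 5 * (2 / 5)))
    (f' := fun t : ℝ => (x * t + a * (t - t ^ 2)) * (y + b * (1 - 6 * t + 6 * t ^ 2)) -
      (y * t + b * (t - 3 * t ^ 2 + 2 * t ^ 3)) * (x + a * (1 - 2 * t)))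
    (by
      intro s _
      have i := hasDerivAt_id' s
      refine (((((i.pow 4).sub (i.pow 3)).const_mul (x * b)).add
        (((i.pow 3).div_const 3).const_mul (a * y))).add
        ((((i.pow 4).sub ((i.pow 3).mul_const (2 / 3))).sub
          ((i.pow 5).mul_const (2 / 5))).const_mul (a * b))).congr_deriv ?_
      norm_num; ring)
    ((by fun_prop : Continuous fun t : ℝ =>
      (x * t + a * (t - t ^ 2)) * (y + b * (1 - 6 * t + 6 * t ^ 2)) -
      (y * t + b * (t - 3 * t ^ 2 + 2 * t ^ 3)) * (x + a * (1 - 2 * t))).intervalIntegrable _ _)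
  rw [ACCurve.area]
  simp only [polyCurve]
  rw [h]; norm_num; ring

/-- Every element of the group is reached by a curve of length `O(|x| + |y| + √|z|)`. -/
lemma exists_curve {L : Set (ℝ × ℝ)} (h0 : L ∈ nhds 0) :
    ∃ K : ℝ, ∀ x y z : ℝ, ∃ γ : ACCurve, γ.toFun 0 = 0 ∧ γ.toFun 1 = (x, y) ∧
      γ.area = z ∧ γ.length L ≤ K * (|x| + |y| + √|z|) := by
  obtain ⟨r, hr, hrL⟩ := Metric.mem_nhds_iff.1 h0
  refine ⟨r⁻¹ * 500, fun x y z => ?_⟩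
  -- The loop has size `√|z|`; `b` is then forced by the area formula. For `z = 0` the value
  -- `z / 0 = 0` is harmless, as then `a = 0`.
  set a := √|z| with ha
  have ha0 : 0 ≤ a := Real.sqrt_nonneg _
  have haa : a * a = |z| := Real.mul_self_sqrt (abs_nonneg z)
  have hza : a * (z / a) = z := by
    rcases eq_or_ne a 0 with h | h
    · have : z = 0 := by rw [h] at haa; simpa using haa.symm
      simp [this]
    · field_simp
  have hza' : |z / a| ≤ a := by
    rcases eq_or_lt_of_le ha0 with h | h
    · simp [← h]
    · rw [abs_div, abs_of_pos h, div_le_iff₀ h, haa]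
  refine ⟨polyCurve x y a (5 * y - 30 * (z / a)), ?_, ?_, ?_, ?_⟩
  · simp [polyCurve]
  · simp [polyCurve]; norm_num
  · rw [polyCurve_area]; linear_combination hza
  · refine (le_abs_self _).trans ?_
    have := intervalIntegral.norm_integral_le_of_norm_le_const (a := 0) (b := 1)
      (C := r⁻¹ * 500 * (|x| + |y| + a))
      (f := fun t => gauge L ((polyCurve x y a (5 * y - 30 * (z / a))).deriv t)) ?_
    · simpa [ACCurve.length] using this
    · intro t ht
      rw [Set.uIoc_of_le zero_le_one] at ht
      rw [Real.norm_of_nonneg (gauge_nonneg _), mul_assoc, ← div_eq_inv_mul, le_div_iff₀ hr,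
        mul_comm]
      refine (mul_gauge_le_norm hrL).trans ?_
      have h1 : |1 - 2 * t| ≤ 1 := by rw [abs_le]; constructor <;> linarith [ht.1, ht.2]
      have h2 : |1 - 6 * t + 6 * t ^ 2| ≤ 13 := by
        rw [abs_le]; constructor <;> nlinarith [ht.1, ht.2]
      have h3 : |5 * y - 30 * (z / a)| ≤ 5 * |y| + 30 * a := by
        refine (abs_sub _ _).trans ?_
        rw [abs_mul, abs_mul, abs_of_pos (by norm_num : (0 : ℝ) < 5),
          abs_of_pos (by norm_num : (0 : ℝ) < 30)]
        linarith
      have hx := abs_nonneg x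
      have hy := abs_nonneg y
      simp only [polyCurve, Prod.norm_def, Real.norm_eq_abs]
      refine max_le ?_ ?_
      · refine (abs_add_le _ _).trans ?_
        rw [abs_mul, abs_of_nonneg ha0]
        nlinarith
      · refine (abs_add_le _ _).trans ?_
        rw [abs_mul]
        have := mul_le_mul h3 h2 (abs_nonneg _) (by positivity)
        nlinarith

/-- The length controls the displacement, and its square controls the area. -/
lemma exists_lower_bound {L : Set (ℝ × ℝ)} (hc : Convex ℝ L) (h0 : L ∈ nhds 0)
    (hb : Bornology.IsBounded L) :
    ∃ R : ℝ, 0 < R ∧ ∀ γ : ACCurve, γ.toFun 0 = 0 →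
      ‖γ.toFun 1‖ ≤ R * γ.length L ∧ |γ.area| ≤ (R * γ.length L) ^ 2 := by
  obtain ⟨R, hR, hLR⟩ := hb.subset_closedBall_lt 0 0
  obtain ⟨r, hr, hrL⟩ := Metric.mem_nhds_iff.1 h0
  refine ⟨R, hR, fun γ hγ => ?_⟩
  have hderiv := γ.integrable
  set M := ∫ t in (0 : ℝ)..1, ‖γ.deriv t‖ with hM
  have hgint : IntervalIntegrable (fun t => gauge L (γ.deriv t)) volume 0 1 := by
    refine (hderiv.norm.const_mul r⁻¹).mono_fun ?_ (Filter.Eventually.of_forall fun t => ?_)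
    · exact (continuous_gauge hc h0).comp_aestronglyMeasurable hderiv.def'.aestronglyMeasurable
    · beta_reduce
      rw [Real.norm_of_nonneg (gauge_nonneg _), Real.norm_of_nonneg (by positivity),
        ← div_eq_inv_mul, le_div_iff₀ hr, mul_comm]
      exact mul_gauge_le_norm hrL
  have hML : M ≤ R * γ.length L := by
    rw [ACCurve.length, ← intervalIntegral.integral_const_mul]
    refine intervalIntegral.integral_mono_on zero_le_one hderiv.norm (hgint.const_mul R)
      fun t _ => ?_
    have := le_gauge_of_subset_closedBall (x := γ.deriv t) (absorbent_nhds_zero h0) hR.le hLR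
    rwa [div_le_iff₀ hR, mul_comm] at this
  have hM0 : 0 ≤ M := intervalIntegral.integral_nonneg zero_le_one fun t _ => norm_nonneg _
  have hpos : ∀ t ∈ Set.Icc (0 : ℝ) 1, ‖γ.toFun t‖ ≤ M := by
    intro t ht
    rw [γ.integral_eq t ht, hγ, zero_add]
    refine (intervalIntegral.norm_integral_le_integral_norm ht.1).trans ?_
    exact intervalIntegral.integral_mono_interval le_rfl ht.1 ht.2
      (Filter.Eventually.of_forall fun t => norm_nonneg _) hderiv.norm
  refine ⟨(hpos 1 (by simp)).trans hML, ?_⟩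
  have harea : |γ.area| ≤ M ^ 2 := by
    have := intervalIntegral.norm_integral_le_of_norm_le (μ := volume) (a := 0) (b := 1)
      (f := fun t => (γ.toFun t).1 * (γ.deriv t).2 - (γ.toFun t).2 * (γ.deriv t).1)
      (g := fun t => (2 * M) * ‖γ.deriv t‖) zero_le_one
      (Filter.Eventually.of_forall fun t ht => ?_) (hderiv.norm.const_mul _)
    · rw [intervalIntegral.integral_const_mul, ← hM, Real.norm_eq_abs] at this
      rw [ACCurve.area, abs_mul, abs_of_pos (by norm_num : (0 : ℝ) < 1 / 2)]
      nlinarith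
    · have h := hpos t (Set.Ioc_subset_Icc_self ht)
      have a1 := (norm_fst_le (γ.toFun t)).trans h
      have a2 := (norm_snd_le (γ.toFun t)).trans h
      have d1 := norm_fst_le (γ.deriv t)
      have d2 := norm_snd_le (γ.deriv t)
      refine (norm_sub_le _ _).trans ?_
      rw [norm_mul, norm_mul]
      have e1 := mul_le_mul a1 d2 (norm_nonneg _) hM0
      have e2 := mul_le_mul a2 d1 (norm_nonneg _) hM0
      linarith
  exact harea.trans (pow_le_pow_left₀ hM0 hML 2)

lemma length_nonneg (L : Set (ℝ × ℝ)) (γ : ACCurve) : 0 ≤ γ.length L :=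
  intervalIntegral.integral_nonneg zero_le_one fun _ _ => gauge_nonneg _

lemma ccNorm_le_length {L : Set (ℝ × ℝ)} {g : ℝ × ℝ × ℝ} (γ : ACCurve) (h : γ.toFun 0 = 0)
    (h1 : γ.toFun 1 = (g.1, g.2.1)) (h2 : γ.area = g.2.2) : ccNorm L g ≤ γ.length L :=
  csInf_le ⟨0, by rintro _ ⟨γ, -, -, -, rfl⟩; exact length_nonneg L γ⟩ ⟨γ, h, h1, h2, rfl⟩

lemma le_ccNorm {L : Set (ℝ × ℝ)} (h0 : L ∈ nhds 0) {g : ℝ × ℝ × ℝ} {c : ℝ}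
    (h : ∀ γ : ACCurve, γ.toFun 0 = 0 → γ.toFun 1 = (g.1, g.2.1) → γ.area = g.2.2 →
      c ≤ γ.length L) : c ≤ ccNorm L g := by
  obtain ⟨K, hK⟩ := exists_curve h0
  obtain ⟨γ, a1, a2, a3, -⟩ := hK g.1 g.2.1 g.2.2
  refine le_csInf ⟨_, γ, a1, a2, a3, rfl⟩ ?_
  rintro _ ⟨γ, b1, b2, b3, rfl⟩
  exact h γ b1 b2 b3

lemma ccNorm_le {L : Set (ℝ × ℝ)} (h0 : L ∈ nhds 0) :
    ∃ K : ℝ, ∀ x y z : ℝ, ccNorm L (x, y, z) ≤ K * (|x| + |y| + √|z|) := by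
  obtain ⟨K, hK⟩ := exists_curve h0
  refine ⟨K, fun x y z => ?_⟩
  obtain ⟨γ, a1, a2, a3, a4⟩ := hK x y z
  exact (ccNorm_le_length γ a1 a2 a3).trans a4

lemma ccNorm_pos {L : Set (ℝ × ℝ)} (hc : Convex ℝ L) (h0 : L ∈ nhds 0)
    (hb : Bornology.IsBounded L) {g : ℝ × ℝ × ℝ} (hg : g ≠ 0) : 0 < ccNorm L g := by
  obtain ⟨R, hR, h⟩ := exists_lower_bound hc h0 hb
  by_cases hxy : (g.1, g.2.1) = (0 : ℝ × ℝ)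
  · have hz : g.2.2 ≠ 0 := by
      intro hz
      apply hg
      obtain ⟨x, y, z⟩ := g
      simp_all
    have hs : 0 < √|g.2.2| := Real.sqrt_pos.2 (abs_pos.2 hz)
    refine (div_pos hs hR).trans_le (le_ccNorm h0 fun γ a1 a2 a3 => ?_)
    rw [div_le_iff₀ hR, mul_comm, ← a3]
    exact Real.sqrt_le_iff.2 ⟨mul_nonneg hR.le (length_nonneg L γ), (h γ a1).2⟩
  · refine (div_pos (norm_pos_iff.2 hxy) hR).trans_le (le_ccNorm h0 fun γ a1 a2 a3 => ?_)
    rw [div_le_iff₀ hR, mul_comm, ← a2]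
    exact (h γ a1).1

/-- The curve `s γ`. -/
noncomputable def smulCurve (s : ℝ) (γ : ACCurve) : ACCurve where
  toFun t := s • γ.toFun t
  deriv t := s • γ.deriv t
  integrable := γ.integrable.smul s
  integral_eq t ht := by
    rw [γ.integral_eq t ht, intervalIntegral.integral_smul, smul_add]

lemma smulCurve_area (s : ℝ) (γ : ACCurve) : (smulCurve s γ).area = s ^ 2 * γ.area := by
  have : ∀ t, s * (γ.toFun t).1 * (s * (γ.deriv t).2) - s * (γ.toFun t).2 * (s * (γ.deriv t).1)
      = s ^ 2 * ((γ.toFun t).1 * (γ.deriv t).2 - (γ.toFun t).2 * (γ.deriv t).1) :=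
    fun t => by ring
  simp only [ACCurve.area, smulCurve, Prod.smul_fst, Prod.smul_snd, smul_eq_mul, this,
    intervalIntegral.integral_const_mul]
  ring

lemma smulCurve_length (L : Set (ℝ × ℝ)) {s : ℝ} (hs : 0 ≤ s) (γ : ACCurve) :
    (smulCurve s γ).length L = s * γ.length L := by
  simp only [ACCurve.length, smulCurve, gauge_smul_of_nonneg hs, smul_eq_mul,
    intervalIntegral.integral_const_mul]

/-- The half of homogeneity that is needed; the reverse inequality is the case of `s⁻¹`. -/
lemma ccNorm_dilate {L : Set (ℝ × ℝ)} (h0 : L ∈ nhds 0) {s : ℝ} (hs : 0 < s) (x y z : ℝ) :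
    s * ccNorm L (x, y, z) ≤ ccNorm L (s * x, s * y, s ^ 2 * z) := by
  refine le_ccNorm h0 fun γ a1 a2 a3 => ?_
  have := ccNorm_le_length (L := L) (g := (x, y, z)) (smulCurve s⁻¹ γ)
    (by simp [smulCurve, a1]) (by simp [smulCurve, a2, hs.ne'])
    (by rw [smulCurve_area, a3]; field_simp)
  rwa [smulCurve_length L (by positivity), ← div_eq_inv_mul, le_div_iff₀ hs, mul_comm] at this

/-- `H₃(ℝ)` has no dead ends for CC-metrics: for every `g` and every `D > 0` there is an
`h` with `‖h‖_CC ≤ D` and `‖g·h‖_CC > ‖g‖_CC`. -/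
theorem no_dead_ends_in_H3R (L : Set (ℝ × ℝ)) (F : Finset (ℝ × ℝ))
    (hL : L = convexHull ℝ (F : Set (ℝ × ℝ))) (hsym : L = -L)
    (h0 : (0 : ℝ × ℝ) ∈ interior L)
    (g : ℝ × ℝ × ℝ) (D : ℝ) (hD : 0 < D) :
    ∃ h : ℝ × ℝ × ℝ, ccNorm L h ≤ D ∧ ccNorm L g < ccNorm L (heisMul g h) := by
  have hc : Convex ℝ L := hL ▸ convex_convexHull ℝ _
  have hb : Bornology.IsBounded L := by
    rw [hL, isBounded_convexHull]
    exact F.finite_toSet.isBounded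
  replace h0 : L ∈ nhds 0 := mem_interior_iff_mem_nhds.1 h0
  obtain ⟨K, hK⟩ := ccNorm_le h0
  -- `h` is taken on this path, with `(x, y, z) = g`, or `(1, 0, 0)` when `g = 0`.
  have key : ∀ x y z : ℝ, ∃ s : ℝ, 1 < s ∧
      ccNorm L ((s - 1) * x, (s - 1) * y, (s ^ 2 - 1) * z) ≤ D := by
    intro x y z
    have hcont : Continuous fun s : ℝ =>
        K * (|(s - 1) * x| + |(s - 1) * y| + √|(s ^ 2 - 1) * z|) := by fun_prop
    have hev := hcont.continuousAt.eventually_lt (x₀ := 1)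
      (continuousAt_const (y := D)) (by simpa using hD)
    obtain ⟨s, hs, hs1⟩ := ((hev.filter_mono nhdsWithin_le_nhds).and
      (self_mem_nhdsWithin (s := Set.Ioi (1 : ℝ)))).exists
    exact ⟨s, hs1, (hK _ _ _).trans hs.le⟩
  by_cases hg : g = 0
  · obtain ⟨s, hs, hsD⟩ := key 1 0 0
    refine ⟨_, hsD, ?_⟩
    have h1 : ccNorm L g ≤ 0 := by
      have := hK 0 0 0
      simp only [abs_zero, Real.sqrt_zero, add_zero, mul_zero] at this
      rwa [hg]
    refine h1.trans_lt (ccNorm_pos hc h0 hb ?_)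
    intro h
    have := congrArg Prod.fst h
    simp [heisMul, hg] at this
    linarith
  · have hpos := ccNorm_pos hc h0 hb hg
    obtain ⟨x, y, z⟩ := g
    obtain ⟨s, hs, hsD⟩ := key x y z
    refine ⟨_, hsD, ?_⟩
    have e : heisMul (x, y, z) ((s - 1) * x, (s - 1) * y, (s ^ 2 - 1) * z)
        = (s * x, s * y, s ^ 2 * z) := by
      simp only [heisMul, Prod.mk.injEq]
      refine ⟨?_, ?_, ?_⟩ <;> ring
    rw [e]
    have := ccNorm_dilate h0 (zero_lt_one.trans hs) x y z
    nlinarith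
end

section
/- (Almost dead ends in higher Heisenberg groups for cubical-like CC-metrics.) Let m ≥ 1 and let L₁,…,L_m ⊂ ℝ² be centrally symmetric convex polygons, each with 0 in its interior. There exist constants C, M, D₀ > 0 such that for every D ≥ D₀ and every real n ≥ C·D⁴, the central element g = ((0,…,0), n) ∈ H_{2m+1}(ℝ) satisfies: for all h ∈ H_{2m+1}(ℝ) with ‖h‖ ≤ D, one has ‖g·h‖ ≤ ‖g‖ + M, where ‖·‖ is the cubical-like CC-norm. -/
/-!
The element `(0, n)·((vᵢ), c)` is `((vᵢ), n + c)`, and `‖h‖ ≤ D` gives `‖vᵢ‖ = O(D)` and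
`|c| = O(D²)`. Take a nearly optimal curve `γ` for `(0, n)`, of length at most `ℓ₀`, comparable
to `√n`. Dilating `γ` by `1 + δ` with `δ = K₂ D² / n` gains area at least `2 K₂ D²` and costs
length `δ ℓ₀ = O(D² / √n)`, which is bounded because `n ≥ C D⁴`. It remains to move the
endpoint of each planar component from `0` to `vᵢ` without adding any length, at the cost of an
area `O(‖vᵢ‖²) + 1 = O(D²)`.

This is `IsPlaneNorm.exists_replacement`. Let `f` be a closed planar curve of length at most `ℓ`.
If its area is less than `c₀ ℓ²`, a triangle of perimeter `ℓ` and area `c₀ ℓ²` does better, so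
assume the area is at least `c₀ ℓ²`. Let `w` be a unit vector norming the functional `det(v, ·)`.

* Since the area of `f` is at most its length times its width measured by `det(·, w)`
  (`area_le_width`, an integration by parts), this width is at least `c₀ ℓ`. Being closed, `f` has
  an arc on which `det(·, w)` drops by half of that (`exists_drop`).
* Bisecting this arc repeatedly and keeping each time the half with the larger drop gives an arc of
  length `O(‖v‖)` with displacement `u` satisfying `-det(u, w) ≥ det(v, w)` (`exists_short_drop`).
* For such `u` one has `‖u + v‖ ≤ ‖u‖` (`IsPlaneNorm.add_le_of_drop`): in the basis `v, w`, the
  vector `u + v` is a convex combination of `u` and of the `w`-component of `u`, which is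
  no longer than `u`.
* So the arc may be replaced by a segment with displacement `u + v`. Read from the end of the arc,
  the new curve runs from `0` to `v`, is no longer than `f`, and has lost an area `O(‖v‖²)`
  (`exists_path_of_window`).

The surgery is carried out on polygonal paths, which are inscribed in curves with little loss of area
(`PolyPath.arc`) and are turned back into curves of bounded speed
(`PolyPath.exists_curve`). The surplus of area is finally removed by contracting the curve
towards its chord (`cubeCCNorm_le`). The only properties of the `Lᵢ` that matter are that their
gauges are norms.
-/

open MeasureTheory

/-- An absolutely continuous curve `[0,1] → (ℝ²)^m`, encoded componentwise by a function
together with an (interval-integrable) derivative whose integral recovers the function. -/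
structure ACCurveM (m : ℕ) where
  toFun : ℝ → Fin m → ℝ × ℝ
  deriv : ℝ → Fin m → ℝ × ℝ
  integrable : ∀ i, IntervalIntegrable (fun t => deriv t i) volume 0 1
  integral_eq : ∀ i, ∀ t ∈ Set.Icc (0:ℝ) 1,
    toFun t i = toFun 0 i + ∫ s in (0:ℝ)..t, deriv s i

/-- The balayage area of the `i`-th planar projection of the curve. -/
noncomputable def ACCurveM.area {m : ℕ} (γ : ACCurveM m) (i : Fin m) : ℝ :=
  (1/2) * ∫ t in (0:ℝ)..1,
    ((γ.toFun t i).1 * (γ.deriv t i).2 - (γ.toFun t i).2 * (γ.deriv t i).1)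

/-- The cubical-like length `∫₀¹ maxᵢ ‖γᵢ'(t)‖_{Lᵢ} dt`. -/
noncomputable def ACCurveM.cubeLength {m : ℕ} (L : Fin m → Set (ℝ × ℝ))
    (γ : ACCurveM m) : ℝ :=
  ∫ t in (0:ℝ)..1, ⨆ i, gauge (L i) (γ.deriv t i)

/-- The cubical-like CC-norm of `((v₁,…,v_m), c) ∈ H_{2m+1}(ℝ)`: the infimum of
cubical-like lengths over absolutely continuous curves from `0` with endpoints `vᵢ`
and total balayage area `c`. -/
noncomputable def cubeCCNorm {m : ℕ} (L : Fin m → Set (ℝ × ℝ))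
    (g : (Fin m → ℝ × ℝ) × ℝ) : ℝ :=
  sInf { r | ∃ γ : ACCurveM m, (∀ i, γ.toFun 0 i = 0) ∧ (∀ i, γ.toFun 1 i = g.1 i) ∧
    (∑ i, γ.area i) = g.2 ∧ γ.cubeLength L = r }

/-- The group law of `H_{2m+1}(ℝ)` on `(ℝ²)^m × ℝ`:
`((v₁,…,v_m),c)·((v₁',…,v_m'),c') = ((vᵢ+vᵢ')ᵢ, c+c'+(1/2)Σᵢ det(vᵢ,vᵢ'))`. -/
noncomputable def heisMulM {m : ℕ} (g h : (Fin m → ℝ × ℝ) × ℝ) : (Fin m → ℝ × ℝ) × ℝ :=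
  (fun i => g.1 i + h.1 i,
    g.2 + h.2 + (1/2) * ∑ i, ((g.1 i).1 * (h.1 i).2 - (g.1 i).2 * (h.1 i).1))

/-! ### Plane norms, absolutely continuous curves, polygonal paths -/

/-- The determinant form `det(p, q)` on the plane. -/
def cross (p q : ℝ × ℝ) : ℝ := p.1 * q.2 - p.2 * q.1

/-- `N` is a norm on the plane, `R`-equivalent to the sup norm in both directions. -/
structure IsPlaneNorm (N : ℝ × ℝ → ℝ) (R : ℝ) : Prop where
  pos : 0 < R
  add_le : ∀ p q, N (p + q) ≤ N p + N q
  smul_eq : ∀ (a : ℝ) p, N (a • p) = |a| * N p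
  norm_le : ∀ p, ‖p‖ ≤ R * N p
  le_norm : ∀ p, N p ≤ R * ‖p‖

/-- `f` is an absolutely continuous planar curve on `[0,1]` with derivative `d`. -/
def IsAC (f d : ℝ → ℝ × ℝ) : Prop :=
  IntervalIntegrable d volume 0 1 ∧
    ∀ t ∈ Set.Icc (0:ℝ) 1, f t = f 0 + ∫ s in (0:ℝ)..t, d s

/-- Polygonal paths from `p`: `PolyPath N p q T A` says that some polygonal path runs from `p` to
`q`, with a total time `T` allotted so that its `N`-speed is at most `1`, and with balayage area
`A` (with respect to the origin). A step with `q = r` is a pause. -/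
inductive PolyPath (N : ℝ × ℝ → ℝ) (p : ℝ × ℝ) : ℝ × ℝ → ℝ → ℝ → Prop
  | refl : PolyPath N p p 0 0
  | seg {q : ℝ × ℝ} {T A : ℝ} (r : ℝ × ℝ) (τ : ℝ) :
      PolyPath N p q T A → N (r - q) ≤ τ → PolyPath N p r (T + τ) (A + 1 / 2 * cross q r)

namespace IsPlaneNorm

variable {N : ℝ × ℝ → ℝ} {R : ℝ}

lemma nonneg (h : IsPlaneNorm N R) (p : ℝ × ℝ) : 0 ≤ N p := by
  have := (norm_nonneg p).trans (h.norm_le p)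
  exact nonneg_of_mul_nonneg_right this h.pos

lemma map_zero (h : IsPlaneNorm N R) : N 0 = 0 := by
  simpa using h.smul_eq 0 0

lemma map_neg (h : IsPlaneNorm N R) (p : ℝ × ℝ) : N (-p) = N p := by
  simpa using h.smul_eq (-1) p

lemma map_sub_rev (h : IsPlaneNorm N R) (p q : ℝ × ℝ) : N (p - q) = N (q - p) := by
  rw [← h.map_neg, neg_sub]

lemma eq_zero (h : IsPlaneNorm N R) {p : ℝ × ℝ} (hp : N p ≤ 0) : p = 0 := by
  have := h.norm_le p
  have h2 : R * N p ≤ 0 := mul_nonpos_of_nonneg_of_nonpos h.pos.le hp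
  exact norm_le_zero_iff.1 (this.trans h2)

lemma continuous (h : IsPlaneNorm N R) : Continuous N := by
  have : LipschitzWith R.toNNReal N := by
    refine LipschitzWith.of_le_add_mul _ fun p q => ?_
    have h1 := h.add_le q (p - q)
    have h2 := h.le_norm (p - q)
    rw [add_sub_cancel] at h1
    rw [dist_eq_norm, Real.coe_toNNReal _ h.pos.le]
    linarith
  exact this.continuous

lemma abs_cross_le (h : IsPlaneNorm N R) (p q : ℝ × ℝ) :
    |cross p q| ≤ 2 * R ^ 2 * (N p * N q) := by
  have h1 : |cross p q| ≤ 2 * (‖p‖ * ‖q‖) := by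
    have a1 : |p.1| ≤ ‖p‖ := norm_fst_le p
    have a2 : |p.2| ≤ ‖p‖ := norm_snd_le p
    have b1 : |q.1| ≤ ‖q‖ := norm_fst_le q
    have b2 : |q.2| ≤ ‖q‖ := norm_snd_le q
    have e1 := mul_le_mul a1 b2 (abs_nonneg _) (norm_nonneg _)
    have e2 := mul_le_mul a2 b1 (abs_nonneg _) (norm_nonneg _)
    have e3 := abs_sub (p.1 * q.2) (p.2 * q.1)
    rw [abs_mul, abs_mul] at e3
    unfold cross
    linarith
  have h2 := mul_le_mul (h.norm_le p) (h.norm_le q) (norm_nonneg _)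
    (mul_nonneg h.pos.le (h.nonneg p))
  nlinarith

lemma intervalIntegrable (h : IsPlaneNorm N R) {d : ℝ → ℝ × ℝ} {a b : ℝ}
    (hd : IntervalIntegrable d volume a b) :
    IntervalIntegrable (fun t => N (d t)) volume a b := by
  refine IntervalIntegrable.mono_fun (hd.norm.const_mul R)
    (h.continuous.comp_aestronglyMeasurable hd.aestronglyMeasurable_restrict_uIoc) ?_
  refine Filter.Eventually.of_forall fun t => ?_
  simp only [Real.norm_eq_abs]
  rw [abs_of_nonneg (h.nonneg _), abs_of_nonneg (mul_nonneg h.pos.le (norm_nonneg _))]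
  exact h.le_norm _

/-- The triangle inequality for integrals (Jensen's inequality for the convex function `N`). -/
lemma map_integral_le (h : IsPlaneNorm N R) {d : ℝ → ℝ × ℝ} {a b : ℝ} (hab : a ≤ b)
    (hd : IntervalIntegrable d volume a b) :
    N (∫ t in a..b, d t) ≤ ∫ t in a..b, N (d t) := by
  rcases hab.eq_or_lt with rfl | hlt
  · simp [h.map_zero]
  have hconv : ConvexOn ℝ Set.univ N := by
    refine ⟨convex_univ, fun x _ y _ s t hs ht _ => ?_⟩
    have := h.add_le (s • x) (t • y)
    rw [h.smul_eq, h.smul_eq, abs_of_nonneg hs, abs_of_nonneg ht] at this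
    simpa using this
  have : NeZero (volume.restrict (Set.Ioc a b)) := by
    refine ⟨?_⟩
    rw [Ne, Measure.restrict_eq_zero, Real.volume_Ioc]
    simpa using hlt
  have key := hconv.map_average_le (μ := volume.restrict (Set.Ioc a b)) (f := d)
    h.continuous.continuousOn isClosed_univ (by simp)
    ((intervalIntegrable_iff_integrableOn_Ioc_of_le hab).1 hd)
    ((intervalIntegrable_iff_integrableOn_Ioc_of_le hab).1 (h.intervalIntegrable hd))
  rw [setAverage_eq, setAverage_eq, h.smul_eq, ← intervalIntegral.integral_of_le hab,
    ← intervalIntegral.integral_of_le hab] at key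
  have hv : 0 < (volume.real (Set.Ioc a b))⁻¹ := by
    rw [Real.volume_real_Ioc_of_le hab]
    exact inv_pos.2 (sub_pos.2 hlt)
  rw [abs_of_pos hv, smul_eq_mul] at key
  exact le_of_mul_le_mul_left key hv

end IsPlaneNorm

namespace IsAC

variable {N : ℝ × ℝ → ℝ} {R : ℝ} {f d : ℝ → ℝ × ℝ}

lemma integrable_sub (hf : IsAC f d) {a b : ℝ} (ha : a ∈ Set.Icc (0:ℝ) 1)
    (hb : b ∈ Set.Icc (0:ℝ) 1) : IntervalIntegrable d volume a b := by
  refine hf.1.mono_set ?_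
  rw [Set.uIcc_of_le (zero_le_one : (0:ℝ) ≤ 1)]
  exact Set.uIcc_subset_Icc ha hb

lemma sub_eq (hf : IsAC f d) {a b : ℝ} (ha : a ∈ Set.Icc (0:ℝ) 1)
    (hb : b ∈ Set.Icc (0:ℝ) 1) : f b - f a = ∫ s in a..b, d s := by
  have h0 : (0:ℝ) ∈ Set.Icc (0:ℝ) 1 := ⟨le_rfl, zero_le_one⟩
  rw [hf.2 a ha, hf.2 b hb, ← intervalIntegral.integral_interval_sub_left
    (hf.integrable_sub h0 hb) (hf.integrable_sub h0 ha)]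
  abel

lemma continuousOn (hf : IsAC f d) : ContinuousOn f (Set.Icc 0 1) := by
  have h1 : ContinuousOn (fun t => f 0 + ∫ s in (0:ℝ)..t, d s) (Set.Icc 0 1) := by
    have := intervalIntegral.continuousOn_primitive_interval
      (μ := volume) (f := d) (a := 0) (b := 1)
      (by rw [← intervalIntegrable_iff']; exact hf.1)
    rw [Set.uIcc_of_le (zero_le_one : (0:ℝ) ≤ 1)] at this
    exact continuousOn_const.add this
  exact h1.congr hf.2

lemma norm_sub_le (hf : IsAC f d) (h : IsPlaneNorm N R) {a b : ℝ} (ha : a ∈ Set.Icc (0:ℝ) 1)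
    (hb : b ∈ Set.Icc (0:ℝ) 1) (hab : a ≤ b) : N (f b - f a) ≤ ∫ s in a..b, N (d s) := by
  rw [hf.sub_eq ha hb]
  exact h.map_integral_le hab (hf.integrable_sub ha hb)

lemma translate (hf : IsAC f d) (z : ℝ × ℝ) : IsAC (fun t => f t - z) d :=
  ⟨hf.1, fun t ht => by simp only; rw [hf.2 t ht]; abel⟩

lemma scale (hf : IsAC f d) (s : ℝ) : IsAC (fun t => s • f t) (fun t => s • d t) := by
  refine ⟨hf.1.smul s, fun t ht => ?_⟩
  simp only
  rw [hf.2 t ht, smul_add, intervalIntegral.integral_smul]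

end IsAC

lemma integrable_fst {d : ℝ → ℝ × ℝ} {a b : ℝ} (hd : IntervalIntegrable d volume a b) :
    IntervalIntegrable (fun t => (d t).1) volume a b :=
  ⟨hd.1.fst, hd.2.fst⟩

lemma integrable_snd {d : ℝ → ℝ × ℝ} {a b : ℝ} (hd : IntervalIntegrable d volume a b) :
    IntervalIntegrable (fun t => (d t).2) volume a b :=
  ⟨hd.1.snd, hd.2.snd⟩

lemma integrable_cross {f d : ℝ → ℝ × ℝ} {a b : ℝ} (hd : IntervalIntegrable d volume a b)
    (hf : ContinuousOn f (Set.uIcc a b)) :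
    IntervalIntegrable (fun t => cross (f t) (d t)) volume a b := by
  unfold cross
  exact ((integrable_snd hd).continuousOn_mul hf.fst).sub
    ((integrable_fst hd).continuousOn_mul hf.snd)

lemma integral_fst {d : ℝ → ℝ × ℝ} {a b : ℝ} (hd : IntervalIntegrable d volume a b) :
    (∫ t in a..b, d t).1 = ∫ t in a..b, (d t).1 :=
  ((ContinuousLinearMap.fst ℝ ℝ ℝ).intervalIntegral_comp_comm hd).symm

lemma integral_snd {d : ℝ → ℝ × ℝ} {a b : ℝ} (hd : IntervalIntegrable d volume a b) :
    (∫ t in a..b, d t).2 = ∫ t in a..b, (d t).2 :=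
  ((ContinuousLinearMap.snd ℝ ℝ ℝ).intervalIntegral_comp_comm hd).symm

lemma integral_cross_const {d : ℝ → ℝ × ℝ} {a b : ℝ} (hd : IntervalIntegrable d volume a b)
    (z : ℝ × ℝ) : ∫ t in a..b, cross z (d t) = cross z (∫ t in a..b, d t) := by
  unfold cross
  rw [intervalIntegral.integral_sub ((integrable_snd hd).const_mul _)
    ((integrable_fst hd).const_mul _), intervalIntegral.integral_const_mul,
    intervalIntegral.integral_const_mul, integral_fst hd, integral_snd hd]

/-! ### Approximation of arcs by polygonal paths -/

section Arcs

variable {N : ℝ × ℝ → ℝ} {R : ℝ} {f d : ℝ → ℝ × ℝ}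

/-- An arc that stays within distance `η` of a point `z` sweeps out little area seen from `z`. -/
lemma abs_area_arc_le (h : IsPlaneNorm N R) (hf : IsAC f d) {a b η : ℝ} {z : ℝ × ℝ}
    (ha : a ∈ Set.Icc (0:ℝ) 1) (hb : b ∈ Set.Icc (0:ℝ) 1) (hab : a ≤ b)
    (hη : ∀ t ∈ Set.Icc a b, N (f t - z) ≤ η) :
    |∫ t in a..b, cross (f t - z) (d t)| ≤ 2 * R ^ 2 * η * ∫ t in a..b, N (d t) := by
  have hd := hf.integrable_sub ha hb
  rw [← intervalIntegral.integral_const_mul, ← Real.norm_eq_abs]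
  refine intervalIntegral.norm_integral_le_of_norm_le hab ?_
    ((h.intervalIntegrable hd).const_mul _)
  refine Filter.Eventually.of_forall fun t ht => ?_
  have h1 := h.abs_cross_le (f t - z) (d t)
  have h2 := hη t ⟨ht.1.le, ht.2⟩
  have h3 := mul_le_mul_of_nonneg_right h2 (h.nonneg (d t))
  rw [Real.norm_eq_abs]
  nlinarith [sq_nonneg R, h.pos]

lemma integral_cross_split (hf : IsAC f d) {a b : ℝ} (ha : a ∈ Set.Icc (0:ℝ) 1)
    (hb : b ∈ Set.Icc (0:ℝ) 1) (z : ℝ × ℝ) :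
    ∫ t in a..b, cross (f t - z) (d t) =
      (∫ t in a..b, cross (f t) (d t)) - cross z (f b - f a) := by
  have hd := hf.integrable_sub ha hb
  have hc : ContinuousOn f (Set.uIcc a b) := hf.continuousOn.mono (Set.uIcc_subset_Icc ha hb)
  rw [hf.sub_eq ha hb, ← integral_cross_const hd, ← intervalIntegral.integral_sub
    (integrable_cross hd hc) (integrable_cross hd continuousOn_const)]
  refine intervalIntegral.integral_congr fun t _ => ?_
  simp only [cross, Prod.fst_sub, Prod.snd_sub]
  ring

/-- An arc of an absolutely continuous curve may be replaced by an inscribed polygonal path that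
is no longer, at an arbitrarily small cost in area. -/
lemma PolyPath.arc (h : IsPlaneNorm N R) (hf : IsAC f d) {a b : ℝ} (ha : a ∈ Set.Icc (0:ℝ) 1)
    (hb : b ∈ Set.Icc (0:ℝ) 1) (hab : a ≤ b) {ε : ℝ} (hε : 0 < ε) {p : ℝ × ℝ} {T A : ℝ}
    (hp : PolyPath N p (f a) T A) :
    ∃ A', A + 1 / 2 * (∫ t in a..b, cross (f t) (d t)) - ε ≤ A' ∧
      PolyPath N p (f b) (T + ∫ t in a..b, N (d t)) A' := by
  set I := ∫ t in a..b, N (d t) with hI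
  have hI0 : 0 ≤ I := intervalIntegral.integral_nonneg hab fun t _ => h.nonneg _
  have hR := h.pos
  obtain ⟨η, hη0, hη⟩ : ∃ η > 0, R ^ 2 * η * I ≤ ε := by
    refine ⟨ε / (R ^ 2 * I + 1), by positivity, ?_⟩
    have : R ^ 2 * (ε / (R ^ 2 * I + 1)) * I = ε * ((R ^ 2 * I) / (R ^ 2 * I + 1)) := by
      field_simp
    rw [this]
    refine mul_le_of_le_one_right hε.le ?_
    rw [div_le_one (by positivity)]
    linarith
  have huc := isCompact_Icc.uniformContinuousOn_of_continuous hf.continuousOn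
  rw [Metric.uniformContinuousOn_iff] at huc
  obtain ⟨δ, hδ, huc⟩ := huc (η / R) (by positivity)
  obtain ⟨M, hM⟩ := exists_nat_gt ((b - a) / δ)
  have hM0 : (0:ℝ) < M := lt_of_le_of_lt (div_nonneg (sub_nonneg.2 hab) hδ.le) hM
  set s := (b - a) / M with hs
  have hs0 : 0 ≤ s := div_nonneg (sub_nonneg.2 hab) hM0.le
  have hsδ : s < δ := by
    rw [hs, div_lt_iff₀ hM0]
    rw [div_lt_iff₀ hδ] at hM
    linarith
  have hMs : M * s = b - a := by rw [hs]; field_simp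
  have hmem : ∀ k : ℕ, k ≤ M → a + k * s ∈ Set.Icc (0:ℝ) 1 := by
    intro k hk
    have hk' : (k:ℝ) ≤ M := by exact_mod_cast hk
    have := mul_le_mul_of_nonneg_right hk' hs0
    have h0 : 0 ≤ k * s := by positivity
    exact ⟨by linarith [ha.1], by linarith [hb.2]⟩
  have key : ∀ k : ℕ, k ≤ M → ∃ A', A + 1 / 2 * (∫ t in a..(a + k * s), cross (f t) (d t))
      - R ^ 2 * η * (∫ t in a..(a + k * s), N (d t)) ≤ A' ∧
      PolyPath N p (f (a + k * s)) (T + ∫ t in a..(a + k * s), N (d t)) A' := by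
    intro k
    induction k with
    | zero =>
      intro _
      exact ⟨A, by simp, by simpa using hp⟩
    | succ k ih =>
      intro hk
      obtain ⟨A', hA', hP⟩ := ih (by omega)
      have m0 := hmem k (by omega)
      have m1 := hmem (k + 1) hk
      set u := a + k * s with hu
      have hv : a + ((k + 1 : ℕ):ℝ) * s = u + s := by rw [hu]; push_cast; ring
      rw [hv] at m1 ⊢
      have huv : u ≤ u + s := by linarith
      have d1 := hf.integrable_sub ha m0
      have d2 := hf.integrable_sub m0 m1
      have hc1 : ContinuousOn f (Set.uIcc a u) :=
        hf.continuousOn.mono (Set.uIcc_subset_Icc ha m0)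
      have hc2 : ContinuousOn f (Set.uIcc u (u + s)) :=
        hf.continuousOn.mono (Set.uIcc_subset_Icc m0 m1)
      rw [← intervalIntegral.integral_add_adjacent_intervals
          (integrable_cross d1 hc1) (integrable_cross d2 hc2),
        ← intervalIntegral.integral_add_adjacent_intervals
          (h.intervalIntegrable d1) (h.intervalIntegrable d2), ← add_assoc]
      refine ⟨_, ?_, hP.seg (f (u + s)) _ (hf.norm_sub_le h m0 m1 huv)⟩
      have hch := abs_area_arc_le h hf (η := η) (z := f u) m0 m1 huv (by
        intro t ht
        have hdist := huc t ⟨m0.1.trans ht.1, ht.2.trans m1.2⟩ u m0 (by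
          rw [Real.dist_eq, abs_of_nonneg (by linarith [ht.1])]
          linarith [ht.2])
        rw [dist_eq_norm, lt_div_iff₀ hR] at hdist
        linarith [h.le_norm (f t - f u)])
      rw [integral_cross_split hf m0 m1] at hch
      have hcr : cross (f u) (f (u + s) - f u) = cross (f u) (f (u + s)) := by
        simp only [cross, Prod.fst_sub, Prod.snd_sub]; ring
      rw [hcr] at hch
      have := (abs_le.1 hch).2
      nlinarith
  obtain ⟨A', hA', hP⟩ := key M le_rfl
  rw [hMs, add_sub_cancel] at hA' hP
  exact ⟨A', by linarith, hP⟩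

end Arcs

/-! ### Curves tracing polygonal paths -/

section Realize

variable {N : ℝ × ℝ → ℝ} {R : ℝ}

lemma intervalIntegrable_of_bounded (h : IsPlaneNorm N R) {d : ℝ → ℝ × ℝ} (hm : Measurable d)
    (hd : ∀ t, N (d t) ≤ 1) (a b : ℝ) : IntervalIntegrable d volume a b := by
  refine IntervalIntegrable.mono_fun (intervalIntegrable_const (c := R))
    hm.aestronglyMeasurable (Filter.Eventually.of_forall fun t => ?_)
  have := h.norm_le (d t)
  have h2 := mul_le_mul_of_nonneg_left (hd t) h.pos.le
  rw [Real.norm_eq_abs, abs_of_pos h.pos]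
  linarith

/-- A polygonal path is traced by a step velocity field of norm at most `1`. -/
lemma PolyPath.exists_velocity (h : IsPlaneNorm N R) {p q : ℝ × ℝ} {T A : ℝ}
    (hP : PolyPath N p q T A) : 0 ≤ T ∧ ∃ d : ℝ → ℝ × ℝ, Measurable d ∧ (∀ t, N (d t) ≤ 1) ∧
      p + (∫ t in (0:ℝ)..T, d t) = q ∧
      1 / 2 * ∫ t in (0:ℝ)..T, cross (p + ∫ s in (0:ℝ)..t, d s) (d t) = A := by
  induction hP with
  | refl => exact ⟨le_rfl, fun _ => 0, measurable_const, by simp [h.map_zero], by simp, by simp⟩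
  | @seg q T A r τ _ hτ ih =>
    obtain ⟨hT, d, hm, hd, hq, hA⟩ := ih
    have hτ0 : 0 ≤ τ := (h.nonneg _).trans hτ
    refine ⟨by positivity, ?_⟩
    -- For `τ = 0` the new velocity is `0`, and then `r = q`.
    set c := τ⁻¹ • (r - q) with hc
    have hτc : τ • c = r - q := by
      rcases hτ0.eq_or_lt with h0 | h0
      · rw [← h0] at hτ
        rw [h.eq_zero hτ, ← h0, zero_smul]
      · rw [hc, smul_inv_smul₀ h0.ne']
    have hNc : N c ≤ 1 := by
      rw [hc, h.smul_eq, abs_of_nonneg (inv_nonneg.2 hτ0)]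
      exact (mul_le_mul_of_nonneg_left hτ (inv_nonneg.2 hτ0)).trans inv_mul_le_one
    set e : ℝ → ℝ × ℝ := fun t => if t ≤ T then d t else c with he
    have hem : Measurable e := Measurable.ite measurableSet_Iic hm measurable_const
    have heN : ∀ t, N (e t) ≤ 1 := by
      intro t
      simp only [he]
      split_ifs
      exacts [hd t, hNc]
    have hei := intervalIntegrable_of_bounded h hem heN
    have e1 : ∀ t ≤ T, 0 ≤ t → ∫ s in (0:ℝ)..t, e s = ∫ s in (0:ℝ)..t, d s := by
      intro t ht h0
      refine intervalIntegral.integral_congr fun s hs => ?_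
      rw [Set.uIcc_of_le h0] at hs
      simp [he, hs.2.trans ht]
    have e2 : ∀ t, T ≤ t → ∫ s in T..t, e s = (t - T) • c := by
      intro t ht
      rw [← intervalIntegral.integral_const]
      refine intervalIntegral.integral_congr_ae (Filter.Eventually.of_forall fun s hs => ?_)
      rw [Set.uIoc_of_le ht] at hs
      simp [he, hs.1]
    have e3 : ∀ t, T ≤ t → p + ∫ s in (0:ℝ)..t, e s = q + (t - T) • c := by
      intro t ht
      rw [← intervalIntegral.integral_add_adjacent_intervals (hei 0 T) (hei T t), e1 T le_rfl hT,
        e2 t ht, ← add_assoc, hq]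
    refine ⟨e, hem, heN, ?_, ?_⟩
    · rw [e3 _ (by linarith), add_sub_cancel_left, hτc, add_sub_cancel]
    · have hcont : Continuous fun t => p + ∫ s in (0:ℝ)..t, e s :=
        continuous_const.add (intervalIntegral.continuous_primitive (fun a b => hei a b) 0)
      have hdi : ∀ a b, IntervalIntegrable
          (fun t => cross (p + ∫ s in (0:ℝ)..t, e s) (e t)) volume a b :=
        fun a b => integrable_cross (hei a b) hcont.continuousOn
      rw [← intervalIntegral.integral_add_adjacent_intervals (hdi 0 T) (hdi T (T + τ)), mul_add,
        ← hA]
      have i1 : ∫ t in (0:ℝ)..T, cross (p + ∫ s in (0:ℝ)..t, e s) (e t) =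
          ∫ t in (0:ℝ)..T, cross (p + ∫ s in (0:ℝ)..t, d s) (d t) := by
        refine intervalIntegral.integral_congr fun t ht => ?_
        rw [Set.uIcc_of_le hT] at ht
        rw [e1 t ht.2 ht.1]
        simp [he, ht.2]
      have i2 : ∫ t in T..(T + τ), cross (p + ∫ s in (0:ℝ)..t, e s) (e t) =
          ∫ t in T..(T + τ), cross q c := by
        refine intervalIntegral.integral_congr_ae (Filter.Eventually.of_forall fun t ht => ?_)
        rw [Set.uIoc_of_le (by linarith)] at ht
        rw [e3 t ht.1.le]
        have : e t = c := by simp [he, ht.1]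
        rw [this]
        simp only [cross, Prod.fst_add, Prod.snd_add, Prod.smul_fst, Prod.smul_snd, smul_eq_mul]
        ring
      rw [i1, i2, intervalIntegral.integral_const, add_sub_cancel_left]
      have : cross q r = τ • cross q c := by
        have h1 : cross q r = cross q (τ • c) := by
          rw [hτc]; simp only [cross, Prod.fst_sub, Prod.snd_sub]; ring
        rw [h1]
        simp only [cross, Prod.smul_fst, Prod.smul_snd, smul_eq_mul]
        ring
      rw [this]

lemma PolyPath.exists_curve (h : IsPlaneNorm N R) {p q : ℝ × ℝ} {T A : ℝ}
    (hP : PolyPath N p q T A) : ∃ f d : ℝ → ℝ × ℝ, IsAC f d ∧ f 0 = p ∧ f 1 = q ∧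
      (∀ t, N (d t) ≤ T) ∧ 1 / 2 * ∫ t in (0:ℝ)..1, cross (f t) (d t) = A := by
  obtain ⟨hT, d, hm, hd, hq, hA⟩ := hP.exists_velocity h
  have hdi := intervalIntegrable_of_bounded h hm hd
  have hsub : ∀ t, ∫ s in (0:ℝ)..t, T • d (T * s) = ∫ s in (0:ℝ)..(T * t), d s := by
    intro t
    rw [intervalIntegral.integral_smul, intervalIntegral.smul_integral_comp_mul_left, mul_zero]
  refine ⟨fun t => p + ∫ s in (0:ℝ)..(T * t), d s, fun t => T • d (T * t), ⟨?_, ?_⟩, by simp,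
    by simpa using hq, ?_, ?_⟩
  · have hm' : Measurable fun t => d (T * t) := hm.comp (measurable_const_mul T)
    exact (intervalIntegrable_of_bounded h hm' (fun t => hd _) 0 1).smul T
  · intro t _
    simp only
    rw [hsub]
    simp
  · intro t
    rw [h.smul_eq, abs_of_nonneg hT]
    exact mul_le_of_le_one_right hT (hd _)
  · rw [← hA]
    congr 1
    have := intervalIntegral.smul_integral_comp_mul_left (a := 0) (b := 1)
      (fun t => cross (p + ∫ s in (0:ℝ)..t, d s) (d t)) T
    rw [mul_zero, mul_one] at this
    rw [← this, ← intervalIntegral.integral_smul]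
    refine intervalIntegral.integral_congr fun t _ => ?_
    simp only [cross, Prod.smul_fst, Prod.smul_snd, smul_eq_mul]
    ring

/-- Every endpoint and every area are attained by a polygonal path with three edges. -/
lemma PolyPath.exists_area (N : ℝ × ℝ → ℝ) (v : ℝ × ℝ) (c : ℝ) :
    PolyPath N 0 v (N (2 * c + v.1, 0) + N (-(2 * c + v.1), 1) + N (v.1, v.2 - 1)) c := by
  have := (((PolyPath.refl (N := N) (p := 0)).seg (2 * c + v.1, 0) _ le_rfl).seg
    (0, 1) _ le_rfl).seg v _ le_rfl
  convert! this using 1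
  · simp [Prod.sub_def]
  · simp [cross]
    ring

lemma PolyPath.pad {p q : ℝ × ℝ} {T A T' : ℝ} (h : IsPlaneNorm N R) (hP : PolyPath N p q T A)
    (hT : T ≤ T') : PolyPath N p q T' A := by
  have := hP.seg q (T' - T) (by rw [sub_self, h.map_zero]; linarith)
  convert! this using 1
  · ring
  · simp [cross, mul_comm]

end Realize

/-! ### Width of a closed curve, and short arcs running backwards -/

section Width

variable {N : ℝ × ℝ → ℝ} {R : ℝ} {f d : ℝ → ℝ × ℝ}

lemma integral_primitive_mul {a b : ℝ → ℝ} (ha : IntervalIntegrable a volume 0 1)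
    (hb : IntervalIntegrable b volume 0 1) :
    ∫ t in (0:ℝ)..1, (∫ s in (0:ℝ)..t, b s) * a t =
      (∫ s in (0:ℝ)..1, b s) * (∫ s in (0:ℝ)..1, a s) -
        ∫ t in (0:ℝ)..1, (∫ s in (0:ℝ)..t, a s) * b t := by
  have h0 : (0:ℝ) ∈ Set.uIcc (0:ℝ) 1 := Set.left_mem_uIcc
  have key := (hb.absolutelyContinuousOnInterval_intervalIntegral h0).integral_mul_deriv_eq_deriv_mul
    (ha.absolutelyContinuousOnInterval_intervalIntegral h0)
  have e1 : ∫ t in (0:ℝ)..1, (∫ s in (0:ℝ)..t, b s) * deriv (fun x => ∫ s in (0:ℝ)..x, a s) t =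
      ∫ t in (0:ℝ)..1, (∫ s in (0:ℝ)..t, b s) * a t := by
    refine intervalIntegral.integral_congr_ae ?_
    filter_upwards [ha.ae_hasDerivAt_integral] with t ht hmem
    rw [(ht (Set.uIoc_subset_uIcc hmem) 0 h0).deriv]
  have e2 : ∫ t in (0:ℝ)..1, deriv (fun x => ∫ s in (0:ℝ)..x, b s) t * (∫ s in (0:ℝ)..t, a s) =
      ∫ t in (0:ℝ)..1, (∫ s in (0:ℝ)..t, a s) * b t := by
    refine intervalIntegral.integral_congr_ae ?_
    filter_upwards [hb.ae_hasDerivAt_integral] with t ht hmem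
    rw [(ht (Set.uIoc_subset_uIcc hmem) 0 h0).deriv, mul_comm]
  rw [e1, e2] at key
  simpa using key

/-- For a nonzero `v`, a vector `w` of the unit ball maximizing `det(v, ·)`. Then `det(v, ·)` has
dual norm `det(v, w)`. -/
lemma IsPlaneNorm.exists_dual (h : IsPlaneNorm N R) {v : ℝ × ℝ} (hv : v ≠ 0) :
    ∃ w, N w ≤ 1 ∧ 0 < cross v w ∧ ∀ p, |cross v p| ≤ cross v w * N p := by
  have hc : IsCompact {p | N p ≤ 1} := by
    refine Metric.isCompact_of_isClosed_isBounded
      (isClosed_le h.continuous continuous_const) ?_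
    refine (Metric.isBounded_closedBall (x := (0 : ℝ × ℝ)) (r := R)).subset fun p hp => ?_
    rw [mem_closedBall_zero_iff]
    have hp' : N p ≤ 1 := hp
    nlinarith [h.norm_le p, h.pos]
  have hcont : Continuous fun p => cross v p := by
    unfold cross
    fun_prop
  obtain ⟨w, hw, hmax⟩ := hc.exists_isMaxOn ⟨0, by simp [h.map_zero]⟩ hcont.continuousOn
  have hcs : ∀ (a : ℝ) p, cross v (a • p) = a * cross v p := by
    intro a p
    simp only [cross, Prod.smul_fst, Prod.smul_snd, smul_eq_mul]
    ring
  have hle : ∀ p, cross v p ≤ cross v w * N p := by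
    intro p
    rcases (h.nonneg p).eq_or_lt with h0 | h0
    · rw [← h0, h.eq_zero h0.symm.le]
      simp [cross]
    · have h1 : cross v ((N p)⁻¹ • p) ≤ cross v w := hmax (by
        change N _ ≤ 1
        rw [h.smul_eq, abs_of_pos (inv_pos.2 h0), inv_mul_cancel₀ h0.ne'])
      rw [hcs, inv_mul_le_iff₀ h0] at h1
      linarith
  refine ⟨w, hw, ?_, fun p => abs_le.2 ⟨?_, hle p⟩⟩
  · have h1 := hle (-v.2, v.1)
    have h2 : 0 < cross v (-v.2, v.1) := by
      have h3 : v.1 ≠ 0 ∨ v.2 ≠ 0 := by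
        by_contra! hh
        exact hv (Prod.ext hh.1 hh.2)
      simp only [cross]
      rcases h3 with h3 | h3
      · nlinarith [mul_self_pos.2 h3, mul_self_nonneg v.2]
      · nlinarith [mul_self_pos.2 h3, mul_self_nonneg v.1]
    exact pos_of_mul_pos_left (h2.trans_le h1) (h.nonneg _)
  · have := hle (-p)
    rw [h.map_neg] at this
    have h2 := hcs (-1) p
    rw [neg_one_smul] at h2
    linarith

/-- The area of a closed curve is at most its length times its width across the direction
of `w`, the width being measured by `det(·, w)`. -/
lemma area_le_width (h : IsPlaneNorm N R) (hf : IsAC f d) (f0 : f 0 = 0) (f1 : f 1 = 0)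
    {v w : ℝ × ℝ} (hV : 0 < cross v w) (hvw : ∀ p, |cross v p| ≤ cross v w * N p) {a b : ℝ}
    (ha : ∀ t ∈ Set.Icc (0:ℝ) 1, a ≤ cross (f t) w)
    (hb : ∀ t ∈ Set.Icc (0:ℝ) 1, cross (f t) w ≤ b) :
    1 / 2 * (∫ t in (0:ℝ)..1, cross (f t) (d t)) ≤ (b - a) * ∫ t in (0:ℝ)..1, N (d t) := by
  have h01 : (0:ℝ) ≤ 1 := zero_le_one
  have hd := hf.1
  have hdN := h.intervalIntegrable hd
  have hX' : IntervalIntegrable (fun t => cross (d t) w) volume 0 1 := by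
    unfold cross
    exact ((integrable_fst hd).mul_const _).sub ((integrable_snd hd).mul_const _)
  have hY' : IntervalIntegrable (fun t => cross v (d t)) volume 0 1 :=
    integrable_cross hd continuousOn_const
  have hcross_neg : ∀ p q, cross p q = - cross q p := fun p q => by simp only [cross]; ring
  have hdt : ∀ t ∈ Set.Icc (0:ℝ) 1, IntervalIntegrable d volume 0 t := fun t ht =>
    hf.integrable_sub ⟨le_rfl, h01⟩ ht
  have hft : ∀ t ∈ Set.Icc (0:ℝ) 1, f t = ∫ s in (0:ℝ)..t, d s := by
    intro t ht
    rw [hf.2 t ht, f0, zero_add]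
  have hY : ∀ t ∈ Set.Icc (0:ℝ) 1, cross v (f t) = ∫ s in (0:ℝ)..t, cross v (d s) := by
    intro t ht
    rw [hft t ht, integral_cross_const (hdt t ht)]
  have hX : ∀ t ∈ Set.Icc (0:ℝ) 1, cross (f t) w = ∫ s in (0:ℝ)..t, cross (d s) w := by
    intro t ht
    rw [hcross_neg, hft t ht, ← integral_cross_const (hdt t ht), ← intervalIntegral.integral_neg]
    exact intervalIntegral.integral_congr fun s _ => (hcross_neg _ _).symm
  have hm1 : (1:ℝ) ∈ Set.Icc (0:ℝ) 1 := ⟨h01, le_rfl⟩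
  have hY1 : ∫ s in (0:ℝ)..1, cross v (d s) = 0 := by
    rw [← hY 1 hm1, f1]; simp [cross]
  have hparts := integral_primitive_mul hX' hY'
  rw [hY1, zero_mul, zero_sub] at hparts
  have hfc : ContinuousOn f (Set.uIcc 0 1) := by
    rw [Set.uIcc_of_le h01]; exact hf.continuousOn
  have hXc : ContinuousOn (fun t => cross (f t) w) (Set.uIcc 0 1) := by
    unfold cross
    exact (hfc.fst.mul continuousOn_const).sub (hfc.snd.mul continuousOn_const)
  have hYc : ContinuousOn (fun t => cross v (f t)) (Set.uIcc 0 1) := by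
    unfold cross
    exact (continuousOn_const.mul hfc.snd).sub (continuousOn_const.mul hfc.fst)
  have e1 : ∫ t in (0:ℝ)..1, cross v (f t) * cross (d t) w =
      ∫ t in (0:ℝ)..1, (∫ s in (0:ℝ)..t, cross v (d s)) * cross (d t) w :=
    intervalIntegral.integral_congr fun t ht => by
      rw [Set.uIcc_of_le h01] at ht
      simp only [hY t ht]
  have e2 : ∫ t in (0:ℝ)..1, cross (f t) w * cross v (d t) =
      ∫ t in (0:ℝ)..1, (∫ s in (0:ℝ)..t, cross (d s) w) * cross v (d t) :=
    intervalIntegral.integral_congr fun t ht => by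
      rw [Set.uIcc_of_le h01] at ht
      simp only [hX t ht]
  have hi1 : IntervalIntegrable (fun t => cross (f t) w * cross v (d t)) volume 0 1 :=
    hY'.continuousOn_mul hXc
  have hi2 : IntervalIntegrable (fun t => cross v (f t) * cross (d t) w) volume 0 1 :=
    hX'.continuousOn_mul hYc
  -- The Plücker relation expresses the area form in the coordinates `det(·, w)`, `det(v, ·)`.
  have e3 : cross v w * ∫ t in (0:ℝ)..1, cross (f t) (d t) =
      2 * ∫ t in (0:ℝ)..1, cross (f t) w * cross v (d t) := by
    rw [← intervalIntegral.integral_const_mul]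
    have : ∫ t in (0:ℝ)..1, cross v w * cross (f t) (d t) =
        ∫ t in (0:ℝ)..1, (cross (f t) w * cross v (d t) - cross v (f t) * cross (d t) w) :=
      intervalIntegral.integral_congr fun t _ => by
        simp only [cross]
        ring
    rw [this, intervalIntegral.integral_sub hi1 hi2, e1, hparts, e2]
    ring
  have e4 : ∫ t in (0:ℝ)..1, cross (f t) w * cross v (d t) ≤
      ∫ t in (0:ℝ)..1, (a * cross v (d t) + (b - a) * cross v w * N (d t)) := by
    refine intervalIntegral.integral_mono_on h01 hi1
      ((hY'.const_mul a).add (hdN.const_mul _)) fun t ht => ?_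
    have h1 := ha t ht
    have h2 := hb t ht
    have h3 := (abs_le.1 (hvw (d t))).2
    have h4 : (cross (f t) w - a) * cross v (d t) ≤ (cross (f t) w - a) * (cross v w * N (d t)) :=
      mul_le_mul_of_nonneg_left h3 (by linarith)
    have h5 : (cross (f t) w - a) * (cross v w * N (d t)) ≤ (b - a) * (cross v w * N (d t)) :=
      mul_le_mul_of_nonneg_right (by linarith) (mul_nonneg hV.le (h.nonneg _))
    nlinarith
  rw [intervalIntegral.integral_add (hY'.const_mul a) (hdN.const_mul _),
    intervalIntegral.integral_const_mul, intervalIntegral.integral_const_mul, hY1] at e4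
  refine le_of_mul_le_mul_left ?_ hV
  nlinarith

/-- A closed curve has an arc descending at least half of its total oscillation. -/
lemma exists_drop {g : ℝ → ℝ} (hg : ContinuousOn g (Set.Icc 0 1)) (h01 : g 0 = g 1) {W : ℝ}
    (hW : ∀ a b, (∀ t ∈ Set.Icc (0:ℝ) 1, a ≤ g t) → (∀ t ∈ Set.Icc (0:ℝ) 1, g t ≤ b) →
      W ≤ b - a) :
    ∃ x y, 0 ≤ x ∧ x ≤ y ∧ y ≤ 1 ∧ W / 2 ≤ g x - g y := by
  have hne : (Set.Icc (0:ℝ) 1).Nonempty := ⟨0, by simp⟩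
  obtain ⟨s, hs, hmin⟩ := isCompact_Icc.exists_isMinOn hne hg
  obtain ⟨s', hs', hmax⟩ := isCompact_Icc.exists_isMaxOn hne hg
  have hw := hW (g s) (g s') (fun t ht => hmin ht) (fun t ht => hmax ht)
  have hle : g s ≤ g s' := hmin hs'
  rcases le_total s' s with h | h
  · exact ⟨s', s, hs'.1, h, hs.2, by linarith⟩
  · rcases le_total (W / 2) (g 0 - g s) with h1 | h1
    · exact ⟨0, s, le_rfl, hs.1, hs.2, h1⟩
    · exact ⟨s', 1, hs'.1, hs'.2, le_rfl, by linarith⟩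

/-- Bisecting an arc with respect to its length, one of the halves keeps half of the drop. -/
lemma exists_short_drop (h : IsPlaneNorm N R) (hf : IsAC f d) (g : ℝ → ℝ) {ℓ δ : ℝ}
    (hx : ∃ x y, 0 ≤ x ∧ x ≤ y ∧ y ≤ 1 ∧ δ ≤ g x - g y ∧ ∫ t in x..y, N (d t) ≤ ℓ) (j : ℕ) :
    ∃ x y, 0 ≤ x ∧ x ≤ y ∧ y ≤ 1 ∧ δ / 2 ^ j ≤ g x - g y ∧ ∫ t in x..y, N (d t) ≤ ℓ / 2 ^ j := by
  induction j with
  | zero => simpa using hx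
  | succ j ih =>
    obtain ⟨x, y, h0, hxy, h1, hdrop, hlen⟩ := ih
    have hx1 : x ∈ Set.Icc (0:ℝ) 1 := ⟨h0, hxy.trans h1⟩
    have hy1 : y ∈ Set.Icc (0:ℝ) 1 := ⟨h0.trans hxy, h1⟩
    have hi : ∀ z ∈ Set.Icc x y, IntervalIntegrable (fun t => N (d t)) volume x z ∧
        IntervalIntegrable (fun t => N (d t)) volume z y := fun z hz =>
      have hz1 : z ∈ Set.Icc (0:ℝ) 1 := ⟨h0.trans hz.1, hz.2.trans h1⟩
      ⟨h.intervalIntegrable (hf.integrable_sub hx1 hz1),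
        h.intervalIntegrable (hf.integrable_sub hz1 hy1)⟩
    set I := ∫ t in x..y, N (d t)
    have hI0 : 0 ≤ I := intervalIntegral.integral_nonneg hxy fun t _ => h.nonneg _
    have hcont : ContinuousOn (fun z => ∫ t in x..z, N (d t)) (Set.Icc x y) := by
      have := intervalIntegral.continuousOn_primitive_interval
        (μ := volume) (f := fun t => N (d t)) (a := x) (b := y)
        (by rw [← intervalIntegrable_iff']; exact (hi y ⟨hxy, le_rfl⟩).1)
      rwa [Set.uIcc_of_le hxy] at this
    obtain ⟨z, hz, hzI⟩ := intermediate_value_Icc hxy hcont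
      (show I / 2 ∈ Set.Icc (∫ t in x..x, N (d t)) (∫ t in x..y, N (d t)) by
        rw [intervalIntegral.integral_same]
        exact ⟨by linarith, by change I / 2 ≤ I; linarith⟩)
    simp only at hzI
    have hadd : (∫ t in x..z, N (d t)) + ∫ t in z..y, N (d t) = I :=
      intervalIntegral.integral_add_adjacent_intervals (hi z hz).1 (hi z hz).2
    have e1 : δ / 2 ^ (j + 1) = δ / 2 ^ j / 2 := by rw [pow_succ, div_div]
    have e2 : ℓ / 2 ^ (j + 1) = ℓ / 2 ^ j / 2 := by rw [pow_succ, div_div]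
    rw [e1, e2]
    rcases le_total (δ / 2 ^ j / 2) (g x - g z) with hc | hc
    · exact ⟨x, z, h0, hz.1, hz.2.trans h1, hc, by linarith⟩
    · exact ⟨z, y, h0.trans hz.1, hz.2, h1, by linarith, by linarith⟩

/-- If `u` moves backwards along `v` by at least `|v|` (in the coordinates given by `v` and its
dual vector `w`), then adding `v` to `u` does not lengthen it. -/
lemma IsPlaneNorm.add_le_of_drop (h : IsPlaneNorm N R) {v w u : ℝ × ℝ} (hw : N w ≤ 1)
    (hV : 0 < cross v w) (hvw : ∀ p, |cross v p| ≤ cross v w * N p)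
    (hu : cross v w ≤ - cross u w) : N (u + v) ≤ N u := by
  set V := cross v w with hVdef
  set b := - cross u w / V with hb
  have hb1 : 1 ≤ b := by rw [hb, le_div_iff₀ hV]; linarith
  have hb0 : 0 < b := by linarith
  set θ := cross v u / V with hθ
  have hθu : |θ| ≤ N u := by
    rw [hθ, abs_div, abs_of_pos hV, div_le_iff₀ hV]
    linarith [hvw u]
  have hbV : b * V = - cross u w := by rw [hb]; field_simp
  have hθV : θ * V = cross v u := by rw [hθ]; field_simp
  have hdec : u + b • v = θ • w := by
    have h1 : V • (u + b • v) = V • (θ • w) := by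
      rw [smul_add, smul_smul, smul_smul, mul_comm V b, hbV, mul_comm V θ, hθV, hVdef]
      ext <;> simp only [cross, Prod.fst_add, Prod.snd_add, Prod.smul_fst, Prod.smul_snd,
        smul_eq_mul] <;> ring
    exact (smul_right_injective (ℝ × ℝ) hV.ne') h1
  have hkey : u + v = (1 - b⁻¹) • u + b⁻¹ • (θ • w) := by
    rw [← hdec, smul_add, smul_smul, inv_mul_cancel₀ hb0.ne', one_smul, sub_smul, one_smul]
    abel
  have hbi : b⁻¹ ≤ 1 := inv_le_one_of_one_le₀ hb1
  have hbi0 : 0 < b⁻¹ := inv_pos.2 hb0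
  calc N (u + v) ≤ N ((1 - b⁻¹) • u) + N (b⁻¹ • (θ • w)) := by rw [hkey]; exact h.add_le _ _
    _ = (1 - b⁻¹) * N u + b⁻¹ * (|θ| * N w) := by
      rw [h.smul_eq, h.smul_eq, h.smul_eq, abs_of_nonneg (by linarith), abs_of_pos hbi0]
    _ ≤ (1 - b⁻¹) * N u + b⁻¹ * (N u * 1) := by
      gcongr
      exacts [h.nonneg _, h.nonneg _]
    _ = N u := by ring

end Width

/-! ### Moving the endpoint of a closed curve -/

section Replacement

variable {N : ℝ × ℝ → ℝ} {R : ℝ} {f d : ℝ → ℝ × ℝ}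

/-- A closed curve, read from its point `f y` on, is opened up: the arc from `f x` to `f y` is
replaced by the segment from `f x` to `f y + v`, and the whole is translated so as to start
at `0`. -/
lemma exists_path_of_window (h : IsPlaneNorm N R) (hf : IsAC f d) (f01 : f 1 = f 0)
    {x y : ℝ} (hx : 0 ≤ x) (hxy : x ≤ y) (hy : y ≤ 1) {v : ℝ × ℝ}
    (huv : N (f y - f x + v) ≤ N (f y - f x)) {r : ℝ} (hr : ∫ t in x..y, N (d t) ≤ r)
    {ε : ℝ} (hε : 0 < ε) :
    ∃ A', 1 / 2 * (∫ t in (0:ℝ)..1, cross (f t) (d t)) - R ^ 2 * (r ^ 2 + r * N v) - 2 * ε ≤ A' ∧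
      PolyPath N 0 v (∫ t in (0:ℝ)..1, N (d t)) A' := by
  have h0m : (0:ℝ) ∈ Set.Icc (0:ℝ) 1 := ⟨le_rfl, zero_le_one⟩
  have h1m : (1:ℝ) ∈ Set.Icc (0:ℝ) 1 := ⟨zero_le_one, le_rfl⟩
  have hxm : x ∈ Set.Icc (0:ℝ) 1 := ⟨hx, hxy.trans hy⟩
  have hym : y ∈ Set.Icc (0:ℝ) 1 := ⟨hx.trans hxy, hy⟩
  set I := ∫ t in x..y, N (d t) with hI
  have hI0 : 0 ≤ I := intervalIntegral.integral_nonneg hxy fun t _ => h.nonneg _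
  have hNu : N (f y - f x) ≤ I := hf.norm_sub_le h hxm hym hxy
  set F : ℝ → ℝ × ℝ := fun t => f t - f y with hF
  have hFac : IsAC F d := hf.translate _
  have hFc : ∀ {a b : ℝ}, a ∈ Set.Icc (0:ℝ) 1 → b ∈ Set.Icc (0:ℝ) 1 →
      IntervalIntegrable (fun t => cross (F t) (d t)) volume a b := fun ha hb =>
    integrable_cross (hf.integrable_sub ha hb)
      (hFac.continuousOn.mono (Set.uIcc_subset_Icc ha hb))
  have hNc : ∀ {a b : ℝ}, a ∈ Set.Icc (0:ℝ) 1 → b ∈ Set.Icc (0:ℝ) 1 →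
      IntervalIntegrable (fun t => N (d t)) volume a b := fun ha hb =>
    h.intervalIntegrable (hf.integrable_sub ha hb)
  have hFy : F y = 0 := sub_self _
  have hF01 : F 1 = F 0 := by simp only [hF, f01]
  obtain ⟨A₁, hA₁, hP₁⟩ := (PolyPath.refl (N := N) (p := F y)).arc h hFac hym h1m hy hε
  rw [hF01] at hP₁
  obtain ⟨A₂, hA₂, hP₂⟩ := hP₁.arc h hFac h0m hxm hx hε
  have hP₃ := hP₂.seg v I (by
    have : v - F x = f y - f x + v := by simp only [hF]; abel
    rw [this]
    exact huv.trans hNu)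
  rw [hFy] at hP₃
  have hNsum : 0 + (∫ t in y..1, N (d t)) + (∫ t in (0:ℝ)..x, N (d t)) + I =
      ∫ t in (0:ℝ)..1, N (d t) := by
    rw [← intervalIntegral.integral_add_adjacent_intervals (hNc h0m hxm) (hNc hxm h1m),
      ← intervalIntegral.integral_add_adjacent_intervals (hNc hxm hym) (hNc hym h1m)]
    ring
  have hCsum : (∫ t in (0:ℝ)..x, cross (F t) (d t)) + (∫ t in x..y, cross (F t) (d t)) +
      (∫ t in y..1, cross (F t) (d t)) = ∫ t in (0:ℝ)..1, cross (f t) (d t) := by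
    rw [intervalIntegral.integral_add_adjacent_intervals (hFc h0m hxm) (hFc hxm hym),
      intervalIntegral.integral_add_adjacent_intervals (hFc h0m hym) (hFc hym h1m),
      integral_cross_split hf h0m h1m, f01, sub_self]
    simp [cross]
  have hloss := (abs_le.1 (abs_area_arc_le h hf (η := I) (z := f y) hxm hym hxy fun t ht => by
    have htm : t ∈ Set.Icc (0:ℝ) 1 := ⟨hx.trans ht.1, ht.2.trans hy⟩
    rw [h.map_sub_rev]
    refine (hf.norm_sub_le h htm hym ht.2).trans ?_
    rw [hI, ← intervalIntegral.integral_add_adjacent_intervals (hNc hxm htm) (hNc htm hym)]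
    have : 0 ≤ ∫ s in x..t, N (d s) :=
      intervalIntegral.integral_nonneg ht.1 fun t _ => h.nonneg _
    linarith)).2
  have hcr := (abs_le.1 (h.abs_cross_le (F x) v)).1
  have hNFx : N (F x) ≤ I := by
    simp only [hF]
    rw [h.map_sub_rev]
    exact hNu
  have hR2 : 0 ≤ R ^ 2 := sq_nonneg R
  have hNv := h.nonneg v
  have b1 : R ^ 2 * (I * I) ≤ R ^ 2 * r ^ 2 := by gcongr; nlinarith
  have b2 : R ^ 2 * (N (F x) * N v) ≤ R ^ 2 * (r * N v) := by
    have := hNFx.trans hr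
    gcongr
  rw [hNsum] at hP₃
  refine ⟨_, ?_, hP₃⟩
  rw [← hCsum]
  change ∫ t in x..y, cross (F t) (d t) ≤ _ at hloss
  rw [← hI] at hloss
  nlinarith

/-- Opening a closed curve of large area so that it ends at a prescribed `v`: the length does not
grow, and the area decreases by at most a multiple of the square of the norm of `v`. -/
lemma exists_path_of_area (h : IsPlaneNorm N R) {c₀ κ ℓ : ℝ} (hc₀ : 0 < c₀)
    (hκ : κ = 8 * R ^ 2 / c₀) (hℓ : 0 < ℓ) (hf : IsAC f d) (f0 : f 0 = 0) (f1 : f 1 = 0)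
    (hlen : ∫ t in (0:ℝ)..1, N (d t) ≤ ℓ)
    (harea : c₀ * ℓ ^ 2 ≤ 1 / 2 * ∫ t in (0:ℝ)..1, cross (f t) (d t))
    {v : ℝ × ℝ} (hv : N v ≤ c₀ / (4 * R ^ 2) * ℓ) :
    ∃ A', 1 / 2 * (∫ t in (0:ℝ)..1, cross (f t) (d t)) - R ^ 2 * (κ ^ 2 + κ) * N v ^ 2 - 1 ≤ A' ∧
      PolyPath N 0 v ℓ A' := by
  have hR := h.pos
  rcases eq_or_ne v 0 with rfl | hv0
  · obtain ⟨A', hA', hP⟩ := (PolyPath.refl (N := N) (p := f 0)).arc h hf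
      (a := 0) (b := 1) (by simp) (by simp) zero_le_one one_pos
    rw [f0, f1, zero_add] at hP
    refine ⟨A', ?_, hP.pad h hlen⟩
    rw [h.map_zero]
    linarith
  obtain ⟨w, hw, hV, hvw⟩ := h.exists_dual hv0
  set V := cross v w with hVdef
  have hNv := h.nonneg v
  have hVk : V ≤ 2 * R ^ 2 * N v := by
    have h1 := (abs_le.1 (h.abs_cross_le v w)).2
    have h2 : N v * N w ≤ N v := mul_le_of_le_one_right hNv hw
    have h3 : 2 * R ^ 2 * (N v * N w) ≤ 2 * R ^ 2 * N v := by gcongr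
    exact h1.trans h3
  set g : ℝ → ℝ := fun t => cross (f t) w with hg
  have hgc : ContinuousOn g (Set.Icc 0 1) := by
    simp only [hg]
    unfold cross
    exact (hf.continuousOn.fst.mul continuousOn_const).sub
      (hf.continuousOn.snd.mul continuousOn_const)
  have hg01 : g 0 = g 1 := by simp only [hg, f0, f1]
  obtain ⟨x₀, y₀, hx₀, hxy₀, hy₀, hdrop₀⟩ := exists_drop hgc hg01 (W := c₀ * ℓ) (by
    intro a b ha hb
    have h1 := harea.trans (area_le_width h hf f0 f1 hV hvw ha hb)
    have hab : 0 ≤ b - a := by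
      have e1 := ha 0 (by simp)
      have e2 := hb 0 (by simp)
      linarith
    have h2 := mul_le_mul_of_nonneg_left hlen hab
    refine le_of_mul_le_mul_right ?_ hℓ
    nlinarith)
  have hlen₀ : ∫ t in x₀..y₀, N (d t) ≤ ℓ := by
    refine le_trans ?_ hlen
    exact intervalIntegral.integral_mono_interval hx₀ hxy₀ hy₀
      (Filter.Eventually.of_forall fun t => h.nonneg _) (h.intervalIntegrable hf.1)
  -- Bisect until the remaining drop is comparable to `V`.
  set δ := c₀ * ℓ / 2 / V with hδ
  have hδ1 : 1 ≤ δ := by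
    rw [hδ, le_div_iff₀ hV, one_mul]
    have e1 : 2 * R ^ 2 * N v ≤ 2 * R ^ 2 * (c₀ / (4 * R ^ 2) * ℓ) := by gcongr
    have e2 : 2 * R ^ 2 * (c₀ / (4 * R ^ 2) * ℓ) = c₀ * ℓ / 2 := by field_simp; ring
    linarith
  obtain ⟨j, hj1, hj2⟩ := exists_nat_pow_near hδ1 (one_lt_two : (1:ℝ) < 2)
  obtain ⟨x, y, hx, hxy, hy, hdrop, hlen'⟩ :=
    exists_short_drop h hf g ⟨x₀, y₀, hx₀, hxy₀, hy₀, hdrop₀, hlen₀⟩ j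
  have hpow : (0:ℝ) < 2 ^ j := by positivity
  have hdropV : V ≤ c₀ * ℓ / 2 / 2 ^ j := by
    rw [le_div_iff₀ hpow]
    rw [hδ, le_div_iff₀ hV] at hj1
    linarith
  have hlenκ : ℓ / 2 ^ j ≤ κ * N v := by
    rw [hδ, div_lt_iff₀ hV, pow_succ] at hj2
    rw [div_le_iff₀ hpow, hκ]
    have e1 : 2 ^ j * 2 * V ≤ 2 ^ j * 2 * (2 * R ^ 2 * N v) := by gcongr
    have e2 : 8 * R ^ 2 / c₀ * N v * 2 ^ j = 8 * R ^ 2 * N v * 2 ^ j / c₀ := by ring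
    rw [e2, le_div_iff₀ hc₀]
    linarith
  have huv : N (f y - f x + v) ≤ N (f y - f x) := by
    refine h.add_le_of_drop hw hV hvw ?_
    have : - cross (f y - f x) w = g x - g y := by
      simp only [hg, cross, Prod.fst_sub, Prod.snd_sub]; ring
    rw [this]
    exact hdropV.trans hdrop
  obtain ⟨A', hA', hP⟩ := exists_path_of_window h hf (by rw [f0, f1]) hx hxy hy huv
    (hlen'.trans hlenκ) (ε := 1 / 2) (by norm_num)
  refine ⟨A', ?_, hP.pad h hlen⟩
  refine le_trans (le_of_eq ?_) hA'
  ring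

/-- Triangles of size `s`, of perimeter proportional to `s` and area `s ^ 2`. -/
lemma IsPlaneNorm.exists_triangle (h : IsPlaneNorm N R) :
    ∃ B : ℝ, 0 < B ∧ ∀ s : ℝ, 0 < s → PolyPath N 0 0 (s * B) (s ^ 2) := by
  set B := N (2, 0) + N (-2, 1) + N (0, -1) with hB
  have hB0 : 0 < B := by
    have h1 : 0 < N (2, 0) := by
      refine lt_of_not_ge fun hle => ?_
      have := congrArg Prod.fst (h.eq_zero hle)
      norm_num at this
    have h2 := h.nonneg (-2, 1)
    have h3 := h.nonneg (0, -1)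
    linarith
  refine ⟨B, hB0, fun s hs0 => ?_⟩
  have hscale : ∀ a b : ℝ, N (s * a, s * b) = s * N (a, b) := by
    intro a b
    have := h.smul_eq s (a, b)
    rwa [abs_of_pos hs0, Prod.smul_mk, smul_eq_mul, smul_eq_mul] at this
  have := (((PolyPath.refl (N := N) (p := 0)).seg (2 * s, 0) _ le_rfl).seg
    (0, s) _ le_rfl).seg 0 _ le_rfl
  convert! this using 1
  · rw [hB, mul_add, mul_add, ← hscale, ← hscale, ← hscale]
    simp [mul_comm]
  · simp [cross]
    ring

/-- A closed curve of length at most `ℓ` can be replaced by a path of length `ℓ` ending at any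
prescribed `v` much shorter than `ℓ`, at the expense of `O(|v|²)` of area. -/
lemma IsPlaneNorm.exists_replacement (h : IsPlaneNorm N R) :
    ∃ K c : ℝ, 0 < K ∧ 0 < c ∧ ∀ ℓ : ℝ, 0 < ℓ → ∀ f d : ℝ → ℝ × ℝ, IsAC f d → f 0 = 0 → f 1 = 0 →
      ∫ t in (0:ℝ)..1, N (d t) ≤ ℓ → ∀ v, N v ≤ c * ℓ →
      ∃ A', 1 / 2 * (∫ t in (0:ℝ)..1, cross (f t) (d t)) - K * N v ^ 2 - 1 ≤ A' ∧
        PolyPath N 0 v ℓ A' := by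
  have hR := h.pos
  obtain ⟨B, hB0, htri⟩ := h.exists_triangle
  have hc₀ : (0:ℝ) < 1 / B ^ 2 := by positivity
  refine ⟨R ^ 2 * ((8 * R ^ 2 / (1 / B ^ 2)) ^ 2 + 8 * R ^ 2 / (1 / B ^ 2)),
    1 / B ^ 2 / (4 * R ^ 2), by positivity, by positivity, ?_⟩
  intro ℓ hℓ f d hf f0 f1 hlen v hv
  rcases le_total (1 / B ^ 2 * ℓ ^ 2) (1 / 2 * ∫ t in (0:ℝ)..1, cross (f t) (d t)) with ha | ha
  · exact exists_path_of_area h hc₀ rfl hℓ hf f0 f1 hlen ha hv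
  -- A curve of small area is first replaced by a triangle of perimeter `ℓ`.
  obtain ⟨f', d', hf', f0', f1', hN', hA'⟩ := (htri (ℓ / B) (div_pos hℓ hB0)).exists_curve h
  rw [div_mul_cancel₀ _ hB0.ne'] at hN'
  have hs2 : 1 / B ^ 2 * ℓ ^ 2 = (ℓ / B) ^ 2 := by field_simp
  have hlen' : ∫ t in (0:ℝ)..1, N (d' t) ≤ ℓ := by
    have := intervalIntegral.integral_mono_on zero_le_one (h.intervalIntegrable hf'.1)
      (intervalIntegrable_const (c := ℓ)) fun t _ => hN' t
    simpa using this
  obtain ⟨A', hA1, hP⟩ := exists_path_of_area h hc₀ rfl hℓ hf' f0' f1' hlen'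
    (by rw [hA', hs2]) hv
  exact ⟨A', by rw [hA', ← hs2] at hA1; linarith, hP⟩

end Replacement

/-! ### The gauge norms -/

lemma isPlaneNorm_gauge {L : Set (ℝ × ℝ)} {F : Finset (ℝ × ℝ)}
    (hL : L = convexHull ℝ (F : Set (ℝ × ℝ))) (hsym : L = -L) (h0 : (0 : ℝ × ℝ) ∈ interior L) :
    ∃ R, IsPlaneNorm (gauge L) R := by
  have hconv : Convex ℝ L := hL ▸ convex_convexHull ℝ _
  have hbdd : Bornology.IsBounded L := by
    rw [hL, isBounded_convexHull]
    exact F.finite_toSet.isBounded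
  have hnhds : L ∈ nhds (0 : ℝ × ℝ) := mem_interior_iff_mem_nhds.1 h0
  have habs : Absorbent ℝ L := absorbent_nhds_zero hnhds
  have hneg : ∀ x ∈ L, -x ∈ L := fun x hx => by
    rw [hsym] at hx
    exact hx
  obtain ⟨ρ, hρ, hball⟩ := Metric.mem_nhds_iff.1 hnhds
  obtain ⟨S, hS, hsub⟩ := hbdd.exists_pos_norm_le
  refine ⟨max S ρ⁻¹, lt_max_of_lt_left hS, gauge_add_le hconv habs, fun a p => ?_, fun p => ?_,
    fun p => ?_⟩
  · have h1 := gauge_smul_of_nonneg (s := L) (abs_nonneg a) p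
    rw [smul_eq_mul] at h1
    rw [← h1]
    rcases abs_choice a with h | h
    · rw [h]
    · rw [h, neg_smul, gauge_neg hneg]
  · have h1 : ‖p‖ / S ≤ gauge L p := le_gauge_of_subset_closedBall habs hS.le fun x hx => by
      rw [mem_closedBall_zero_iff]
      exact hsub x hx
    rw [div_le_iff₀ hS] at h1
    have h2 : S * gauge L p ≤ max S ρ⁻¹ * gauge L p :=
      mul_le_mul_of_nonneg_right (le_max_left _ _) (gauge_nonneg _)
    linarith
  · have h1 := mul_gauge_le_norm hball (x := p)
    have h2 : gauge L p ≤ ρ⁻¹ * ‖p‖ := by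
      rw [inv_mul_eq_div, le_div_iff₀ hρ]
      linarith
    exact h2.trans (mul_le_mul_of_nonneg_right (le_max_right _ _) (norm_nonneg _))

/-! ### Area bounds and interpolation with the chord -/

section Curves

variable {N : ℝ × ℝ → ℝ} {R : ℝ} {f d : ℝ → ℝ × ℝ}

lemma abs_area_le (h : IsPlaneNorm N R) (hf : IsAC f d) (f0 : f 0 = 0) {ℓ : ℝ}
    (hlen : ∫ t in (0:ℝ)..1, N (d t) ≤ ℓ) :
    |1 / 2 * ∫ t in (0:ℝ)..1, cross (f t) (d t)| ≤ R ^ 2 * ℓ ^ 2 := by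
  have hI0 : 0 ≤ ∫ t in (0:ℝ)..1, N (d t) :=
    intervalIntegral.integral_nonneg zero_le_one fun t _ => h.nonneg _
  have key := abs_area_arc_le h hf (η := ℓ) (z := 0) (a := 0) (b := 1) (by simp) (by simp)
    zero_le_one fun t ht => by
      rw [← f0]
      refine (hf.norm_sub_le h (by simp) ht ht.1).trans (le_trans ?_ hlen)
      exact intervalIntegral.integral_mono_interval le_rfl ht.1 ht.2
        (Filter.Eventually.of_forall fun t => h.nonneg _) (h.intervalIntegrable hf.1)
  simp only [sub_zero] at key
  rw [abs_mul, abs_of_pos (by norm_num : (0:ℝ) < 1 / 2)]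
  have h2 : 2 * R ^ 2 * ℓ * (∫ t in (0:ℝ)..1, N (d t)) ≤ 2 * R ^ 2 * ℓ * ℓ :=
    mul_le_mul_of_nonneg_left hlen (by have := hI0.trans hlen; positivity)
  linarith

/-- Along the interpolation between a curve and its chord, the area is a quadratic polynomial
vanishing at the chord. -/
lemma IsAC.interpolate (hf : IsAC f d) (v : ℝ × ℝ) :
    ∃ b : ℝ, ∀ a : ℝ, IsAC (fun t => a • f t + ((1 - a) * t) • v) (fun t => a • d t + (1 - a) • v) ∧
      1 / 2 * (∫ t in (0:ℝ)..1,
        cross (a • f t + ((1 - a) * t) • v) (a • d t + (1 - a) • v)) =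
      a ^ 2 * (1 / 2 * ∫ t in (0:ℝ)..1, cross (f t) (d t)) + a * (1 - a) * b := by
  have hfc : ContinuousOn f (Set.uIcc 0 1) := by
    rw [Set.uIcc_of_le zero_le_one]; exact hf.continuousOn
  have hi1 := integrable_cross hf.1 hfc
  have hi2 : IntervalIntegrable (fun t => cross (f t) v + cross (t • v) (d t)) volume 0 1 :=
    (integrable_cross intervalIntegrable_const hfc).add
      (integrable_cross hf.1 (by fun_prop))
  refine ⟨1 / 2 * ∫ t in (0:ℝ)..1, (cross (f t) v + cross (t • v) (d t)), fun a => ⟨⟨?_, ?_⟩, ?_⟩⟩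
  · exact (hf.1.smul a).add intervalIntegrable_const
  · intro t ht
    have hdt : IntervalIntegrable (fun s => a • d s) volume 0 t :=
      (hf.integrable_sub (by simp) ht).smul a
    simp only
    rw [intervalIntegral.integral_add hdt intervalIntegrable_const,
      intervalIntegral.integral_smul, intervalIntegral.integral_const, hf.2 t ht, smul_smul,
      smul_add]
    simp only [mul_zero, zero_smul, add_zero, sub_zero, mul_comm t]
    abel
  · have : ∫ t in (0:ℝ)..1, cross (a • f t + ((1 - a) * t) • v) (a • d t + (1 - a) • v) =
        ∫ t in (0:ℝ)..1, (a ^ 2 * cross (f t) (d t) +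
          a * (1 - a) * (cross (f t) v + cross (t • v) (d t))) :=
      intervalIntegral.integral_congr fun t _ => by
        simp only [cross, Prod.fst_add, Prod.snd_add, Prod.smul_fst, Prod.smul_snd, smul_eq_mul]
        ring
    rw [this, intervalIntegral.integral_add (hi1.const_mul _) (hi2.const_mul _),
      intervalIntegral.integral_const_mul, intervalIntegral.integral_const_mul]
    ring

end Curves

/-! ### The cubical-like norm -/

section Heisenberg

variable {m : ℕ} {L : Fin m → Set (ℝ × ℝ)} {R : Fin m → ℝ}

lemma ACCurveM.isAC (γ : ACCurveM m) (i : Fin m) :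
    IsAC (fun t => γ.toFun t i) (fun t => γ.deriv t i) :=
  ⟨γ.integrable i, γ.integral_eq i⟩

/-- The curve with given planar components. -/
def ACCurveM.ofAC (f d : Fin m → ℝ → ℝ × ℝ) (h : ∀ i, IsAC (f i) (d i)) : ACCurveM m where
  toFun t i := f i t
  deriv t i := d i t
  integrable i := (h i).1
  integral_eq i := (h i).2

lemma cubeLength_nonneg (γ : ACCurveM m) : 0 ≤ γ.cubeLength L :=
  intervalIntegral.integral_nonneg zero_le_one fun _ _ =>
    Real.iSup_nonneg fun _ => gauge_nonneg _

lemma cubeLength_le (γ : ACCurveM m) {ℓ : ℝ} (hℓ : 0 ≤ ℓ)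
    (h : ∀ t i, gauge (L i) (γ.deriv t i) ≤ ℓ) : γ.cubeLength L ≤ ℓ := by
  have := intervalIntegral.norm_integral_le_of_norm_le_const (a := 0) (b := 1) (C := ℓ)
    (f := fun t => ⨆ i, gauge (L i) (γ.deriv t i)) fun t _ => by
      rw [Real.norm_eq_abs, abs_of_nonneg (Real.iSup_nonneg fun _ => gauge_nonneg _)]
      exact Real.iSup_le (h t) hℓ
  simp only [sub_zero, abs_one, mul_one] at this
  exact (le_abs_self _).trans this

lemma integral_gauge_le_cubeLength (hN : ∀ i, IsPlaneNorm (gauge (L i)) (R i)) (γ : ACCurveM m)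
    (i : Fin m) : ∫ t in (0:ℝ)..1, gauge (L i) (γ.deriv t i) ≤ γ.cubeLength L := by
  have hi : ∀ i, IntervalIntegrable (fun t => gauge (L i) (γ.deriv t i)) volume 0 1 :=
    fun i => (hN i).intervalIntegrable (γ.integrable i)
  have hbdd : ∀ t, BddAbove (Set.range fun i => gauge (L i) (γ.deriv t i)) :=
    fun t => Set.finite_range _ |>.bddAbove
  have hsup : IntervalIntegrable (fun t => ⨆ i, gauge (L i) (γ.deriv t i)) volume 0 1 := by
    refine IntervalIntegrable.mono_fun (IntervalIntegrable.sum Finset.univ fun i _ => hi i) ?_ ?_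
    · exact (AEMeasurable.iSup fun i =>
        (hi i).aestronglyMeasurable_restrict_uIoc.aemeasurable).aestronglyMeasurable
    · refine Filter.Eventually.of_forall fun t => ?_
      simp only [Finset.sum_apply, Real.norm_eq_abs]
      rw [abs_of_nonneg (Real.iSup_nonneg fun _ => gauge_nonneg _),
        abs_of_nonneg (Finset.sum_nonneg fun _ _ => gauge_nonneg _)]
      exact Real.iSup_le (fun i => Finset.single_le_sum
        (f := fun i => gauge (L i) (γ.deriv t i)) (fun _ _ => gauge_nonneg _)
        (Finset.mem_univ i)) (Finset.sum_nonneg fun _ _ => gauge_nonneg _)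
  exact intervalIntegral.integral_mono_on zero_le_one (hi i) hsup fun t _ => le_ciSup (hbdd t) i

lemma bddBelow_lengths (g : (Fin m → ℝ × ℝ) × ℝ) :
    BddBelow { r | ∃ γ : ACCurveM m, (∀ i, γ.toFun 0 i = 0) ∧ (∀ i, γ.toFun 1 i = g.1 i) ∧
      (∑ i, γ.area i) = g.2 ∧ γ.cubeLength L = r } :=
  ⟨0, by rintro r ⟨γ, -, -, -, rfl⟩; exact cubeLength_nonneg γ⟩

lemma cubeCCNorm_nonneg (g : (Fin m → ℝ × ℝ) × ℝ) : 0 ≤ cubeCCNorm L g :=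
  Real.sInf_nonneg (by rintro r ⟨γ, -, -, -, rfl⟩; exact cubeLength_nonneg γ)

/-- Every element is joined to the identity by a curve, so the infimum defining its norm is
approached by lengths of curves. -/
lemma exists_curve_lt (hm : 1 ≤ m) (hN : ∀ i, IsPlaneNorm (gauge (L i)) (R i))
    (g : (Fin m → ℝ × ℝ) × ℝ) {r : ℝ} (hr : cubeCCNorm L g < r) :
    ∃ γ : ACCurveM m, (∀ i, γ.toFun 0 i = 0) ∧ (∀ i, γ.toFun 1 i = g.1 i) ∧
      (∑ i, γ.area i) = g.2 ∧ γ.cubeLength L < r := by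
  have hne : { r | ∃ γ : ACCurveM m, (∀ i, γ.toFun 0 i = 0) ∧ (∀ i, γ.toFun 1 i = g.1 i) ∧
      (∑ i, γ.area i) = g.2 ∧ γ.cubeLength L = r }.Nonempty := by
    set i₀ : Fin m := ⟨0, hm⟩
    have hex := fun i => (PolyPath.exists_area (gauge (L i)) (g.1 i)
      (if i = i₀ then g.2 else 0)).exists_curve (hN i)
    choose f d hf h0 h1 _ hA using hex
    refine ⟨_, ACCurveM.ofAC f d hf, h0, h1, ?_, rfl⟩
    calc ∑ i, (ACCurveM.ofAC f d hf).area i = ∑ i, (if i = i₀ then g.2 else 0) :=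
          Finset.sum_congr rfl fun i _ => hA i
      _ = g.2 := by simp
  obtain ⟨_, ⟨γ, h0, h1, hA, rfl⟩, hlt⟩ := exists_lt_of_csInf_lt hne hr
  exact ⟨γ, h0, h1, hA, hlt⟩

/-- Paths of length `ℓ` whose total area is at least `c` bound the norm of an element with area
`c`: contracting them towards their chords, the area takes every intermediate value. -/
lemma cubeCCNorm_le (hN : ∀ i, IsPlaneNorm (gauge (L i)) (R i)) {v : Fin m → ℝ × ℝ} {c ℓ : ℝ}
    {A : Fin m → ℝ} (hℓ : 0 ≤ ℓ) (hP : ∀ i, PolyPath (gauge (L i)) 0 (v i) ℓ (A i)) (hc : 0 ≤ c)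
    (hA : c ≤ ∑ i, A i) : cubeCCNorm L (v, c) ≤ ℓ := by
  choose f d hf h0 h1 hd hfA using fun i => (hP i).exists_curve (hN i)
  have hv : ∀ i, gauge (L i) (v i) ≤ ℓ := by
    intro i
    have e1 := (hf i).norm_sub_le (hN i) (a := 0) (b := 1) (by simp) (by simp) zero_le_one
    rw [h0, h1, sub_zero] at e1
    have e2 := intervalIntegral.integral_mono_on zero_le_one ((hN i).intervalIntegrable (hf i).1)
      (intervalIntegrable_const (c := ℓ)) fun t _ => hd i t
    refine e1.trans (e2.trans ?_)
    simp
  choose b hb using fun i => (hf i).interpolate (v i)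
  have hcont : ContinuousOn (fun a : ℝ => ∑ i, (a ^ 2 * A i + a * (1 - a) * b i))
      (Set.Icc 0 1) := by fun_prop
  obtain ⟨a, ha, hac⟩ := intermediate_value_Icc zero_le_one hcont
    (show c ∈ Set.Icc _ _ by constructor <;> simpa)
  refine (csInf_le (bddBelow_lengths _)
    ⟨ACCurveM.ofAC _ _ fun i => (hb i a).1, fun i => ?_, fun i => ?_, ?_, rfl⟩).trans ?_
  · simp [ACCurveM.ofAC, h0]
  · simp [ACCurveM.ofAC, h1, ← add_smul]
  · rw [← hac]
    refine Finset.sum_congr rfl fun i _ => ?_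
    rw [← hfA i]
    exact (hb i a).2
  · refine cubeLength_le _ hℓ fun t i => ?_
    have e1 := (hN i).add_le (a • d i t) ((1 - a) • v i)
    rw [(hN i).smul_eq, (hN i).smul_eq, abs_of_nonneg ha.1,
      abs_of_nonneg (sub_nonneg.2 ha.2)] at e1
    have e2 := mul_le_mul_of_nonneg_left (hd i t) ha.1
    have e3 := mul_le_mul_of_nonneg_left (hv i) (sub_nonneg.2 ha.2)
    refine le_trans e1 ?_
    linarith

lemma exists_central_bound (hm : 1 ≤ m) (hN : ∀ i, IsPlaneNorm (gauge (L i)) (R i)) :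
    ∃ B : ℝ, 0 < B ∧ ∀ n : ℝ, 0 < n → cubeCCNorm L (fun _ => 0, n) ≤ B * √n := by
  choose B hB hP using fun i => (hN i).exists_triangle
  have hB0 : ∀ i, B i ≤ ∑ j, B j := fun i =>
    Finset.single_le_sum (f := B) (fun j _ => (hB j).le) (Finset.mem_univ i)
  have hpos : 0 < ∑ j, B j := (hB ⟨0, hm⟩).trans_le (hB0 _)
  refine ⟨∑ j, B j, hpos, fun n hn => ?_⟩
  have hs := Real.sqrt_pos.2 hn
  refine cubeCCNorm_le hN (A := fun _ => √n ^ 2) (by positivity)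
    (fun i => (hP i _ hs).pad (hN i) ?_) hn.le ?_
  · rw [mul_comm]
    exact mul_le_mul_of_nonneg_right (hB0 i) hs.le
  · rw [Real.sq_sqrt hn.le, Finset.sum_const, Finset.card_univ, Fintype.card_fin, nsmul_eq_mul]
    have : (1:ℝ) ≤ m := by exact_mod_cast hm
    nlinarith

end Heisenberg

/-! ### Almost dead ends -/

/-- Almost dead ends in higher Heisenberg groups for cubical-like CC-metrics. -/
theorem almost_dead_ends_in_higher_heisenberg (m : ℕ) (hm : 1 ≤ m)
    (L : Fin m → Set (ℝ × ℝ)) (F : Fin m → Finset (ℝ × ℝ))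
    (hL : ∀ i, L i = convexHull ℝ ((F i : Set (ℝ × ℝ))))
    (hsym : ∀ i, L i = -(L i))
    (h0 : ∀ i, (0 : ℝ × ℝ) ∈ interior (L i)) :
    ∃ C M D₀ : ℝ, 0 < C ∧ 0 < M ∧ 0 < D₀ ∧
      ∀ D : ℝ, D₀ ≤ D → ∀ n : ℝ, C * D^4 ≤ n →
        ∀ h : (Fin m → ℝ × ℝ) × ℝ, cubeCCNorm L h ≤ D →
          cubeCCNorm L (heisMulM (fun _ => 0, n) h) ≤ cubeCCNorm L (fun _ => 0, n) + M := by
  choose R hN using fun i => isPlaneNorm_gauge (hL i) (hsym i) (h0 i)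
  choose K c hK hc hrep using fun i => (hN i).exists_replacement
  obtain ⟨B, hB, hcentral⟩ := exists_central_bound hm hN
  set S := ∑ i, R i ^ 2 with hS
  set Q := ∑ i, K i with hQ
  set q := ∑ i, 2 / c i with hq
  have hS0 : 0 < S := Finset.sum_pos (fun i _ => pow_pos (hN i).pos 2) ⟨⟨0, hm⟩, Finset.mem_univ _⟩
  have hQ0 : 0 ≤ Q := Finset.sum_nonneg fun i _ => (hK i).le
  have hq0 : 0 ≤ q := Finset.sum_nonneg fun i _ => (div_pos two_pos (hc i)).le
  have hqc : ∀ i, 2 / c i ≤ q := fun i =>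
    Finset.single_le_sum (f := fun i => 2 / c i) (fun i _ => (div_pos two_pos (hc i)).le)
      (Finset.mem_univ i)
  -- `K₂ D²` bounds the area to be made up for: the central coordinate of `h`, and the losses in
  -- the replacement of the planar components.
  set K₂ := 4 * S + 4 * Q + m with hK₂
  have hK₂0 : 0 < K₂ := by positivity
  refine ⟨S * q ^ 2 + 4 * S + 1, 1 + K₂ * (B + 1), 1, by positivity, by positivity, one_pos, ?_⟩
  intro D hD n hn h hh
  have hD2 : 1 ≤ D ^ 2 := one_le_pow₀ hD
  have hD4 : D ^ 2 ≤ D ^ 4 := pow_le_pow_right₀ hD (by norm_num)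
  have hSq : 0 ≤ S * q ^ 2 := by positivity
  have hn1 : D ^ 4 ≤ n := by nlinarith
  have hn2 : 4 * S * D ^ 2 ≤ n := by nlinarith
  have hn3 : S * q ^ 2 * D ^ 2 ≤ n := by nlinarith
  have hn0 : 0 < n := by linarith
  obtain ⟨σ, hσ0, hσ1, hσ, hσ'⟩ := exists_curve_lt hm hN h (r := 2 * D) (by linarith)
  set ℓ₀ := cubeCCNorm L (fun _ => 0, n) + 1 with hℓ₀
  have hℓ₀1 : 1 ≤ ℓ₀ := by linarith [cubeCCNorm_nonneg (L := L) (fun _ => 0, n)]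
  obtain ⟨γ, hγ0, hγ1, hγ, hγ'⟩ := exists_curve_lt hm hN (fun _ => 0, n) (r := ℓ₀) (by linarith)
  -- Both coordinates of `h` are controlled by `D`.
  have hv : ∀ i, gauge (L i) (h.1 i) ≤ 2 * D := by
    intro i
    have e1 := (σ.isAC i).norm_sub_le (hN i) (a := 0) (b := 1) (by simp) (by simp) zero_le_one
    rw [hσ0, hσ1, sub_zero] at e1
    exact e1.trans ((integral_gauge_le_cubeLength hN σ i).trans hσ'.le)
  have hsum : ∀ (β : ACCurveM m) (ℓ : ℝ), (∀ i, β.toFun 0 i = 0) → β.cubeLength L < ℓ →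
      |∑ i, β.area i| ≤ S * ℓ ^ 2 := by
    intro β ℓ hβ0 hβ
    refine (Finset.abs_sum_le_sum_abs _ _).trans ?_
    rw [hS, Finset.sum_mul]
    exact Finset.sum_le_sum fun i _ => abs_area_le (hN i) (β.isAC i) (hβ0 i)
      ((integral_gauge_le_cubeLength hN β i).trans hβ.le)
  have hc' := abs_le.1 (hσ ▸ hsum σ (2 * D) hσ0 hσ')
  have hnS : n ≤ S * ℓ₀ ^ 2 := by
    have e1 := hsum γ ℓ₀ hγ0 hγ'
    rw [hγ] at e1
    exact (le_abs_self _).trans e1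
  have hqD : q * D ≤ ℓ₀ := by
    refine le_of_sq_le_sq ?_ (by linarith)
    refine le_of_mul_le_mul_left ?_ hS0
    nlinarith
  -- Dilating the curve by `1 + δ` compensates for the loss of area.
  set δ := K₂ * D ^ 2 / n with hδ
  have hδ0 : 0 ≤ δ := by positivity
  have hδn : δ * n = K₂ * D ^ 2 := by rw [hδ]; field_simp
  set s := 1 + δ with hs
  have hs1 : 1 ≤ s := by linarith
  have hsℓ : 0 < s * ℓ₀ := by positivity
  have hP : ∀ i, ∃ A', s ^ 2 * γ.area i - K i * (4 * D ^ 2) - 1 ≤ A' ∧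
      PolyPath (gauge (L i)) 0 (h.1 i) (s * ℓ₀) A' := by
    intro i
    obtain ⟨A', hA', hPA⟩ := hrep i (s * ℓ₀) hsℓ _ _ ((γ.isAC i).scale s)
      (by simp [hγ0]) (by simp [hγ1]) (by
        have e1 := (integral_gauge_le_cubeLength hN γ i).trans hγ'.le
        simp only [(hN i).smul_eq, abs_of_pos (by linarith : 0 < s)]
        rw [intervalIntegral.integral_const_mul]
        exact mul_le_mul_of_nonneg_left e1 (by linarith)) (h.1 i) (by
        have e1 := hqc i
        rw [div_le_iff₀ (hc i)] at e1
        have e2 : 2 * D ≤ c i * (q * D) := by nlinarith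
        have e3 : c i * (q * D) ≤ c i * (s * ℓ₀) :=
          mul_le_mul_of_nonneg_left (by nlinarith) (hc i).le
        linarith [hv i])
    refine ⟨A', le_trans ?_ hA', hPA⟩
    have e1 : 1 / 2 * (∫ t in (0:ℝ)..1, cross (s • γ.toFun t i) (s • γ.deriv t i)) =
        s ^ 2 * γ.area i := by
      have e2 : ∀ t, cross (s • γ.toFun t i) (s • γ.deriv t i) =
          s ^ 2 * cross (γ.toFun t i) (γ.deriv t i) := fun t => by
        simp only [cross, Prod.smul_fst, Prod.smul_snd, smul_eq_mul]
        ring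
      simp only [e2]
      rw [intervalIntegral.integral_const_mul]
      simp only [ACCurveM.area, cross]
      ring
    rw [e1]
    have e3 : gauge (L i) (h.1 i) ^ 2 ≤ 4 * D ^ 2 := by
      have := pow_le_pow_left₀ ((hN i).nonneg (h.1 i)) (hv i) 2
      linarith
    have e4 := mul_le_mul_of_nonneg_left e3 (hK i).le
    linarith
  choose A hA hPA using hP
  have hAsum : n + h.2 ≤ ∑ i, A i := by
    have e1 := Finset.sum_le_sum fun i (_ : i ∈ Finset.univ) => hA i
    rw [Finset.sum_sub_distrib, Finset.sum_sub_distrib, ← Finset.mul_sum, ← Finset.sum_mul,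
      hγ, ← hQ] at e1
    simp only [Finset.sum_const, Finset.card_univ, Fintype.card_fin, nsmul_eq_mul, mul_one] at e1
    have e2 : n + 2 * (K₂ * D ^ 2) ≤ s ^ 2 * n := by
      have e3 : s ^ 2 * n = n + 2 * (δ * n) + δ ^ 2 * n := by rw [hs]; ring
      rw [e3, hδn]
      exact le_add_of_nonneg_right (by positivity)
    have e3 : (m:ℝ) ≤ m * D ^ 2 := le_mul_of_one_le_right (by positivity) hD2
    have e4 : K₂ * D ^ 2 = 4 * S * D ^ 2 + 4 * Q * D ^ 2 + m * D ^ 2 := by rw [hK₂]; ring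
    have e5 : 0 ≤ K₂ * D ^ 2 := by positivity
    linarith [hc'.2]
  have hmul : heisMulM (fun _ => 0, n) h = (h.1, n + h.2) := by
    simp [heisMulM]
  rw [hmul]
  refine (cubeCCNorm_le hN hsℓ.le hPA (by linarith [hc'.1]) hAsum).trans ?_
  -- The dilation costs a bounded amount of length since `D² ≤ √n` and `ℓ₀ = O(√n)`.
  have hr1 : D ^ 2 ≤ √n := Real.le_sqrt_of_sq_le (by linarith [hn1, (by ring : (D ^ 2) ^ 2 = D ^ 4)])
  have hℓB : ℓ₀ ≤ (B + 1) * √n := by linarith [hcentral n hn0]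
  have hcost : δ * ℓ₀ ≤ K₂ * (B + 1) := by
    refine le_of_mul_le_mul_right ?_ hn0
    calc δ * ℓ₀ * n = K₂ * (D ^ 2 * ℓ₀) := by rw [mul_right_comm, hδn, mul_assoc]
      _ ≤ K₂ * (√n * ((B + 1) * √n)) := by gcongr
      _ = K₂ * (B + 1) * (√n * √n) := by ring
      _ = K₂ * (B + 1) * n := by rw [Real.mul_self_sqrt hn0.le]
  have : s * ℓ₀ = ℓ₀ + δ * ℓ₀ := by rw [hs]; ring
  linarith
end
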